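/- arXiv:2412.13080 — 2 statements merged into one kernel-verified Lean document; each statement's English description precedes it below -/
import Mathlib

section
/- Convergence of the regularized Chern–Simons–Schrödinger flow to the unregularized one: let M > 0 and T > 0. There exist constants c' > 0 and C > 0 depending only on M such that the following holds for every β with |β| ≤ c' and every R ∈ (0, 1). Suppose φ, ψ : [0,T] × ℝ² → ℂ are smooth Schwartz-class solutions of, respectively, the Chern–Simons–Schrödinger equations CSS(0) and CSS(R): i ∂ₜ φ = −Δφ − 2iβ A₀·∇φ + β²‖A₀‖²φ − β(K₀ ∗ (2βA₀|φ|² + J[φ]))φ with A₀(t,·) = K₀ ∗ |φ(t,·)|², and i ∂ₜ ψ = −Δψ − 2iβ A_R·∇ψ + β²‖A_R‖²ψ − β(K_R ∗ (2βA_R|ψ|² + J[ψ]))ψ with A_R(t,·) = K_R ∗ |ψ(t,·)|²; suppose that φ(0,·) = ψ(0,·) and that ‖φ(t,·)‖_{H²} + ‖ψ(t,·)‖_{H²} ≤ M for all t ∈ [0,T]. Then for all t ∈ [0,T]: (d/dt) ‖φ(t,·) − ψ(t,·)‖₂² ≤ C R² + C ‖φ(t,·) − ψ(t,·)‖₂²,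 and consequently ‖φ(t,·) − ψ(t,·)‖₂² ≤ C R² e^{Ct}. -/
noncomputable section
open MeasureTheory ENNReal
open scoped RealInnerProductSpace

/-- The plane `ℝ²`. -/
abbrev E2 : Type := EuclideanSpace ℝ (Fin 2)

/-- The rotation by 90 degrees: `x^⊥ = (-x₂, x₁)`. -/
def perp (x : E2) : E2 := (WithLp.equiv 2 (Fin 2 → ℝ)).symm ![-(x 1), x 0]

/-- The Aharonov–Bohm kernel `K_R(x) = x^⊥ / (max R ‖x‖)²` (with `K_R 0 = 0`,
also when `R = 0`, by the junk-value convention `(0 : ℝ)⁻¹ = 0`). -/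
def K (R : ℝ) (x : E2) : E2 := ((max R ‖x‖) ^ 2)⁻¹ • perp x

/-- The standard basis of `ℝ²`. -/
def e2 (j : Fin 2) : E2 := EuclideanSpace.single j 1

/-- Componentwise convolution of the vector kernel `K_R` with a scalar density. -/
def convKs (R : ℝ) (ρ : E2 → ℝ) (x : E2) : E2 := ∫ y, ρ y • K R (x - y)

/-- Convolution of the vector kernel `K_R` with a vector field, summed over components. -/
def convKv (R : ℝ) (F : E2 → E2) (x : E2) : ℝ := ∫ y, ⟪K R (x - y), F y⟫

/-- The current `J[u] = i(u∇ū - ū∇u) = 2 Im(ū ∇u)`, an `ℝ²`-valued function. -/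
def Jf (u : E2 → ℂ) (x : E2) : E2 :=
  (WithLp.equiv 2 (Fin 2 → ℝ)).symm fun j =>
    2 * ((starRingEnd ℂ) (u x) * fderiv ℝ u x (e2 j)).im

/-- The `H¹` norm `(‖u‖₂² + ‖∇u‖₂²)^{1/2}` (extended-real valued). -/
def H1 (u : E2 → ℂ) : ℝ≥0∞ :=
  (eLpNorm u 2 volume ^ 2 + eLpNorm (fun x => fderiv ℝ u x) 2 volume ^ 2) ^ (1 / 2 : ℝ)

/-- The `H²` norm `(‖u‖₂² + ‖∇u‖₂² + ‖∇²u‖₂²)^{1/2}` (extended-real valued). -/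
def H2 (u : E2 → ℂ) : ℝ≥0∞ :=
  (eLpNorm u 2 volume ^ 2 + eLpNorm (fun x => fderiv ℝ u x) 2 volume ^ 2
    + eLpNorm (fun x => fderiv ℝ (fderiv ℝ u) x) 2 volume ^ 2) ^ (1 / 2 : ℝ)

/-- The magnetic potential `A^R[|u|²] = K_R ∗ |u|²`. -/
def Apot (R : ℝ) (u : E2 → ℂ) (x : E2) : E2 := convKs R (fun y => ‖u y‖ ^ 2) x

/-- Laplacian of a complex function on `ℝ²`. -/
def lap (u : E2 → ℂ) (x : E2) : ℂ :=
  ∑ j : Fin 2, fderiv ℝ (fun y => fderiv ℝ u y (e2 j)) x (e2 j)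

/-- Right-hand side of the regularized Chern–Simons–Schrödinger equation
`i∂ₜu = -Δu - 2iβ A·∇u + β²‖A‖²u - β(K_R ∗ (2βA|u|² + J[u]))u`,
where `A = A^R[|u|²]`. -/
def cssRHS (β R : ℝ) (u : E2 → ℂ) (x : E2) : ℂ :=
  -(lap u x) - 2 * β * Complex.I * fderiv ℝ u x (Apot R u x)
    + (↑(β ^ 2 * ‖Apot R u x‖ ^ 2) : ℂ) * u x
    - (β : ℂ) * (↑(convKv R (fun y => (2 * β * ‖u y‖ ^ 2) • Apot R u y + Jf u y) x) : ℂ) * u x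

/-- The (average-field / magnetic) energy `∫ ‖(-i∇ + β A^R[|u|²]) u‖²`. -/
def energy (β R : ℝ) (u : E2 → ℂ) : ℝ :=
  ∫ x, ∑ j : Fin 2,
    ‖-Complex.I * fderiv ℝ u x (e2 j) + (↑(β * Apot R u x j) : ℂ) * u x‖ ^ 2

/-!
Put `w = φ - ψ`. Since `d/dt ‖w‖₂² = 2 ∫ ⟪I w, I ∂ₜw⟫`, the Laplacian drops out by symmetry, and so
does the transport of `w` by the potential of `ψ`, because that potential is divergence free. What
remains is bounded in `L²` by `C (‖w‖₂ + R)`: the error in the kernel is supported in a disc of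
radius `R`, where its integral is `O(R)`, and the terms which still contain `∇w` come from the
current of `w`, where the derivative is moved away from `w` by an integration by parts. Grönwall's
inequality concludes.
-/

namespace ChernSimonsSchrodinger

open Filter Topology Set
open scoped Real Convolution SchwartzMap

section PolarCoordinates

/-- The point of the plane with polar coordinates `(r, θ)`. -/
def polar (r θ : ℝ) : E2 := !₂[r * Real.cos θ, r * Real.sin θ]

/-- The identification of `ℝ × ℝ`, on which Mathlib's `polarCoord` lives, with `E2`. -/
def prodEquivE2 : ℝ × ℝ ≃ᵐ E2 :=
  (MeasurableEquiv.finTwoArrow (α := ℝ)).symm.trans (MeasurableEquiv.toLp 2 (Fin 2 → ℝ))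

lemma measurePreserving_prodEquivE2 : MeasurePreserving prodEquivE2 volume volume :=
  (PiLp.volume_preserving_toLp (Fin 2)).comp (volume_preserving_finTwoArrow ℝ).symm

lemma prodEquivE2_polarCoord_symm (p : ℝ × ℝ) :
    prodEquivE2 (polarCoord.symm p) = polar p.1 p.2 := by
  ext i
  fin_cases i <;> simp [prodEquivE2, polar, MeasurableEquiv.finTwoArrow]

lemma polar_eq_smul (r θ : ℝ) : polar r θ = r • polar 1 θ := by
  ext i
  fin_cases i <;> simp [polar]

lemma norm_polar_one (θ : ℝ) : ‖polar 1 θ‖ = 1 := by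
  simp [EuclideanSpace.norm_eq, polar]

lemma norm_polar (r θ : ℝ) : ‖polar r θ‖ = |r| := by
  rw [polar_eq_smul, norm_smul, norm_polar_one, mul_one, Real.norm_eq_abs]

@[fun_prop]
lemma continuous_polar : Continuous fun p : ℝ × ℝ => polar p.1 p.2 := by
  unfold polar
  fun_prop

@[fun_prop]
lemma continuous_perp : Continuous perp := by
  refine (PiLp.continuous_toLp 2 _).comp (continuous_pi fun i => ?_)
  fin_cases i
  · exact (continuous_apply 1).neg.comp (PiLp.continuous_ofLp 2 _)
  · exact (continuous_apply 0).comp (PiLp.continuous_ofLp 2 _)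

lemma norm_perp (x : E2) : ‖perp x‖ = ‖x‖ := by
  simp [EuclideanSpace.norm_eq, perp, Fin.sum_univ_two, add_comm]

lemma hasDerivAt_polar_angle (r θ : ℝ) : HasDerivAt (polar r) (perp (polar r θ)) θ := by
  rw [hasDerivAt_iff_hasFDerivAt, ← hasFDerivWithinAt_univ, hasFDerivWithinAt_euclidean]
  intro i
  rw [hasFDerivWithinAt_univ, hasFDerivAt_iff_hasDerivAt]
  fin_cases i
  · simpa [polar, perp] using (Real.hasDerivAt_cos θ).const_mul r
  · simpa [polar, perp] using (Real.hasDerivAt_sin θ).const_mul r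

lemma lintegral_eq_lintegral_polar {f : E2 → ℝ≥0∞} (hf : Measurable f) :
    ∫⁻ z, f z = ∫⁻ θ in Ioo (-π) π, ∫⁻ r in Ioi (0 : ℝ), .ofReal r * f (polar r θ) := by
  have hmeas : Measurable fun p : ℝ × ℝ => ENNReal.ofReal p.1 * f (polar p.1 p.2) := by fun_prop
  calc ∫⁻ z, f z = ∫⁻ p in Ioi (0 : ℝ) ×ˢ Ioo (-π) π, .ofReal p.1 * f (polar p.1 p.2) := by
        rw [← measurePreserving_prodEquivE2.lintegral_comp_emb prodEquivE2.measurableEmbedding,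
          ← lintegral_comp_polarCoord_symm]
        simp only [prodEquivE2_polarCoord_symm, smul_eq_mul]
        rfl
    _ = _ := by
        rw [Measure.volume_eq_prod, ← Measure.prod_restrict, lintegral_prod_symm _
          hmeas.aemeasurable]

lemma integral_eq_zero_of_circle {f : E2 → ℝ}
    (hf : ∀ r, ∫ θ in (-π)..π, f (polar r θ) = 0) : ∫ z, f z = 0 := by
  have hpolar : ∫ z, f z = ∫ p in Ioi (0 : ℝ) ×ˢ Ioo (-π) π, p.1 * f (polar p.1 p.2) := by
    rw [← measurePreserving_prodEquivE2.integral_comp prodEquivE2.measurableEmbedding,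
      ← integral_comp_polarCoord_symm]
    simp only [prodEquivE2_polarCoord_symm, smul_eq_mul]
    rfl
  rw [hpolar]
  by_cases hi : IntegrableOn (fun p : ℝ × ℝ => p.1 * f (polar p.1 p.2))
      (Ioi (0 : ℝ) ×ˢ Ioo (-π) π) volume
  · rw [Measure.volume_eq_prod] at hi ⊢
    rw [setIntegral_prod _ hi]
    simp_rw [integral_const_mul, ← integral_Ioc_eq_integral_Ioo,
      ← intervalIntegral.integral_of_le (neg_le_self Real.pi_pos.le), hf]
    simp
  · exact integral_undef hi

end PolarCoordinates

section RayEstimates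

variable {F : Type*} [NormedAddCommGroup F] [NormedSpace ℝ F]

lemma ennreal_two_mul_mul_le (a b : ℝ≥0∞) : 2 * (a * b) ≤ a ^ 2 + b ^ 2 := by
  rcases eq_or_ne a ⊤ with rfl | ha
  · simp
  rcases eq_or_ne b ⊤ with rfl | hb
  · simp
  lift a to NNReal using ha
  lift b to NNReal using hb
  exact_mod_cast (mul_assoc 2 a b ▸ two_mul_le_add_sq a b)

lemma enorm_sq_le_lintegral_Ioi {v : ℝ → F} (hv : ContDiff ℝ 1 v) (hlim : Tendsto v atTop (𝓝 0))
    (r : ℝ) : ‖v r‖ₑ ^ 2 ≤ ∫⁻ s in Ioi r, (‖v s‖ₑ ^ 2 + ‖deriv v s‖ₑ ^ 2) := by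
  -- A norming functional at `v r` reduces the estimate to real-valued functions.
  obtain ⟨L, hL, hLr⟩ := exists_dual_vector'' ℝ (v r)
  have hLe (y : F) : ‖L y‖ₑ ≤ ‖y‖ₑ :=
    enorm_le_iff_norm_le.2 ((L.le_of_opNorm_le hL y).trans_eq (one_mul _))
  have hd (s : ℝ) : HasDerivAt (fun s => L (v s) ^ 2) (2 * L (v s) * L (deriv v s)) s := by
    have h := L.hasFDerivAt.comp_hasDerivAt s (hv.differentiable one_ne_zero s).hasDerivAt
    simpa using h.fun_pow 2
  have hbound (b : ℝ) (hb : r ≤ b) : ‖L (v b) ^ 2 - L (v r) ^ 2‖ₑ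
      ≤ ∫⁻ s in Ioi r, (‖v s‖ₑ ^ 2 + ‖deriv v s‖ₑ ^ 2) := by
    calc _ ≤ ∫⁻ s in Icc r b, ‖deriv (fun s => L (v s) ^ 2) s‖ₑ :=
          enorm_sub_le_lintegral_deriv_of_contDiffOn_Icc
            ((L.contDiff.comp hv).pow 2).contDiffOn hb
      _ = ∫⁻ s in Ioc r b, ‖deriv (fun s => L (v s) ^ 2) s‖ₑ :=
          setLIntegral_congr Ioc_ae_eq_Icc.symm
      _ ≤ ∫⁻ s in Ioc r b, (‖v s‖ₑ ^ 2 + ‖deriv v s‖ₑ ^ 2) := by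
          gcongr with s
          rw [(hd s).deriv, mul_assoc, enorm_mul, enorm_mul]
          refine le_trans ?_ (ennreal_two_mul_mul_le _ _)
          gcongr
          · simp [enorm_eq_nnnorm]
          · exact hLe _
          · exact hLe _
      _ ≤ _ := lintegral_mono_set Ioc_subset_Ioi_self
  have hlimL : Tendsto (fun b => ‖L (v b) ^ 2 - L (v r) ^ 2‖ₑ) atTop (𝓝 (‖v r‖ₑ ^ 2)) := by
    have := ((((L.continuous.tendsto 0).comp hlim).pow 2).sub_const (L (v r) ^ 2)).enorm
    simpa [hLr] using this
  exact le_of_tendsto hlimL (eventually_ge_atTop r |>.mono hbound)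

lemma lintegral_Ioi_lintegral_Ioi {q : ℝ → ℝ≥0∞} (hq : Measurable q) (a : ℝ) :
    ∫⁻ r in Ioi a, ∫⁻ s in Ioi r, q s = ∫⁻ s in Ioi a, .ofReal (s - a) * q s := by
  have hmeas : Measurable fun p : ℝ × ℝ => (Ioi p.1).indicator q p.2 :=
    (hq.comp measurable_snd).indicator (measurableSet_lt measurable_fst measurable_snd)
  calc ∫⁻ r in Ioi a, ∫⁻ s in Ioi r, q s
      = ∫⁻ r in Ioi a, ∫⁻ s, (Ioi r).indicator q s := by
        simp only [lintegral_indicator measurableSet_Ioi]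
    _ = ∫⁻ s, ∫⁻ r in Ioi a, (Ioi r).indicator q s :=
        lintegral_lintegral_swap hmeas.aemeasurable
    _ = ∫⁻ s, (Ioi a).indicator (fun s => .ofReal (s - a) * q s) s := by
        refine lintegral_congr fun s => ?_
        have hind (r : ℝ) : (Ioi r).indicator q s = (Iio s).indicator (fun _ => q s) r := rfl
        simp_rw [hind, lintegral_indicator_const measurableSet_Iio,
          Measure.restrict_apply measurableSet_Iio, Iio_inter_Ioi, Real.volume_Ioo, mul_comm (q s)]
        by_cases hs : s ∈ Ioi a
        · simp [hs]
        · simp [hs, ENNReal.ofReal_of_nonpos (sub_nonpos.2 (not_lt.1 hs))]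
    _ = _ := lintegral_indicator measurableSet_Ioi _

end RayEstimates

section HardyInequality

/-- The majorant `1 / ‖z‖` of all the kernels `‖K R z‖`. -/
def invNorm (z : E2) : ℝ≥0∞ := ‖z‖ₑ⁻¹

/-- The restriction of `1 / ‖z‖` to the ball of radius `R`, a majorant of `‖K S - K R‖` for
`S ≤ R`. -/
def invNormBall (R : ℝ) (z : E2) : ℝ≥0∞ := if ‖z‖ < R then invNorm z else 0

@[fun_prop]
lemma measurable_invNorm : Measurable invNorm := measurable_enorm.inv

@[fun_prop]
lemma measurable_invNormBall (R : ℝ) : Measurable (invNormBall R) :=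
  Measurable.ite (measurableSet_lt measurable_norm measurable_const) (by fun_prop) (by fun_prop)

lemma invNorm_neg (z : E2) : invNorm (-z) = invNorm z := by
  simp [invNorm]

lemma invNormBall_neg (R : ℝ) (z : E2) : invNormBall R (-z) = invNormBall R z := by
  simp [invNormBall, invNorm_neg]

lemma invNorm_polar {r : ℝ} (hr : 0 < r) (θ : ℝ) : invNorm (polar r θ) = (ENNReal.ofReal r)⁻¹ := by
  rw [invNorm, ← ofReal_norm, norm_polar, abs_of_pos hr]

lemma lintegral_invNorm_mul {f : E2 → ℝ≥0∞} (hf : Measurable f) :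
    ∫⁻ z, invNorm z * f z = ∫⁻ θ in Ioo (-π) π, ∫⁻ r in Ioi (0 : ℝ), f (polar r θ) := by
  rw [lintegral_eq_lintegral_polar (by fun_prop)]
  refine lintegral_congr fun θ => setLIntegral_congr_fun measurableSet_Ioi fun r hr => ?_
  simp only [invNorm_polar hr, ← mul_assoc]
  rw [ENNReal.mul_inv_cancel (by simpa using hr) ofReal_ne_top, one_mul]

lemma lintegral_invNormBall_le (R : ℝ) : ∫⁻ z, invNormBall R z ≤ 8 * .ofReal R := by
  have hball : Measurable fun z : E2 => if ‖z‖ < R then (1 : ℝ≥0∞) else 0 :=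
    Measurable.ite (measurableSet_lt measurable_norm measurable_const) (by fun_prop) (by fun_prop)
  have hradial (θ r : ℝ) (hr : r ∈ Ioi (0 : ℝ)) :
      (if ‖polar r θ‖ < R then (1 : ℝ≥0∞) else 0) = (Iio R).indicator 1 r := by
    simp [indicator_apply, norm_polar, abs_of_pos (mem_Ioi.1 hr)]
  calc ∫⁻ z, invNormBall R z = ∫⁻ z, invNorm z * if ‖z‖ < R then 1 else 0 := by
        simp [invNormBall]
    _ = ∫⁻ _ in Ioo (-π) π, .ofReal R := by
        rw [lintegral_invNorm_mul hball]
        refine lintegral_congr fun θ => ?_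
        rw [setLIntegral_congr_fun measurableSet_Ioi (hradial θ),
          lintegral_indicator_one measurableSet_Iio, Measure.restrict_apply measurableSet_Iio,
          Iio_inter_Ioi, Real.volume_Ioo, sub_zero]
    _ = .ofReal (2 * π) * .ofReal R := by
        rw [setLIntegral_const, Real.volume_Ioo, mul_comm, sub_neg_eq_add, two_mul]
    _ ≤ 8 * .ofReal R := by
        gcongr
        exact ofReal_le_of_le_toReal (by norm_num; linarith [Real.pi_lt_four])

variable {F : Type*} [NormedAddCommGroup F] [NormedSpace ℝ F] {u : E2 → F}

/-- The density `‖u‖² + ‖∇u‖²` of the squared `H¹` norm. -/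
def sobolevDensity (u : E2 → F) (x : E2) : ℝ≥0∞ := ‖u x‖ₑ ^ 2 + ‖fderiv ℝ u x‖ₑ ^ 2

lemma measurable_sobolevDensity (hu : ContDiff ℝ 1 u) : Measurable (sobolevDensity u) :=
  (hu.continuous.enorm.measurable.pow_const 2).add
    ((hu.continuous_fderiv one_ne_zero).enorm.measurable.pow_const 2)

lemma enorm_sq_le_lintegral_ray (hu : ContDiff ℝ 1 u) (hlim : Tendsto u (cocompact E2) (𝓝 0))
    (x : E2) (θ r : ℝ) :
    ‖u (x - polar r θ)‖ₑ ^ 2 ≤ ∫⁻ s in Ioi r, sobolevDensity u (x - polar s θ) := by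
  have hline : (fun s => x - polar s θ) = fun s => x - s • polar 1 θ := by
    simp_rw [← polar_eq_smul]
  have hray (s : ℝ) : HasDerivAt (fun s => x - polar s θ) (-polar 1 θ) s := by
    simpa [hline] using ((hasDerivAt_id s).smul_const (polar 1 θ)).const_sub x
  have hray_lim : Tendsto (fun s => x - polar s θ) atTop (cocompact E2) := by
    refine tendsto_cocompact_of_tendsto_dist_comp_atTop x ?_
    simpa [dist_eq_norm, norm_polar] using tendsto_abs_atTop_atTop
  have hv : ContDiff ℝ 1 fun s => u (x - polar s θ) :=
    hu.comp (by rw [hline]; fun_prop)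
  refine (enorm_sq_le_lintegral_Ioi hv (hlim.comp hray_lim) r).trans ?_
  unfold sobolevDensity
  gcongr with s
  have hd := ((hu.differentiable one_ne_zero _).hasFDerivAt).comp_hasDerivAt s (hray s)
  rw [Function.comp_def] at hd
  rw [hd.deriv]
  simpa [enorm_le_iff_norm_le, norm_polar_one]
    using (fderiv ℝ u (x - polar s θ)).le_opNorm (-polar 1 θ)

lemma invNorm_lconvolution_apply {f : E2 → ℝ≥0∞} (hf : Measurable f) (x : E2) :
    (invNorm ⋆ₗ f) x = ∫⁻ θ in Ioo (-π) π, ∫⁻ r in Ioi (0 : ℝ), f (x - polar r θ) := by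
  simp_rw [lconvolution_def, neg_add_eq_sub]
  exact lintegral_invNorm_mul (hf.comp (measurable_const_sub x))

/-- Hardy's inequality, by integrating the estimate along rays. -/
lemma invNorm_lconvolution_enorm_sq_le (hu : ContDiff ℝ 1 u)
    (hlim : Tendsto u (cocompact E2) (𝓝 0)) (x : E2) :
    (invNorm ⋆ₗ fun y => ‖u y‖ₑ ^ 2) x ≤ ∫⁻ y, sobolevDensity u y := by
  have hm := measurable_sobolevDensity hu
  have hray (θ : ℝ) : Measurable fun s => sobolevDensity u (x - polar s θ) :=
    hm.comp (by fun_prop)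
  rw [invNorm_lconvolution_apply (hu.continuous.enorm.measurable.pow_const 2)]
  calc _ ≤ ∫⁻ θ in Ioo (-π) π, ∫⁻ r in Ioi (0 : ℝ), ∫⁻ s in Ioi r,
          sobolevDensity u (x - polar s θ) := by
        gcongr with θ r
        exact enorm_sq_le_lintegral_ray hu hlim x θ r
    _ = ∫⁻ θ in Ioo (-π) π, ∫⁻ s in Ioi (0 : ℝ), .ofReal s * sobolevDensity u (x - polar s θ) := by
        simp_rw [lintegral_Ioi_lintegral_Ioi (hray _), sub_zero]
    _ = ∫⁻ z, sobolevDensity u (x - z) :=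
        (lintegral_eq_lintegral_polar (hm.comp (measurable_const_sub x))).symm
    _ = ∫⁻ y, sobolevDensity u y := lintegral_sub_left_eq_self _ x

lemma two_pi_mul_enorm_sq_le (hu : ContDiff ℝ 1 u) (hlim : Tendsto u (cocompact E2) (𝓝 0))
    (x : E2) : .ofReal (2 * π) * ‖u x‖ₑ ^ 2 ≤ (invNorm ⋆ₗ sobolevDensity u) x := by
  have hcenter (θ : ℝ) : x - polar 0 θ = x := by simp [polar]
  calc .ofReal (2 * π) * ‖u x‖ₑ ^ 2 = ∫⁻ _ in Ioo (-π) π, ‖u x‖ₑ ^ 2 := by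
        rw [setLIntegral_const, Real.volume_Ioo, mul_comm, sub_neg_eq_add, two_mul]
    _ ≤ ∫⁻ θ in Ioo (-π) π, ∫⁻ s in Ioi (0 : ℝ), sobolevDensity u (x - polar s θ) := by
        gcongr with θ
        simpa only [hcenter] using enorm_sq_le_lintegral_ray hu hlim x θ 0
    _ = _ := (invNorm_lconvolution_apply (measurable_sobolevDensity hu) x).symm

end HardyInequality

section SquareIntegrability

variable {α ε : Type*} [MeasurableSpace α] {μ : Measure α}

lemma eLpNorm_two_sq [ENorm ε] (f : α → ε) : eLpNorm f 2 μ ^ 2 = ∫⁻ x, ‖f x‖ₑ ^ 2 ∂μ := by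
  simpa using eLpNorm_nnreal_pow_eq_lintegral (f := f) (μ := μ) (p := 2) two_ne_zero

lemma sq_lintegral_mul_le {f g : α → ℝ≥0∞} (hf : Measurable f) (hg : Measurable g) :
    (∫⁻ x, f x * g x ∂μ) ^ 2 ≤ (∫⁻ x, f x ^ 2 ∂μ) * ∫⁻ x, g x ^ 2 ∂μ := by
  have h := ENNReal.lintegral_mul_le_Lp_mul_Lq μ Real.HolderConjugate.two_two hf.aemeasurable
    hg.aemeasurable
  simp only [Pi.mul_apply, ENNReal.rpow_two, one_div] at h
  refine (pow_le_pow_left' h 2).trans_eq ?_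
  rw [mul_pow, ← ENNReal.rpow_two, ← ENNReal.rpow_two, ENNReal.rpow_inv_rpow two_ne_zero,
    ENNReal.rpow_inv_rpow two_ne_zero]

lemma eLpNorm_two_le_of_enorm_le_mul [ENorm ε] {f : α → ε} {g : α → ℝ≥0∞} {c : ℝ≥0∞}
    (hg : Measurable g) (hfg : ∀ x, ‖f x‖ₑ ≤ c * g x) : eLpNorm f 2 μ ≤ c * eLpNorm g 2 μ := by
  rw [← ENNReal.pow_le_pow_left_iff two_ne_zero, mul_pow, eLpNorm_two_sq, eLpNorm_two_sq,
    ← lintegral_const_mul _ (by fun_prop)]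
  refine lintegral_mono fun x => ?_
  rw [enorm_eq_self, ← mul_pow]
  gcongr
  exact hfg x

lemma eLpNorm_two_add_le {f g : α → ℝ≥0∞} (hf : Measurable f) (hg : Measurable g) :
    eLpNorm (fun x => f x + g x) 2 μ ≤ eLpNorm f 2 μ + eLpNorm g 2 μ :=
  eLpNorm_add_le hf.aestronglyMeasurable hg.aestronglyMeasurable one_le_two

end SquareIntegrability

section Convolution

variable {G : Type*} [AddCommGroup G] [MeasurableSpace G] {μ : Measure G} {k f g : G → ℝ≥0∞}

lemma lconvolution_mono (hfg : f ≤ g) : k ⋆ₗ[μ] f ≤ k ⋆ₗ[μ] g :=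
  fun _ => lintegral_mono fun _ => mul_le_mul_right (hfg _) _

variable [MeasurableAdd₂ G] [MeasurableNeg G]

lemma lconvolution_add (hk : Measurable k) (hf : Measurable f) :
    k ⋆ₗ[μ] (f + g) = k ⋆ₗ[μ] f + k ⋆ₗ[μ] g := by
  ext x
  simp only [lconvolution_def, Pi.add_apply, mul_add]
  exact lintegral_add_left (by fun_prop) _

lemma lconvolution_const_mul (hk : Measurable k) (hf : Measurable f) (c : ℝ≥0∞) (x : G) :
    (k ⋆ₗ[μ] fun y => c * f y) x = c * (k ⋆ₗ[μ] f) x := by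
  simp only [lconvolution_def, mul_left_comm _ c]
  exact lintegral_const_mul _ (by fun_prop)

lemma lconvolution_const_mul_sq_le (hk : Measurable k) (hf : Measurable f) {x : G} {A : ℝ≥0∞}
    (hA : (k ⋆ₗ[μ] fun y => f y ^ 2) x ≤ A ^ 2) (c : ℝ≥0∞) :
    (k ⋆ₗ[μ] fun y => (c * f y) ^ 2) x ≤ (c * A) ^ 2 := by
  simp only [mul_pow]
  rw [lconvolution_const_mul hk (hf.pow_const 2)]
  gcongr

variable [μ.IsAddLeftInvariant] [μ.IsNegInvariant]

lemma lconvolution_apply_sub (x : G) : (k ⋆ₗ[μ] f) x = ∫⁻ y, k (x - y) * f y ∂μ := by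
  simp_rw [lconvolution_comm (f := k), lconvolution_def, neg_add_eq_sub, mul_comm]

lemma lconvolution_eq_lintegral_withDensity (hk : Measurable k) (hf : Measurable f) (x : G) :
    (k ⋆ₗ[μ] f) x = ∫⁻ y, f y ∂μ.withDensity fun y => k (x - y) := by
  have hkx : Measurable fun y => k (x - y) := by fun_prop
  rw [lconvolution_apply_sub, lintegral_withDensity_eq_lintegral_mul _ hkx hf]
  rfl

lemma lconvolution_add_sq_le (hk : Measurable k) (hf : Measurable f) (hg : Measurable g) {x : G}
    {A B : ℝ≥0∞} (hA : (k ⋆ₗ[μ] fun y => f y ^ 2) x ≤ A ^ 2)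
    (hB : (k ⋆ₗ[μ] fun y => g y ^ 2) x ≤ B ^ 2) :
    (k ⋆ₗ[μ] fun y => (f y + g y) ^ 2) x ≤ (A + B) ^ 2 := by
  have hnorm {h : G → ℝ≥0∞} (hh : Measurable h) : (k ⋆ₗ[μ] fun y => h y ^ 2) x
      = eLpNorm h 2 (μ.withDensity fun y => k (x - y)) ^ 2 := by
    rw [eLpNorm_two_sq, lconvolution_eq_lintegral_withDensity hk (by fun_prop)]
    rfl
  rw [hnorm hf, ENNReal.pow_le_pow_left_iff two_ne_zero] at hA
  rw [hnorm hg, ENNReal.pow_le_pow_left_iff two_ne_zero] at hB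
  refine (hnorm (hf.add hg)).trans_le ?_
  rw [ENNReal.pow_le_pow_left_iff two_ne_zero]
  exact (eLpNorm_two_add_le hf hg).trans (add_le_add hA hB)

lemma lintegral_mul_lconvolution_comm [SFinite μ] (hk : Measurable k) (hf : Measurable f)
    (hg : Measurable g) (heven : ∀ z, k (-z) = k z) :
    ∫⁻ x, g x * (k ⋆ₗ[μ] f) x ∂μ = ∫⁻ x, f x * (k ⋆ₗ[μ] g) x ∂μ := by
  have hleft (x : G) : g x * (k ⋆ₗ[μ] f) x = ∫⁻ y, g x * (k (x - y) * f y) ∂μ := by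
    rw [lconvolution_apply_sub, lintegral_const_mul _ (by fun_prop)]
  have hright (y : G) : f y * (k ⋆ₗ[μ] g) y = ∫⁻ x, g x * (k (x - y) * f y) ∂μ := by
    rw [lconvolution_apply_sub, ← lintegral_const_mul _ (by fun_prop)]
    refine lintegral_congr fun x => ?_
    rw [← neg_sub x y, heven]
    ring
  simp_rw [hleft, hright]
  exact lintegral_lintegral_swap (by fun_prop)

lemma sq_lconvolution_mul_le (hk : Measurable k) (hf : Measurable f) (hg : Measurable g) (x : G) :
    (k ⋆ₗ[μ] fun y => f y * g y) x ^ 2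
      ≤ (k ⋆ₗ[μ] fun y => f y ^ 2) x * (k ⋆ₗ[μ] fun y => g y ^ 2) x := by
  rw [lconvolution_eq_lintegral_withDensity hk (by fun_prop),
    lconvolution_eq_lintegral_withDensity hk (by fun_prop),
    lconvolution_eq_lintegral_withDensity hk (by fun_prop)]
  exact sq_lintegral_mul_le hf hg

/-- A weighted Schur test: by Cauchy–Schwarz and symmetry of the kernel, only the convolutions of
`k` with the squares of the two weights matter. -/
lemma eLpNorm_mul_lconvolution_mul_le [SFinite μ] {a q : G → ℝ≥0∞} {A B : ℝ≥0∞}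
    (hk : Measurable k) (heven : ∀ z, k (-z) = k z)
    (hg : Measurable g) (ha : Measurable a) (hq : Measurable q)
    (hA : ∀ x, (k ⋆ₗ[μ] fun y => g y ^ 2) x ≤ A ^ 2)
    (hB : ∀ x, (k ⋆ₗ[μ] fun y => a y ^ 2) x ≤ B ^ 2) :
    eLpNorm (fun x => g x * (k ⋆ₗ[μ] fun y => q y * a y) x) 2 μ ≤ A * B * eLpNorm q 2 μ := by
  refine (ENNReal.pow_le_pow_left_iff two_ne_zero).1 ?_
  simp only [mul_pow, eLpNorm_two_sq, enorm_eq_self]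
  calc ∫⁻ x, g x ^ 2 * (k ⋆ₗ[μ] fun y => q y * a y) x ^ 2 ∂μ
      ≤ ∫⁻ x, g x ^ 2 * (k ⋆ₗ[μ] fun y => q y ^ 2) x * B ^ 2 ∂μ := by
        refine lintegral_mono fun x => ?_
        rw [mul_assoc]
        gcongr
        exact (sq_lconvolution_mul_le hk hq ha x).trans (by gcongr; exact hB x)
    _ = (∫⁻ x, q x ^ 2 * (k ⋆ₗ[μ] fun y => g y ^ 2) x ∂μ) * B ^ 2 := by
        rw [lintegral_mul_const _ (by fun_prop),
          lintegral_mul_lconvolution_comm hk (by fun_prop) (by fun_prop) heven]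
    _ ≤ (∫⁻ x, q x ^ 2 * A ^ 2 ∂μ) * B ^ 2 := by
        gcongr with x
        exact hA x
    _ = A ^ 2 * B ^ 2 * ∫⁻ x, q x ^ 2 ∂μ := by
        rw [lintegral_mul_const _ (by fun_prop)]
        ring

lemma eLpNorm_lconvolution_le [SFinite μ] (hk : Measurable k) (heven : ∀ z, k (-z) = k z)
    (hf : Measurable f) : eLpNorm (k ⋆ₗ[μ] f) 2 μ ≤ (∫⁻ z, k z ∂μ) * eLpNorm f 2 μ := by
  have hsq : ((∫⁻ z, k z ∂μ) ^ (2⁻¹ : ℝ)) ^ 2 = ∫⁻ z, k z ∂μ := by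
    rw [← ENNReal.rpow_two, ENNReal.rpow_inv_rpow two_ne_zero]
  have hone (x : G) : (k ⋆ₗ[μ] fun _ => 1 ^ 2) x ≤ ((∫⁻ z, k z ∂μ) ^ (2⁻¹ : ℝ)) ^ 2 := by
    simp [lconvolution_def, hsq]
  simpa only [one_mul, mul_one, ← sq, hsq] using
    eLpNorm_mul_lconvolution_mul_le hk heven measurable_const measurable_const hf hone hone

end Convolution

section Kernel

lemma norm_K (R : ℝ) (z : E2) : ‖K R z‖ = (max R ‖z‖ ^ 2)⁻¹ * ‖z‖ := by
  rw [K, norm_smul, norm_perp, Real.norm_of_nonneg (by positivity)]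

lemma K_zero_right (R : ℝ) : K R 0 = 0 := by
  simpa using norm_K R 0

@[fun_prop]
lemma measurable_K (R : ℝ) : Measurable (K R) := by
  unfold K
  fun_prop

lemma invNorm_eq_ofReal {z : E2} (hz : z ≠ 0) : invNorm z = .ofReal ((‖z‖ ^ 2)⁻¹ * ‖z‖) := by
  have hz' : 0 < ‖z‖ := norm_pos_iff.2 hz
  rw [invNorm, ← ofReal_norm, ← ofReal_inv_of_pos hz']
  congr 1
  field_simp

lemma enorm_K_le (R : ℝ) (z : E2) : ‖K R z‖ₑ ≤ invNorm z := by
  rcases eq_or_ne z 0 with rfl | hz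
  · simp [K_zero_right]
  rw [invNorm_eq_ofReal hz, ← ofReal_norm, norm_K]
  gcongr
  exact le_max_right _ _

lemma enorm_K_sub_le {S R : ℝ} (hSR : S ≤ R) (z : E2) : ‖K S z - K R z‖ₑ ≤ invNormBall R z := by
  rcases eq_or_ne z 0 with rfl | hz
  · simp [K_zero_right]
  rw [invNormBall]
  split_ifs with hball
  · have hS : (max S ‖z‖ ^ 2)⁻¹ ≤ (‖z‖ ^ 2)⁻¹ := by gcongr; exact le_max_right _ _
    have hmono : (max R ‖z‖ ^ 2)⁻¹ ≤ (max S ‖z‖ ^ 2)⁻¹ := by gcongr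
    have hR : 0 ≤ (max R ‖z‖ ^ 2)⁻¹ := by positivity
    rw [invNorm_eq_ofReal hz, ← ofReal_norm, K, K, ← sub_smul, norm_smul, norm_perp,
      Real.norm_of_nonneg (sub_nonneg.2 hmono)]
    gcongr
    linarith
  · have hR : R ≤ ‖z‖ := not_lt.1 hball
    simp [K, max_eq_right hR, max_eq_right (hSR.trans hR)]

end Kernel

section KernelConvolution

variable {X Y : Type*} [NormedAddCommGroup X] [NormedSpace ℝ X] [NormedAddCommGroup Y]
  [NormedSpace ℝ Y] {L : X →L[ℝ] E2 →L[ℝ] Y} {f g : E2 → X} {k : E2 → E2} {κ : E2 → ℝ≥0∞}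
  {S R : ℝ} {x : E2}

lemma convKs_eq_convolution (R : ℝ) (ρ : E2 → ℝ) :
    convKs R ρ = ρ ⋆[ContinuousLinearMap.lsmul ℝ ℝ] K R := rfl

lemma convKv_eq_convolution (R : ℝ) (F : E2 → E2) : convKv R F = F ⋆[innerSL ℝ] K R := by
  ext x
  exact integral_congr_ae (.of_forall fun y => real_inner_comm _ _)

lemma norm_lsmul_le_one : ‖(ContinuousLinearMap.lsmul ℝ ℝ : ℝ →L[ℝ] E2 →L[ℝ] E2)‖ ≤ 1 :=
  ContinuousLinearMap.opNorm_lsmul_le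

lemma norm_innerSL_le_one : ‖(innerSL ℝ : E2 →L[ℝ] E2 →L[ℝ] ℝ)‖ ≤ 1 :=
  norm_innerSL_le ℝ

lemma enorm_clm_apply₂_le (hL : ‖L‖ ≤ 1) (a : X) (b : E2) : ‖L a b‖ₑ ≤ ‖b‖ₑ * ‖a‖ₑ := by
  have hab : ‖L a b‖ ≤ ‖b‖ * ‖a‖ := by
    refine (L.le_of_opNorm₂_le_of_le hL le_rfl le_rfl).trans_eq ?_
    ring
  simpa [enorm_eq_nnnorm] using mod_cast hab

lemma lintegral_enorm_clm_apply₂_le (hL : ‖L‖ ≤ 1) (hk : ∀ z, ‖k z‖ₑ ≤ κ z) :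
    ∫⁻ y, ‖L (f y) (k (x - y))‖ₑ ≤ (κ ⋆ₗ fun y => ‖f y‖ₑ) x := by
  rw [lconvolution_apply_sub]
  exact lintegral_mono fun y => (enorm_clm_apply₂_le hL _ _).trans (by gcongr; exact hk _)

lemma enorm_convolution_le (hL : ‖L‖ ≤ 1) (hk : ∀ z, ‖k z‖ₑ ≤ κ z) :
    ‖(f ⋆[L] k) x‖ₑ ≤ (κ ⋆ₗ fun y => ‖f y‖ₑ) x :=
  (enorm_integral_le_lintegral_enorm _).trans (lintegral_enorm_clm_apply₂_le hL hk)

lemma stronglyMeasurable_clm_apply₂ (hf : StronglyMeasurable f) (hk : Measurable k) :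
    StronglyMeasurable fun p : E2 × E2 => L (f p.2) (k (p.1 - p.2)) :=
  (L.continuous₂.comp_stronglyMeasurable ((hf.comp_measurable measurable_snd).prodMk
    (hk.comp (measurable_fst.sub measurable_snd)).stronglyMeasurable) :)

lemma convolutionExistsAt_of_lconvolution_ne_top (hL : ‖L‖ ≤ 1) (hf : StronglyMeasurable f)
    (hkm : Measurable k) (hk : ∀ z, ‖k z‖ₑ ≤ κ z) (hfin : (κ ⋆ₗ fun y => ‖f y‖ₑ) x ≠ ⊤) :
    ConvolutionExistsAt f k x L :=
  ⟨((stronglyMeasurable_clm_apply₂ hf hkm).comp_measurable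
      measurable_prodMk_left).aestronglyMeasurable,
    (lintegral_enorm_clm_apply₂_le hL hk).trans_lt hfin.lt_top⟩

lemma stronglyMeasurable_convolution (hf : StronglyMeasurable f) (hk : Measurable k) :
    StronglyMeasurable (f ⋆[L] k) :=
  (stronglyMeasurable_clm_apply₂ hf hk).integral_prod_right

lemma enorm_convolution_K_sub_le (hL : ‖L‖ ≤ 1) (hSR : S ≤ R) (hf : StronglyMeasurable f)
    (hg : StronglyMeasurable g) (hffin : (invNorm ⋆ₗ fun y => ‖f y‖ₑ) x ≠ ⊤)
    (hgfin : (invNorm ⋆ₗ fun y => ‖g y‖ₑ) x ≠ ⊤) :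
    ‖(f ⋆[L] K S) x - (g ⋆[L] K R) x‖ₑ
      ≤ ‖((f - g) ⋆[L] K S) x‖ₑ + (invNormBall R ⋆ₗ fun y => ‖g y‖ₑ) x := by
  have hfS : ConvolutionExistsAt f (K S) x L :=
    convolutionExistsAt_of_lconvolution_ne_top hL hf (measurable_K S) (enorm_K_le S) hffin
  have hgS : ConvolutionExistsAt g (K S) x L :=
    convolutionExistsAt_of_lconvolution_ne_top hL hg (measurable_K S) (enorm_K_le S) hgfin
  have hgR : ConvolutionExistsAt g (K R) x L :=
    convolutionExistsAt_of_lconvolution_ne_top hL hg (measurable_K R) (enorm_K_le R) hgfin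
  have hsplit : (f ⋆[L] K S) x - (g ⋆[L] K R) x
      = ((f - g) ⋆[L] K S) x + (g ⋆[L] (K S - K R)) x := by
    simp only [convolution_def, Pi.sub_apply, map_sub, sub_apply]
    rw [integral_sub hfS hgS, integral_sub hgS hgR]
    abel
  rw [hsplit]
  exact (enorm_add_le _ _).trans (by gcongr; exact enorm_convolution_le hL (enorm_K_sub_le hSR))

end KernelConvolution

section H2Bounds

lemma H2_sq (u : E2 → ℂ) :
    H2 u ^ 2 = eLpNorm u 2 volume ^ 2 + eLpNorm (fderiv ℝ u) 2 volume ^ 2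
      + eLpNorm (fderiv ℝ (fderiv ℝ u)) 2 volume ^ 2 := by
  rw [H2, ← ENNReal.rpow_two, ← ENNReal.rpow_mul]
  norm_num

lemma eLpNorm_le_H2 (u : E2 → ℂ) : eLpNorm u 2 volume ≤ H2 u := by
  refine (ENNReal.pow_le_pow_left_iff two_ne_zero).1 ?_
  rw [H2_sq, add_assoc]
  exact le_self_add

lemma eLpNorm_fderiv_le_H2 (u : E2 → ℂ) : eLpNorm (fderiv ℝ u) 2 volume ≤ H2 u := by
  refine (ENNReal.pow_le_pow_left_iff two_ne_zero).1 ?_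
  rw [H2_sq]
  exact le_add_self.trans le_self_add

lemma eLpNorm_fderiv_fderiv_le_H2 (u : E2 → ℂ) :
    eLpNorm (fderiv ℝ (fderiv ℝ u)) 2 volume ≤ H2 u := by
  refine (ENNReal.pow_le_pow_left_iff two_ne_zero).1 ?_
  rw [H2_sq]
  exact le_add_self

lemma lintegral_sobolevDensity_le_H2_sq {u : E2 → ℂ} (hu : ContDiff ℝ 1 u) :
    ∫⁻ y, sobolevDensity u y ≤ H2 u ^ 2 := by
  unfold sobolevDensity
  rw [lintegral_add_left (hu.continuous.enorm.measurable.pow_const 2), ← eLpNorm_two_sq,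
    ← eLpNorm_two_sq, H2_sq]
  exact le_self_add

lemma lintegral_sobolevDensity_fderiv_le_H2_sq {u : E2 → ℂ} (hu : ContDiff ℝ 1 (fderiv ℝ u)) :
    ∫⁻ y, sobolevDensity (fderiv ℝ u) y ≤ H2 u ^ 2 := by
  unfold sobolevDensity
  rw [lintegral_add_left (hu.continuous.enorm.measurable.pow_const 2), ← eLpNorm_two_sq,
    ← eLpNorm_two_sq, H2_sq, add_assoc]
  exact le_add_self

end H2Bounds

section SchwartzBounds

lemma invNorm_lconvolution_enorm_sq_le_H2_sq (u : 𝓢(E2, ℂ)) (x : E2) :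
    (invNorm ⋆ₗ fun y => ‖u y‖ₑ ^ 2) x ≤ H2 u ^ 2 :=
  (invNorm_lconvolution_enorm_sq_le (u.smooth 1) (zero_at_infty u) x).trans
    (lintegral_sobolevDensity_le_H2_sq (u.smooth 1))

lemma invNorm_lconvolution_enorm_fderiv_sq_le_H2_sq (u : 𝓢(E2, ℂ)) (x : E2) :
    (invNorm ⋆ₗ fun y => ‖fderiv ℝ u y‖ₑ ^ 2) x ≤ H2 u ^ 2 := by
  have hu : ContDiff ℝ 1 (fderiv ℝ u) := (SchwartzMap.fderivCLM ℝ E2 ℂ u).smooth 1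
  exact (invNorm_lconvolution_enorm_sq_le hu
    (zero_at_infty (SchwartzMap.fderivCLM ℝ E2 ℂ u)) x).trans
    (lintegral_sobolevDensity_fderiv_le_H2_sq hu)

/-- The Sobolev embedding `H² ⊂ L^∞` in dimension two. -/
lemma enorm_le_H2 (u : 𝓢(E2, ℂ)) (x : E2) : ‖u x‖ₑ ≤ H2 u := by
  refine (ENNReal.pow_le_pow_left_iff two_ne_zero).1 ?_
  have htwo : (2 : ℝ≥0∞) ≤ .ofReal (2 * π) := by
    rw [← ofReal_ofNat]
    exact ofReal_le_ofReal (by linarith [Real.pi_gt_three])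
  have hsplit : sobolevDensity u = (fun y => ‖u y‖ₑ ^ 2) + fun y => ‖fderiv ℝ u y‖ₑ ^ 2 := rfl
  have key : 2 * ‖u x‖ₑ ^ 2 ≤ 2 * H2 u ^ 2 :=
    calc 2 * ‖u x‖ₑ ^ 2 ≤ .ofReal (2 * π) * ‖u x‖ₑ ^ 2 := by gcongr
      _ ≤ (invNorm ⋆ₗ sobolevDensity u) x :=
        two_pi_mul_enorm_sq_le (u.smooth 1) (zero_at_infty u) x
      _ ≤ H2 u ^ 2 + H2 u ^ 2 := by
        rw [hsplit, lconvolution_add measurable_invNorm (u.continuous.enorm.measurable.pow_const 2)]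
        exact add_le_add (invNorm_lconvolution_enorm_sq_le_H2_sq u x)
          (invNorm_lconvolution_enorm_fderiv_sq_le_H2_sq u x)
      _ = 2 * H2 u ^ 2 := (two_mul _).symm
  exact (ENNReal.mul_le_mul_iff_right two_ne_zero ofNat_ne_top).1 key

lemma enorm_norm_sq (z : ℂ) : ‖‖z‖ ^ 2‖ₑ = ‖z‖ₑ ^ 2 := by
  rw [enorm_pow, enorm_norm]

lemma enorm_Apot_le (R : ℝ) (u : 𝓢(E2, ℂ)) (x : E2) : ‖Apot R u x‖ₑ ≤ H2 u ^ 2 := by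
  refine (enorm_convolution_le norm_lsmul_le_one (enorm_K_le R)).trans ?_
  simpa only [enorm_norm_sq] using invNorm_lconvolution_enorm_sq_le_H2_sq u x

lemma measurable_Apot (R : ℝ) {u : E2 → ℂ} (hu : Continuous u) : Measurable (Apot R u) :=
  (stronglyMeasurable_convolution (L := ContinuousLinearMap.lsmul ℝ ℝ)
    (hu.norm.pow 2).stronglyMeasurable (measurable_K R)).measurable

end SchwartzBounds

section DivergenceFree

variable {h : E2 → ℝ}

lemma K_neg (R : ℝ) (z : E2) : K R (-z) = -K R z := by
  have hperp : perp (-z) = -perp z := by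
    ext i
    fin_cases i <;> simp [perp]
  rw [K, K, norm_neg, hperp, smul_neg]

/-- The field `K R` is tangent to the circles centred at the origin, with constant length on
each of them. -/
lemma integral_fderiv_apply_K_eq_zero (hh : ContDiff ℝ 1 h) (R : ℝ) :
    ∫ z, fderiv ℝ h z (K R z) = 0 := by
  refine integral_eq_zero_of_circle fun r => ?_
  have hpolar : Continuous (polar r) := by fun_prop
  have hderiv (θ : ℝ) :
      HasDerivAt (h ∘ polar r) (fderiv ℝ h (polar r θ) (perp (polar r θ))) θ :=
    (hh.differentiable one_ne_zero _).hasFDerivAt.comp_hasDerivAt θ (hasDerivAt_polar_angle r θ)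
  have hcont : Continuous fun θ => fderiv ℝ h (polar r θ) (perp (polar r θ)) :=
    ((hh.continuous_fderiv one_ne_zero).comp hpolar).clm_apply (by fun_prop)
  simp only [K, norm_polar, map_smul, smul_eq_mul, intervalIntegral.integral_const_mul]
  rw [intervalIntegral.integral_eq_sub_of_hasDerivAt (fun θ _ => hderiv θ)
    (hcont.intervalIntegrable _ _)]
  simp [polar]

lemma integral_fderiv_apply_K_sub_eq_zero (hh : ContDiff ℝ 1 h) (R : ℝ) (y : E2) :
    ∫ x, fderiv ℝ h x (K R (x - y)) = 0 := by
  have hshift : ContDiff ℝ 1 fun z => h (z + y) := hh.comp (contDiff_id.add contDiff_const)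
  rw [← integral_add_right_eq_self _ y]
  simpa only [add_sub_cancel_right, fderiv_comp_add_right] using
    integral_fderiv_apply_K_eq_zero hshift R

open scoped Gradient in
lemma gradient_convolution_K_eq_zero (hh : ContDiff ℝ 1 h) (R : ℝ) :
    ∇ h ⋆[innerSL ℝ] K R = 0 := by
  ext x
  calc ∫ y, ⟪∇ h y, K R (x - y)⟫ = ∫ y, -fderiv ℝ h y (K R (y - x)) := by
        refine integral_congr_ae (.of_forall fun y => ?_)
        beta_reduce
        rw [inner_gradient_left, ← neg_sub y x, K_neg, map_neg]
    _ = 0 := by rw [integral_neg, integral_fderiv_apply_K_sub_eq_zero hh, neg_zero]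

lemma integrable_fderiv_apply_smul_K {ρ : E2 → ℝ} {B : ℝ≥0∞} (hh : ContDiff ℝ 1 h)
    (hint : Integrable (fderiv ℝ h)) (hρ : Continuous ρ)
    (hB : ∀ x, (invNorm ⋆ₗ fun y => ‖ρ y‖ₑ) x ≤ B) (hBfin : B ≠ ⊤) (R : ℝ) :
    Integrable (fun p : E2 × E2 => fderiv ℝ h p.1 (ρ p.2 • K R (p.1 - p.2)))
      (volume.prod volume) := by
  have hdh : Continuous (fderiv ℝ h) := hh.continuous_fderiv one_ne_zero
  have hmeas : Measurable fun p : E2 × E2 => fderiv ℝ h p.1 (ρ p.2 • K R (p.1 - p.2)) :=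
    isBoundedBilinearMap_apply.continuous.measurable.comp
      ((hdh.measurable.comp measurable_fst).prodMk (by fun_prop))
  refine ⟨hmeas.aestronglyMeasurable, ?_⟩
  rw [HasFiniteIntegral, lintegral_prod _ hmeas.enorm.aemeasurable]
  calc ∫⁻ x, ∫⁻ y, ‖fderiv ℝ h x (ρ y • K R (x - y))‖ₑ
      ≤ ∫⁻ x, ∫⁻ y, ‖fderiv ℝ h x‖ₑ * (invNorm (x - y) * ‖ρ y‖ₑ) := by
        gcongr with x y
        refine (ContinuousLinearMap.le_opENorm _ _).trans ?_
        rw [enorm_smul, mul_comm ‖ρ y‖ₑ]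
        gcongr
        exact enorm_K_le R _
    _ = ∫⁻ x, ‖fderiv ℝ h x‖ₑ * (invNorm ⋆ₗ fun y => ‖ρ y‖ₑ) x := by
        simp_rw [lconvolution_apply_sub]
        exact lintegral_congr fun x => lintegral_const_mul _ (by fun_prop)
    _ ≤ ∫⁻ x, ‖fderiv ℝ h x‖ₑ * B := by gcongr with x; exact hB x
    _ < ⊤ := by
        rw [lintegral_mul_const _ hdh.enorm.measurable]
        exact mul_lt_top hint.2 hBfin.lt_top

lemma fderiv_apply_convKs {ρ : E2 → ℝ} (hρ : Continuous ρ) {x : E2}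
    (hfin : (invNorm ⋆ₗ fun y => ‖ρ y‖ₑ) x ≠ ⊤) (R : ℝ) :
    fderiv ℝ h x (convKs R ρ x) = ∫ y, fderiv ℝ h x (ρ y • K R (x - y)) :=
  (ContinuousLinearMap.integral_comp_comm _ (convolutionExistsAt_of_lconvolution_ne_top
    norm_lsmul_le_one hρ.stronglyMeasurable (measurable_K R) (enorm_K_le R) hfin)).symm

lemma integrable_fderiv_apply_convKs {ρ : E2 → ℝ} {B : ℝ≥0∞} (hh : ContDiff ℝ 1 h)
    (hint : Integrable (fderiv ℝ h)) (hρ : Continuous ρ)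
    (hB : ∀ x, (invNorm ⋆ₗ fun y => ‖ρ y‖ₑ) x ≤ B) (hBfin : B ≠ ⊤) (R : ℝ) :
    Integrable fun x => fderiv ℝ h x (convKs R ρ x) := by
  simp_rw [fun x => fderiv_apply_convKs (h := h) hρ (ne_top_of_le_ne_top hBfin (hB x)) R]
  exact (integrable_fderiv_apply_smul_K hh hint hρ hB hBfin R).integral_prod_left

lemma integral_fderiv_apply_convKs_eq_zero {ρ : E2 → ℝ} {B : ℝ≥0∞} (hh : ContDiff ℝ 1 h)
    (hint : Integrable (fderiv ℝ h)) (hρ : Continuous ρ)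
    (hB : ∀ x, (invNorm ⋆ₗ fun y => ‖ρ y‖ₑ) x ≤ B) (hBfin : B ≠ ⊤) (R : ℝ) :
    ∫ x, fderiv ℝ h x (convKs R ρ x) = 0 := by
  simp_rw [fun x => fderiv_apply_convKs (h := h) hρ (ne_top_of_le_ne_top hBfin (hB x)) R]
  rw [integral_integral_swap (integrable_fderiv_apply_smul_K hh hint hρ hB hBfin R)]
  simp only [map_smul, smul_eq_mul, integral_const_mul,
    integral_fderiv_apply_K_sub_eq_zero hh, mul_zero, integral_zero]

end DivergenceFree

section Current

/-- The vector `2 Im (ā L) ∈ ℝ²`, through which the current `Jf u` is bilinear in `u` and `∇u`. -/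
def current (a : ℂ) (L : E2 →L[ℝ] ℂ) : E2 :=
  (WithLp.equiv 2 (Fin 2 → ℝ)).symm fun j => 2 * ((starRingEnd ℂ) a * L (e2 j)).im

lemma Jf_eq_current (u : E2 → ℂ) (x : E2) : Jf u x = current (u x) (fderiv ℝ u x) := rfl

lemma inner_I_mul_left (a b : ℂ) : ⟪Complex.I * a, b⟫ = ((starRingEnd ℂ) a * b).im := by
  simp [Complex.inner]
  ring

lemma inner_current (a : ℂ) (L : E2 →L[ℝ] ℂ) (v : E2) :
    ⟪current a L, v⟫ = 2 * ⟪Complex.I * a, L v⟫ := by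
  have hv : v = v 0 • e2 0 + v 1 • e2 1 := by
    ext i
    fin_cases i <;> simp [e2]
  rw [hv, inner_I_mul_left]
  simp [current, e2, PiLp.inner_apply, Fin.sum_univ_two]
  ring

lemma norm_current_le (a : ℂ) (L : E2 →L[ℝ] ℂ) : ‖current a L‖ ≤ 2 * ‖a‖ * ‖L‖ := by
  have hsq : ‖current a L‖ * ‖current a L‖ ≤ 2 * ‖a‖ * ‖L‖ * ‖current a L‖ :=
    calc ‖current a L‖ * ‖current a L‖ = 2 * ⟪Complex.I * a, L (current a L)⟫ := by
          rw [← real_inner_self_eq_norm_mul_norm, inner_current]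
      _ ≤ 2 * (‖Complex.I * a‖ * ‖L (current a L)‖) := by gcongr; exact real_inner_le_norm _ _
      _ ≤ 2 * (‖a‖ * (‖L‖ * ‖current a L‖)) := by
          rw [norm_mul, Complex.norm_I, one_mul]
          gcongr
          exact L.le_opNorm _
      _ = 2 * ‖a‖ * ‖L‖ * ‖current a L‖ := by ring
  rcases (norm_nonneg (current a L)).eq_or_lt with hzero | hpos
  · rw [← hzero]
    positivity
  · exact le_of_mul_le_mul_right hsq hpos

lemma enorm_current_le (a : ℂ) (L : E2 →L[ℝ] ℂ) : ‖current a L‖ₑ ≤ 2 * ‖a‖ₑ * ‖L‖ₑ := by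
  simp only [enorm_eq_nnnorm]
  exact mod_cast norm_current_le a L

open scoped Gradient in
/-- Up to a gradient, the difference of two currents does not involve the gradient of the difference
of the wave functions. -/
lemma Jf_sub_Jf {u v : E2 → ℂ} {x : E2} (hu : DifferentiableAt ℝ u x)
    (hv : DifferentiableAt ℝ v x) :
    Jf u x - Jf v x = current (u x - v x) (fderiv ℝ u x + fderiv ℝ v x)
      + ∇ (fun y => 2 * ⟪Complex.I * v y, u y⟫) x := by
  refine ext_inner_right ℝ fun z => ?_
  have hderiv : fderiv ℝ (fun y => 2 * ⟪Complex.I * v y, u y⟫) x z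
      = 2 * (⟪Complex.I * v x, fderiv ℝ u x z⟫ + ⟪Complex.I * fderiv ℝ v x z, u x⟫) := by
    rw [(((hv.hasFDerivAt.const_mul Complex.I).inner ℝ hu.hasFDerivAt).const_mul 2).fderiv]
    simp
  have hskew (a b : ℂ) : ⟪Complex.I * a, b⟫ = -⟪Complex.I * b, a⟫ := by
    rw [inner_I_mul_left, inner_I_mul_left]
    simp
    ring
  rw [inner_sub_left, inner_add_left, inner_gradient_left, hderiv, Jf_eq_current, Jf_eq_current,
    inner_current, inner_current, inner_current, hskew (fderiv ℝ v x z), mul_sub, inner_sub_left,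
    add_apply, inner_add_right, inner_add_right]
  ring

end Current

section SelfEnergy

open LineDeriv

lemma lap_eq_lineDerivOp (u : 𝓢(E2, ℂ)) (x : E2) :
    lap u x = ∑ j, (∂_{e2 j} (∂_{e2 j} u : 𝓢(E2, ℂ)) : 𝓢(E2, ℂ)) x := by
  simp_rw [SchwartzMap.lineDerivOp_apply_eq_fderiv]
  rfl

/-- The alternating form `(a, b) ↦ ⟪i a, b⟫` on `ℂ`, viewed as a real bilinear map. -/
def innerIMul : ℂ →L[ℝ] ℂ →L[ℝ] ℝ :=
  (innerSL ℝ).comp (ContinuousLinearMap.mul ℝ ℂ Complex.I)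

lemma innerIMul_apply (a b : ℂ) : innerIMul a b = ⟪Complex.I * a, b⟫ := rfl

lemma inner_I_mul_self (a : ℂ) : ⟪Complex.I * a, a⟫ = 0 := by
  simp
  ring

lemma inner_I_mul_lap (w : 𝓢(E2, ℂ)) (x : E2) :
    ⟪Complex.I * w x, lap w x⟫
      = ∑ j, innerIMul (w x) ((∂_{e2 j} (∂_{e2 j} w : 𝓢(E2, ℂ)) : 𝓢(E2, ℂ)) x) := by
  rw [lap_eq_lineDerivOp, inner_sum]
  rfl

lemma integrable_innerIMul (f g : 𝓢(E2, ℂ)) : Integrable fun x => innerIMul (f x) (g x) :=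
  (SchwartzMap.pairing innerIMul f g).integrable

lemma integrable_inner_I_mul_lap (w : 𝓢(E2, ℂ)) :
    Integrable fun x => ⟪Complex.I * w x, lap w x⟫ := by
  simp_rw [inner_I_mul_lap]
  exact integrable_finsetSum _ fun j _ => integrable_innerIMul _ _

lemma integral_inner_I_mul_lap_eq_zero (w : 𝓢(E2, ℂ)) :
    ∫ x, ⟪Complex.I * w x, lap w x⟫ = 0 := by
  simp_rw [inner_I_mul_lap]
  rw [integral_finsetSum _ fun j _ => integrable_innerIMul _ _]
  refine Finset.sum_eq_zero fun j _ => ?_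
  rw [SchwartzMap.integral_bilinear_lineDerivOp_right_eq_neg_left]
  simp only [innerIMul_apply, inner_I_mul_self, integral_zero, neg_zero]

lemma fderiv_norm_sq (w : 𝓢(E2, ℂ)) (x : E2) :
    fderiv ℝ (fun y => ‖w y‖ ^ 2) x = 2 • (innerSL ℝ) (w x) ∘SL fderiv ℝ w x :=
  (w.hasFDerivAt x).norm_sq.fderiv

lemma fderiv_norm_sq_apply (w : 𝓢(E2, ℂ)) (x v : E2) :
    fderiv ℝ (fun y => ‖w y‖ ^ 2) x v = 2 * ⟪w x, fderiv ℝ w x v⟫ := by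
  rw [fderiv_norm_sq]
  exact (two_nsmul _).trans (two_mul _).symm

lemma integrable_fderiv_norm_sq (w : 𝓢(E2, ℂ)) :
    Integrable (fderiv ℝ fun y => ‖w y‖ ^ 2) := by
  let B : ℂ →L[ℝ] (E2 →L[ℝ] ℂ) →L[ℝ] (E2 →L[ℝ] ℝ) :=
    (ContinuousLinearMap.compL ℝ E2 ℂ ℝ).comp (innerSL ℝ)
  refine ((SchwartzMap.pairing B w (SchwartzMap.fderivCLM ℝ E2 ℂ w)).integrable.smul (2 : ℝ)).congr
    (.of_forall fun x => ?_)
  rw [fderiv_norm_sq, ofNat_smul_eq_nsmul]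
  rfl

end SelfEnergy

section Field

/-- The field whose convolution with `K R` is the scalar self-generated potential in `cssRHS`. -/
def field (β R : ℝ) (u : E2 → ℂ) (y : E2) : E2 := (2 * β * ‖u y‖ ^ 2) • Apot R u y + Jf u y

/-- For a suitable constant `c`, the field of `u` is bounded by `‖u‖` times this weight, which
satisfies the same weighted `L²` bounds as `u` and `∇u`. -/
def fieldWeight (c : ℝ≥0∞) (u : E2 → ℂ) (y : E2) : ℝ≥0∞ := c * ‖u y‖ₑ + 2 * ‖fderiv ℝ u y‖ₑ

variable {β : ℝ} {b m : ℝ≥0∞} {u : 𝓢(E2, ℂ)}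

@[fun_prop]
lemma measurable_enorm_schwartz (u : 𝓢(E2, ℂ)) : Measurable fun y => ‖u y‖ₑ :=
  u.continuous.enorm.measurable

@[fun_prop]
lemma measurable_enorm_fderiv_schwartz (u : 𝓢(E2, ℂ)) : Measurable fun y => ‖fderiv ℝ u y‖ₑ :=
  (SchwartzMap.fderivCLM ℝ E2 ℂ u).continuous.enorm.measurable

@[fun_prop]
lemma measurable_Apot_schwartz (R : ℝ) (u : 𝓢(E2, ℂ)) : Measurable (Apot R u) :=
  measurable_Apot R u.continuous

@[fun_prop]
lemma measurable_fieldWeight (c : ℝ≥0∞) (u : 𝓢(E2, ℂ)) : Measurable (fieldWeight c u) := by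
  unfold fieldWeight
  fun_prop

@[fun_prop]
lemma measurable_field (β R : ℝ) (u : 𝓢(E2, ℂ)) : Measurable (field β R u) := by
  have hJ : Continuous (Jf u) := by
    have hdu : Continuous (fderiv ℝ u) := (SchwartzMap.fderivCLM ℝ E2 ℂ u).continuous
    refine (PiLp.continuous_toLp 2 _).comp (continuous_pi fun j => ?_)
    fun_prop
  unfold field
  fun_prop

lemma enorm_two_mul_mul (β r : ℝ) : ‖2 * β * r‖ₑ = 2 * ‖β‖ₑ * ‖r‖ₑ := by
  rw [enorm_mul, enorm_mul, Real.enorm_of_nonneg zero_le_two, ofReal_ofNat]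

lemma enorm_field_le (hβ : ‖β‖ₑ ≤ b) (hu : H2 u ≤ m) (R : ℝ) (y : E2) :
    ‖field β R u y‖ₑ ≤ ‖u y‖ₑ * fieldWeight (2 * b * m ^ 2) u y :=
  calc ‖field β R u y‖ₑ ≤ 2 * ‖β‖ₑ * ‖u y‖ₑ ^ 2 * ‖Apot R u y‖ₑ + ‖Jf u y‖ₑ := by
        refine (enorm_add_le _ _).trans_eq ?_
        rw [enorm_smul, enorm_two_mul_mul, enorm_norm_sq]
    _ ≤ 2 * b * ‖u y‖ₑ ^ 2 * m ^ 2 + 2 * ‖u y‖ₑ * ‖fderiv ℝ u y‖ₑ := by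
        gcongr
        · exact (enorm_Apot_le R u y).trans (by gcongr)
        · exact enorm_current_le _ _
    _ = ‖u y‖ₑ * fieldWeight (2 * b * m ^ 2) u y := by
        rw [fieldWeight]
        ring

lemma invNorm_lconvolution_enorm_sq_le_sq (hu : H2 u ≤ m) (x : E2) :
    (invNorm ⋆ₗ fun y => ‖u y‖ₑ ^ 2) x ≤ m ^ 2 :=
  (invNorm_lconvolution_enorm_sq_le_H2_sq u x).trans (by gcongr)

lemma invNorm_lconvolution_enorm_fderiv_sq_le_sq (hu : H2 u ≤ m) (x : E2) :
    (invNorm ⋆ₗ fun y => ‖fderiv ℝ u y‖ₑ ^ 2) x ≤ m ^ 2 :=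
  (invNorm_lconvolution_enorm_fderiv_sq_le_H2_sq u x).trans (by gcongr)

lemma invNorm_lconvolution_fieldWeight_sq_le (hu : H2 u ≤ m) (c : ℝ≥0∞) (x : E2) :
    (invNorm ⋆ₗ fun y => fieldWeight c u y ^ 2) x ≤ ((c + 2) * m) ^ 2 := by
  rw [add_mul]
  exact lconvolution_add_sq_le measurable_invNorm (by fun_prop) (by fun_prop)
    (lconvolution_const_mul_sq_le measurable_invNorm (by fun_prop)
      (invNorm_lconvolution_enorm_sq_le_sq hu x) c)
    (lconvolution_const_mul_sq_le measurable_invNorm (by fun_prop)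
      (invNorm_lconvolution_enorm_fderiv_sq_le_sq hu x) 2)

lemma eLpNorm_fieldWeight_le (hu : H2 u ≤ m) (c : ℝ≥0∞) :
    eLpNorm (fieldWeight c u) 2 volume ≤ (c + 2) * m := by
  rw [add_mul]
  refine (eLpNorm_two_add_le (by fun_prop) (by fun_prop)).trans (add_le_add ?_ ?_)
  · refine (eLpNorm_two_le_of_enorm_le_mul (measurable_enorm_schwartz u) fun _ => le_rfl).trans ?_
    gcongr
    exact (eLpNorm_enorm u).trans_le ((eLpNorm_le_H2 u).trans hu)
  · refine (eLpNorm_two_le_of_enorm_le_mul (measurable_enorm_fderiv_schwartz u)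
      fun _ => le_rfl).trans ?_
    gcongr
    exact (eLpNorm_enorm _).trans_le ((eLpNorm_fderiv_le_H2 u).trans hu)

lemma invNorm_lconvolution_enorm_field_le (hβ : ‖β‖ₑ ≤ b) (hu : H2 u ≤ m) (R : ℝ) (x : E2) :
    (invNorm ⋆ₗ fun y => ‖field β R u y‖ₑ) x ≤ (2 * b * m ^ 2 + 2) * m ^ 2 := by
  refine (lconvolution_mono (fun y => enorm_field_le hβ hu R y) x).trans ?_
  rw [← ENNReal.pow_le_pow_left_iff two_ne_zero]
  calc _ ≤ _ := sq_lconvolution_mul_le measurable_invNorm (by fun_prop) (by fun_prop) x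
    _ ≤ m ^ 2 * ((2 * b * m ^ 2 + 2) * m) ^ 2 := by
        gcongr
        · exact invNorm_lconvolution_enorm_sq_le_sq hu x
        · exact invNorm_lconvolution_fieldWeight_sq_le hu _ x
    _ = ((2 * b * m ^ 2 + 2) * m ^ 2) ^ 2 := by ring

lemma eLpNorm_field_le (hβ : ‖β‖ₑ ≤ b) (hu : H2 u ≤ m) (R : ℝ) :
    eLpNorm (field β R u) 2 volume ≤ (2 * b * m ^ 2 + 2) * m ^ 2 :=
  calc eLpNorm (field β R u) 2 volume
      ≤ m * eLpNorm (fieldWeight (2 * b * m ^ 2) u) 2 volume :=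
        eLpNorm_two_le_of_enorm_le_mul (by fun_prop) fun y =>
          (enorm_field_le hβ hu R y).trans (by gcongr; exact (enorm_le_H2 u y).trans hu)
    _ ≤ m * ((2 * b * m ^ 2 + 2) * m) := by gcongr; exact eLpNorm_fieldWeight_le hu _
    _ = (2 * b * m ^ 2 + 2) * m ^ 2 := by ring

lemma enorm_convKv_field_le (hβ : ‖β‖ₑ ≤ b) (hu : H2 u ≤ m) (R : ℝ) (x : E2) :
    ‖convKv R (field β R u) x‖ₑ ≤ (2 * b * m ^ 2 + 2) * m ^ 2 := by
  rw [convKv_eq_convolution]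
  exact (enorm_convolution_le norm_innerSL_le_one (enorm_K_le R)).trans
    (invNorm_lconvolution_enorm_field_le hβ hu R x)

@[fun_prop]
lemma measurable_convKv_field (β R : ℝ) (u : 𝓢(E2, ℂ)) :
    Measurable (convKv R (field β R u)) := by
  rw [convKv_eq_convolution]
  exact (stronglyMeasurable_convolution (measurable_field β R u).stronglyMeasurable
    (measurable_K R)).measurable

end Field

section Difference

open scoped Gradient

variable {β S R : ℝ} {b m δ : ℝ≥0∞} {φ ψ : 𝓢(E2, ℂ)}

lemma enorm_norm_sq_sub_norm_sq_le {F : Type*} [NormedAddCommGroup F] (u v : F) :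
    ‖‖u‖ ^ 2 - ‖v‖ ^ 2‖ₑ ≤ ‖u - v‖ₑ * (‖u‖ₑ + ‖v‖ₑ) := by
  have hsum : ‖‖u‖ + ‖v‖‖ₑ = ‖u‖ₑ + ‖v‖ₑ := by
    rw [Real.enorm_of_nonneg (by positivity), ofReal_add (norm_nonneg u) (norm_nonneg v),
      ofReal_norm, ofReal_norm]
  have hdiff : ‖‖u‖ - ‖v‖‖ₑ ≤ ‖u - v‖ₑ := by
    rw [← ofReal_norm, ← ofReal_norm, Real.norm_eq_abs]
    exact ofReal_le_ofReal (abs_norm_sub_norm_le u v)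
  rw [sq_sub_sq, enorm_mul, hsum, mul_comm]
  gcongr

lemma enorm_Apot_sub_le (hSR : S ≤ R) (hm : m ≠ ⊤) (hφ : H2 φ ≤ m) (hψ : H2 ψ ≤ m) (x : E2) :
    ‖Apot S φ x - Apot R ψ x‖ₑ
      ≤ (invNorm ⋆ₗ fun y => ‖(φ - ψ) y‖ₑ * (‖φ y‖ₑ + ‖ψ y‖ₑ)) x
        + (invNormBall R ⋆ₗ fun y => ‖ψ y‖ₑ ^ 2) x := by
  have hfin {u : 𝓢(E2, ℂ)} (hu : H2 u ≤ m) : (invNorm ⋆ₗ fun y => ‖‖u y‖ ^ 2‖ₑ) x ≠ ⊤ := by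
    simp_rw [enorm_norm_sq]
    exact ne_top_of_le_ne_top (pow_ne_top hm) (invNorm_lconvolution_enorm_sq_le_sq hu x)
  have hmeas (u : 𝓢(E2, ℂ)) : StronglyMeasurable fun y => ‖u y‖ ^ 2 :=
    (u.continuous.norm.pow 2).stronglyMeasurable
  simp_rw [← enorm_norm_sq (ψ _), Apot, convKs_eq_convolution]
  refine (enorm_convolution_K_sub_le norm_lsmul_le_one hSR (hmeas φ) (hmeas ψ) (hfin hφ)
    (hfin hψ)).trans ?_
  gcongr
  exact (enorm_convolution_le norm_lsmul_le_one (enorm_K_le S)).trans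
    (lconvolution_mono (fun y => enorm_norm_sq_sub_norm_sq_le (φ y) (ψ y)) x)

lemma invNormBall_lconvolution_le_mul {f : E2 → ℝ≥0∞} {B : ℝ≥0∞} (hf : ∀ y, f y ≤ B) (R : ℝ)
    (x : E2) : (invNormBall R ⋆ₗ f) x ≤ 8 * B * .ofReal R := by
  calc (invNormBall R ⋆ₗ f) x ≤ (invNormBall R ⋆ₗ fun _ => B) x := lconvolution_mono hf x
    _ = (∫⁻ z, invNormBall R z) * B := by
        rw [lconvolution_def, lintegral_mul_const _ (measurable_invNormBall R)]
    _ ≤ 8 * .ofReal R * B := by gcongr; exact lintegral_invNormBall_le R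
    _ = 8 * B * .ofReal R := by ring

lemma eLpNorm_mul_Apot_sub_le (hSR : S ≤ R) (hm : m ≠ ⊤) (hφ : H2 φ ≤ m) (hψ : H2 ψ ≤ m)
    (hδ : eLpNorm ⇑(φ - ψ) 2 volume ≤ δ) (hRδ : .ofReal R ≤ δ) {g : E2 → ℝ≥0∞} {A : ℝ≥0∞}
    (hg : Measurable g) (hgA : ∀ x, (invNorm ⋆ₗ fun y => g y ^ 2) x ≤ A ^ 2)
    (hgnorm : eLpNorm g 2 volume ≤ A) :
    eLpNorm (fun x => g x * ‖Apot S φ x - Apot R ψ x‖ₑ) 2 volume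
      ≤ A * (2 * m + 8 * m ^ 2) * δ := by
  set q : E2 → ℝ≥0∞ := invNorm ⋆ₗ fun y => ‖(φ - ψ) y‖ₑ * (‖φ y‖ₑ + ‖ψ y‖ₑ) with hq
  have hpointwise (x : E2) : ‖Apot S φ x - Apot R ψ x‖ₑ ≤ q x + 8 * m ^ 2 * δ := by
    refine (enorm_Apot_sub_le hSR hm hφ hψ x).trans (add_le_add le_rfl ?_)
    refine (invNormBall_lconvolution_le_mul (B := m ^ 2) (fun y => ?_) R x).trans (by gcongr)
    gcongr
    exact (enorm_le_H2 ψ y).trans hψ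
  have hnonlocal : eLpNorm (fun x => g x * q x) 2 volume ≤ A * (m + m) * δ := by
    refine (eLpNorm_mul_lconvolution_mul_le measurable_invNorm invNorm_neg hg (by fun_prop)
      (by fun_prop) hgA fun x => lconvolution_add_sq_le measurable_invNorm (by fun_prop)
        (by fun_prop) (invNorm_lconvolution_enorm_sq_le_sq hφ x)
        (invNorm_lconvolution_enorm_sq_le_sq hψ x)).trans ?_
    gcongr
    exact (eLpNorm_enorm _).trans_le hδ
  have hqmeas : Measurable q := by
    rw [hq]
    fun_prop
  calc eLpNorm (fun x => g x * ‖Apot S φ x - Apot R ψ x‖ₑ) 2 volume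
      ≤ 1 * eLpNorm (fun x => g x * q x + 8 * m ^ 2 * δ * g x) 2 volume := by
        refine eLpNorm_two_le_of_enorm_le_mul (by fun_prop) fun x => ?_
        rw [enorm_eq_self, one_mul, mul_comm _ (g x), ← mul_add]
        gcongr
        exact hpointwise x
    _ ≤ A * (m + m) * δ + 8 * m ^ 2 * δ * A := by
        rw [one_mul]
        refine (eLpNorm_two_add_le (by fun_prop) (by fun_prop)).trans (add_le_add hnonlocal ?_)
        exact (eLpNorm_two_le_of_enorm_le_mul hg fun _ => le_rfl).trans (by gcongr)
    _ = A * (2 * m + 8 * m ^ 2) * δ := by ring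

/-- The Schwartz function `2 ⟪iψ, φ⟫`. Its gradient is the part of `J[φ] - J[ψ]` that is not
controlled by `φ - ψ` in `L²`, but it drops out after convolution with `K R`. -/
def crossTerm (φ ψ : 𝓢(E2, ℂ)) : 𝓢(E2, ℝ) := (2 : ℝ) • SchwartzMap.pairing innerIMul ψ φ

lemma coe_crossTerm (φ ψ : 𝓢(E2, ℂ)) :
    ⇑(crossTerm φ ψ) = fun y => 2 * ⟪Complex.I * ψ y, φ y⟫ := rfl

lemma enorm_field_sub_sub_gradient_le (hβ : ‖β‖ₑ ≤ b) (hψ : H2 ψ ≤ m) (S R : ℝ) (y : E2) :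
    ‖field β S φ y - field β R ψ y - ∇ (crossTerm φ ψ) y‖ₑ
      ≤ ‖φ y‖ₑ * ‖Apot S φ y - Apot R ψ y‖ₑ * (2 * b * ‖φ y‖ₑ)
        + ‖(φ - ψ) y‖ₑ * (fieldWeight (2 * b * m ^ 2) φ y + fieldWeight (2 * b * m ^ 2) ψ y) := by
  have hsplit : field β S φ y - field β R ψ y - ∇ (crossTerm φ ψ) y
      = (2 * β * ‖φ y‖ ^ 2) • (Apot S φ y - Apot R ψ y)
        + ((2 * β * (‖φ y‖ ^ 2 - ‖ψ y‖ ^ 2)) • Apot R ψ y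
          + current ((φ - ψ) y) (fderiv ℝ φ y + fderiv ℝ ψ y)) := by
    rw [sub_apply, coe_crossTerm,
      eq_sub_of_add_eq (Jf_sub_Jf φ.differentiableAt ψ.differentiableAt).symm, field, field]
    module
  rw [hsplit]
  refine (enorm_add_le _ _).trans (add_le_add ?_ ((enorm_add_le _ _).trans ?_))
  · rw [enorm_smul, enorm_two_mul_mul, enorm_norm_sq]
    calc _ ≤ 2 * b * ‖φ y‖ₑ ^ 2 * ‖Apot S φ y - Apot R ψ y‖ₑ := by gcongr
      _ = _ := by ring
  · rw [enorm_smul, enorm_two_mul_mul, fieldWeight, fieldWeight]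
    calc 2 * ‖β‖ₑ * ‖‖φ y‖ ^ 2 - ‖ψ y‖ ^ 2‖ₑ * ‖Apot R ψ y‖ₑ
          + ‖current ((φ - ψ) y) (fderiv ℝ φ y + fderiv ℝ ψ y)‖ₑ
        ≤ 2 * b * (‖(φ - ψ) y‖ₑ * (‖φ y‖ₑ + ‖ψ y‖ₑ)) * m ^ 2
          + 2 * ‖(φ - ψ) y‖ₑ * (‖fderiv ℝ φ y‖ₑ + ‖fderiv ℝ ψ y‖ₑ) := by
          gcongr
          · exact enorm_norm_sq_sub_norm_sq_le (φ y) (ψ y)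
          · exact (enorm_Apot_le R ψ y).trans (by gcongr)
          · exact (enorm_current_le _ _).trans (by gcongr; exact enorm_add_le (fderiv ℝ φ y) _)
      _ = _ := by ring

lemma invNorm_le_invNormBall_add_one (z : E2) : invNorm z ≤ invNormBall 1 z + 1 := by
  rw [invNormBall]
  split_ifs with hz
  · exact le_self_add
  · rw [zero_add, invNorm, ENNReal.inv_le_one, ← ofReal_norm, one_le_ofReal]
    exact not_lt.1 hz

lemma invNorm_lconvolution_enorm_schwartz_ne_top {F : Type*} [NormedAddCommGroup F]
    [NormedSpace ℝ F] (f : 𝓢(E2, F)) (x : E2) : (invNorm ⋆ₗ fun y => ‖f y‖ₑ) x ≠ ⊤ := by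
  have hsup (y : E2) : ‖f y‖ₑ ≤ ‖f.toBoundedContinuousFunction‖ₑ := by
    rw [← ofReal_norm, ← ofReal_norm]
    exact ofReal_le_ofReal (f.toBoundedContinuousFunction.norm_coe_le_norm y)
  refine ne_top_of_le_ne_top (b := 8 * ‖f.toBoundedContinuousFunction‖ₑ * .ofReal 1
    + ∫⁻ y, ‖f y‖ₑ) ?_ ?_
  · have : ∫⁻ y, ‖f y‖ₑ ≠ ⊤ := (f.integrable (μ := volume)).2.ne
    finiteness
  calc (invNorm ⋆ₗ fun y => ‖f y‖ₑ) x
      ≤ ∫⁻ y, (invNormBall 1 (x - y) * ‖f y‖ₑ + ‖f y‖ₑ) := by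
        rw [lconvolution_apply_sub]
        refine lintegral_mono fun y => ?_
        grw [invNorm_le_invNormBall_add_one, add_mul, one_mul]
    _ = (invNormBall 1 ⋆ₗ fun y => ‖f y‖ₑ) x + ∫⁻ y, ‖f y‖ₑ := by
        rw [lintegral_add_right _ f.continuous.enorm.measurable, lconvolution_apply_sub]
    _ ≤ _ := by
        gcongr
        exact invNormBall_lconvolution_le_mul hsup 1 x

lemma sub_gradient_convolution_K {F : E2 → E2} {x : E2}
    (hF : ConvolutionExistsAt F (K R) x (innerSL ℝ)) (h : 𝓢(E2, ℝ)) :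
    ((F - ∇ h) ⋆[innerSL ℝ] K R) x = (F ⋆[innerSL ℝ] K R) x := by
  have hcont : Continuous (∇ h) :=
    (InnerProductSpace.toDual ℝ E2).symm.continuous.comp (SchwartzMap.fderivCLM ℝ E2 ℝ h).continuous
  have hfin : (invNorm ⋆ₗ fun y => ‖∇ h y‖ₑ) x ≠ ⊤ := by
    have henorm (y : E2) : ‖∇ h y‖ₑ = ‖SchwartzMap.fderivCLM ℝ E2 ℝ h y‖ₑ := by
      rw [gradient, LinearIsometryEquiv.enorm_map]
      rfl
    simp_rw [henorm]
    exact invNorm_lconvolution_enorm_schwartz_ne_top _ x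
  have hgrad : ConvolutionExistsAt (∇ h) (K R) x (innerSL ℝ) :=
    convolutionExistsAt_of_lconvolution_ne_top norm_innerSL_le_one hcont.stronglyMeasurable
      (measurable_K R) (enorm_K_le R) hfin
  have hzero : (∇ h ⋆[innerSL ℝ] K R) x = 0 :=
    congrFun (gradient_convolution_K_eq_zero (h.smooth 1) R) x
  rw [← sub_zero ((F ⋆[innerSL ℝ] K R) x), ← hzero, convolution_def, convolution_def,
    convolution_def, ← integral_sub hF hgrad]
  simp only [Pi.sub_apply, map_sub, sub_apply]

lemma enorm_convKv_field_sub_le (hSR : S ≤ R) (hb : b ≠ ⊤) (hm : m ≠ ⊤) (hβ : ‖β‖ₑ ≤ b)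
    (hφ : H2 φ ≤ m) (hψ : H2 ψ ≤ m) (x : E2) :
    ‖convKv S (field β S φ) x - convKv R (field β R ψ) x‖ₑ
      ≤ (invNorm ⋆ₗ fun y => ‖φ y‖ₑ * ‖Apot S φ y - Apot R ψ y‖ₑ * (2 * b * ‖φ y‖ₑ)) x
        + (invNorm ⋆ₗ fun y => ‖(φ - ψ) y‖ₑ
            * (fieldWeight (2 * b * m ^ 2) φ y + fieldWeight (2 * b * m ^ 2) ψ y)) x
        + (invNormBall R ⋆ₗ fun y => ‖field β R ψ y‖ₑ) x := by
  have hfin {u : 𝓢(E2, ℂ)} (hu : H2 u ≤ m) (r : ℝ) :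
      (invNorm ⋆ₗ fun y => ‖field β r u y‖ₑ) x ≠ ⊤ :=
    ne_top_of_le_ne_top (by finiteness) (invNorm_lconvolution_enorm_field_le hβ hu r x)
  have hexists {u : 𝓢(E2, ℂ)} (hu : H2 u ≤ m) (r : ℝ) :
      ConvolutionExistsAt (field β r u) (K S) x (innerSL ℝ) :=
    convolutionExistsAt_of_lconvolution_ne_top norm_innerSL_le_one
      (measurable_field β r u).stronglyMeasurable (measurable_K S) (enorm_K_le S) (hfin hu r)
  have hsub : ConvolutionExistsAt (field β S φ - field β R ψ) (K S) x (innerSL ℝ) := by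
    simpa only [ConvolutionExistsAt, Pi.sub_def, map_sub, sub_apply] using
      (hexists hφ S).sub (hexists hψ R)
  rw [convKv_eq_convolution, convKv_eq_convolution]
  refine (enorm_convolution_K_sub_le norm_innerSL_le_one hSR
    (measurable_field β S φ).stronglyMeasurable (measurable_field β R ψ).stronglyMeasurable
    (hfin hφ S) (hfin hψ R)).trans (add_le_add ?_ le_rfl)
  rw [← sub_gradient_convolution_K hsub (crossTerm φ ψ)]
  refine (enorm_convolution_le norm_innerSL_le_one (enorm_K_le S)).trans ?_
  rw [← Pi.add_apply, ← lconvolution_add measurable_invNorm (by fun_prop)]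
  exact lconvolution_mono (enorm_field_sub_sub_gradient_le hβ hψ S R) x

lemma eLpNorm_enorm_schwartz_le (hφ : H2 φ ≤ m) : eLpNorm (fun y => ‖φ y‖ₑ) 2 volume ≤ m :=
  (eLpNorm_enorm φ).trans_le ((eLpNorm_le_H2 φ).trans hφ)

lemma eLpNorm_mul_lconvolution_mul_Apot_sub_le (hSR : S ≤ R) (hm : m ≠ ⊤) (hφ : H2 φ ≤ m)
    (hψ : H2 ψ ≤ m) (hδ : eLpNorm ⇑(φ - ψ) 2 volume ≤ δ) (hRδ : .ofReal R ≤ δ) (c : ℝ≥0∞) :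
    eLpNorm (fun x => ‖φ x‖ₑ *
        (invNorm ⋆ₗ fun y => ‖φ y‖ₑ * ‖Apot S φ y - Apot R ψ y‖ₑ * (c * ‖φ y‖ₑ)) x) 2 volume
      ≤ m * (c * m) * (m * (2 * m + 8 * m ^ 2) * δ) := by
  have hφκ := invNorm_lconvolution_enorm_sq_le_sq hφ
  refine (eLpNorm_mul_lconvolution_mul_le measurable_invNorm invNorm_neg (by fun_prop)
    (by fun_prop) (by fun_prop) hφκ fun x =>
      lconvolution_const_mul_sq_le measurable_invNorm (by fun_prop) (hφκ x) c).trans ?_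
  gcongr
  exact eLpNorm_mul_Apot_sub_le hSR hm hφ hψ hδ hRδ (by fun_prop) hφκ (eLpNorm_enorm_schwartz_le hφ)

lemma eLpNorm_mul_lconvolution_sub_mul_fieldWeight_le (hφ : H2 φ ≤ m) (hψ : H2 ψ ≤ m)
    (hδ : eLpNorm ⇑(φ - ψ) 2 volume ≤ δ) (c : ℝ≥0∞) :
    eLpNorm (fun x => ‖φ x‖ₑ *
        (invNorm ⋆ₗ fun y => ‖(φ - ψ) y‖ₑ * (fieldWeight c φ y + fieldWeight c ψ y)) x) 2 volume
      ≤ m * ((c + 2) * m + (c + 2) * m) * δ := by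
  refine (eLpNorm_mul_lconvolution_mul_le measurable_invNorm invNorm_neg (by fun_prop)
    (by fun_prop) (by fun_prop) (invNorm_lconvolution_enorm_sq_le_sq hφ) fun x =>
      lconvolution_add_sq_le measurable_invNorm (by fun_prop) (by fun_prop)
        (invNorm_lconvolution_fieldWeight_sq_le hφ c x)
        (invNorm_lconvolution_fieldWeight_sq_le hψ c x)).trans ?_
  gcongr
  exact (eLpNorm_enorm _).trans_le hδ

lemma eLpNorm_invNormBall_lconvolution_field_le (hβ : ‖β‖ₑ ≤ b) (hψ : H2 ψ ≤ m) (R : ℝ) :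
    eLpNorm (invNormBall R ⋆ₗ fun y => ‖field β R ψ y‖ₑ) 2 volume
      ≤ 8 * .ofReal R * ((2 * b * m ^ 2 + 2) * m ^ 2) := by
  refine (eLpNorm_lconvolution_le (measurable_invNormBall R) (invNormBall_neg R)
    (by fun_prop)).trans ?_
  gcongr
  · exact lintegral_invNormBall_le R
  · exact (eLpNorm_enorm _).trans_le (eLpNorm_field_le hβ hψ R)

lemma eLpNorm_mul_convKv_field_sub_le (hSR : S ≤ R) (hb : b ≠ ⊤) (hm : m ≠ ⊤) (hβ : ‖β‖ₑ ≤ b)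
    (hφ : H2 φ ≤ m) (hψ : H2 ψ ≤ m) (hδ : eLpNorm ⇑(φ - ψ) 2 volume ≤ δ) (hRδ : .ofReal R ≤ δ) :
    eLpNorm (fun x => ‖φ x‖ₑ * ‖convKv S (field β S φ) x - convKv R (field β R ψ) x‖ₑ) 2 volume
      ≤ (2 * b * m ^ 3 * (2 * m + 8 * m ^ 2)
          + (2 * b * m ^ 2 + 2) * (2 * m ^ 2 + 8 * m ^ 3)) * δ := by
  set c := 2 * b * m ^ 2
  set p : E2 → ℝ≥0∞ := fun x => ‖φ x‖ₑ *
    (invNorm ⋆ₗ fun y => ‖φ y‖ₑ * ‖Apot S φ y - Apot R ψ y‖ₑ * (2 * b * ‖φ y‖ₑ)) x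
  set q : E2 → ℝ≥0∞ := fun x => ‖φ x‖ₑ *
    (invNorm ⋆ₗ fun y => ‖(φ - ψ) y‖ₑ * (fieldWeight c φ y + fieldWeight c ψ y)) x
  set r : E2 → ℝ≥0∞ := invNormBall R ⋆ₗ fun y => ‖field β R ψ y‖ₑ
  have hp : Measurable p := by fun_prop
  have hq : Measurable q := by fun_prop
  have hr : Measurable r := by fun_prop
  calc _ ≤ 1 * eLpNorm (fun x => p x + q x + m * r x) 2 volume := by
        refine eLpNorm_two_le_of_enorm_le_mul (by fun_prop) fun x => ?_
        rw [enorm_eq_self, one_mul]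
        grw [enorm_convKv_field_sub_le hSR hb hm hβ hφ hψ x, mul_add, mul_add]
        gcongr
        exact (enorm_le_H2 φ x).trans hφ
    _ ≤ eLpNorm p 2 volume + eLpNorm q 2 volume + m * eLpNorm r 2 volume := by
        grw [one_mul, eLpNorm_two_add_le (by fun_prop) (by fun_prop), eLpNorm_two_add_le hp hq]
        gcongr
        exact eLpNorm_two_le_of_enorm_le_mul hr fun _ => le_rfl
    _ ≤ m * (2 * b * m) * (m * (2 * m + 8 * m ^ 2) * δ) + m * ((c + 2) * m + (c + 2) * m) * δ
          + m * (8 * δ * ((c + 2) * m ^ 2)) := by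
        gcongr
        · exact eLpNorm_mul_lconvolution_mul_Apot_sub_le hSR hm hφ hψ hδ hRδ _
        · exact eLpNorm_mul_lconvolution_sub_mul_fieldWeight_le hφ hψ hδ c
        · exact (eLpNorm_invNormBall_lconvolution_field_le hβ hψ R).trans (by gcongr)
    _ = _ := by ring

end Difference

section Remainder

variable {β S R : ℝ} {b m δ : ℝ≥0∞} {φ ψ : 𝓢(E2, ℂ)}

/-- What remains of `cssRHS β S φ - cssRHS β R ψ` when the operator linearized at `ψ`, which
preserves the `L²` norm, is applied to `φ - ψ`. -/
def remainder (β S R : ℝ) (φ ψ : 𝓢(E2, ℂ)) (x : E2) : ℂ :=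
  -(2 * β * Complex.I * fderiv ℝ φ x (Apot S φ x - Apot R ψ x))
    + (↑(β ^ 2 * (‖Apot S φ x‖ ^ 2 - ‖Apot R ψ x‖ ^ 2)) : ℂ) * φ x
    - (↑(β * (convKv S (field β S φ) x - convKv R (field β R ψ) x)) : ℂ) * φ x

/-- The Lipschitz constant of the coupling terms on the ball of radius `m` of `H²`, for
`|β| ≤ b`. -/
def couplingConst (b m : ℝ≥0∞) : ℝ≥0∞ :=
  (2 * b + 2 * b ^ 2 * m ^ 2) * (m * (2 * m + 8 * m ^ 2))
    + b * (2 * b * m ^ 3 * (2 * m + 8 * m ^ 2)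
      + (2 * b * m ^ 2 + 2) * (2 * m ^ 2 + 8 * m ^ 3))

lemma couplingConst_ne_top (hb : b ≠ ⊤) (hm : m ≠ ⊤) : couplingConst b m ≠ ⊤ := by
  unfold couplingConst
  finiteness

lemma enorm_coe_real (r : ℝ) : ‖(r : ℂ)‖ₑ = ‖r‖ₑ := by
  rw [← ofReal_norm, ← ofReal_norm, Complex.norm_real]

lemma enorm_I_mul (z : ℂ) : ‖Complex.I * z‖ₑ = ‖z‖ₑ := by
  rw [enorm_mul, ← ofReal_norm, Complex.norm_I, ofReal_one, one_mul]

lemma enorm_two_mul_coe_mul_I_mul (β : ℝ) (z : ℂ) :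
    ‖2 * β * Complex.I * z‖ₑ = 2 * ‖β‖ₑ * ‖z‖ₑ := by
  have h : 2 * β * Complex.I * z = (2 * β * 1 : ℝ) * (Complex.I * z) := by
    push_cast
    ring
  rw [h, enorm_mul, enorm_coe_real, enorm_two_mul_mul, enorm_one, mul_one, enorm_I_mul]

lemma enorm_remainder_le (hβ : ‖β‖ₑ ≤ b) (hφ : H2 φ ≤ m) (hψ : H2 ψ ≤ m) (S R : ℝ) (x : E2) :
    ‖remainder β S R φ ψ x‖ₑ
      ≤ 2 * b * (‖fderiv ℝ φ x‖ₑ * ‖Apot S φ x - Apot R ψ x‖ₑ)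
        + 2 * b ^ 2 * m ^ 2 * (‖φ x‖ₑ * ‖Apot S φ x - Apot R ψ x‖ₑ)
        + b * (‖φ x‖ₑ * ‖convKv S (field β S φ) x - convKv R (field β R ψ) x‖ₑ) := by
  have hA {u : 𝓢(E2, ℂ)} (hu : H2 u ≤ m) (r : ℝ) : ‖Apot r u x‖ₑ ≤ m ^ 2 :=
    (enorm_Apot_le r u x).trans (by gcongr)
  refine enorm_sub_le.trans (add_le_add ((enorm_add_le _ _).trans (add_le_add ?_ ?_)) ?_)
  · rw [enorm_neg, enorm_two_mul_coe_mul_I_mul]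
    gcongr
    exact ContinuousLinearMap.le_opENorm _ _
  · rw [enorm_mul, enorm_coe_real, enorm_mul, enorm_pow]
    calc ‖β‖ₑ ^ 2 * ‖‖Apot S φ x‖ ^ 2 - ‖Apot R ψ x‖ ^ 2‖ₑ * ‖φ x‖ₑ
        ≤ b ^ 2 * (‖Apot S φ x - Apot R ψ x‖ₑ * (m ^ 2 + m ^ 2)) * ‖φ x‖ₑ := by
          gcongr
          exact (enorm_norm_sq_sub_norm_sq_le _ _).trans
            (by gcongr; exacts [hA hφ S, hA hψ R])
      _ = _ := by ring
  · rw [enorm_mul, enorm_coe_real, enorm_mul, mul_assoc, mul_comm ‖φ x‖ₑ]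
    gcongr

lemma eLpNorm_remainder_le (hSR : S ≤ R) (hb : b ≠ ⊤) (hm : m ≠ ⊤) (hβ : ‖β‖ₑ ≤ b)
    (hφ : H2 φ ≤ m) (hψ : H2 ψ ≤ m) (hδ : eLpNorm ⇑(φ - ψ) 2 volume ≤ δ) (hRδ : .ofReal R ≤ δ) :
    eLpNorm (remainder β S R φ ψ) 2 volume ≤ couplingConst b m * δ := by
  set p : E2 → ℝ≥0∞ := fun x => ‖fderiv ℝ φ x‖ₑ * ‖Apot S φ x - Apot R ψ x‖ₑ
  set q : E2 → ℝ≥0∞ := fun x => ‖φ x‖ₑ * ‖Apot S φ x - Apot R ψ x‖ₑ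
  set r : E2 → ℝ≥0∞ := fun x =>
    ‖φ x‖ₑ * ‖convKv S (field β S φ) x - convKv R (field β R ψ) x‖ₑ
  have hp : Measurable p := by fun_prop
  have hq : Measurable q := by fun_prop
  have hr : Measurable r := by fun_prop
  have hscale {f : E2 → ℝ≥0∞} (hf : Measurable f) (c : ℝ≥0∞) :
      eLpNorm (fun x => c * f x) 2 volume ≤ c * eLpNorm f 2 volume :=
    eLpNorm_two_le_of_enorm_le_mul hf fun _ => le_rfl
  calc eLpNorm (remainder β S R φ ψ) 2 volume
      ≤ 1 * eLpNorm (fun x => 2 * b * p x + 2 * b ^ 2 * m ^ 2 * q x + b * r x) 2 volume :=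
        eLpNorm_two_le_of_enorm_le_mul (by fun_prop) fun x =>
          (enorm_remainder_le hβ hφ hψ S R x).trans_eq (one_mul _).symm
    _ ≤ 2 * b * eLpNorm p 2 volume + 2 * b ^ 2 * m ^ 2 * eLpNorm q 2 volume
          + b * eLpNorm r 2 volume := by
        grw [one_mul, eLpNorm_two_add_le (by fun_prop) (by fun_prop),
          eLpNorm_two_add_le (by fun_prop) (by fun_prop), hscale hp, hscale hq, hscale hr]
    _ ≤ 2 * b * (m * (2 * m + 8 * m ^ 2) * δ) + 2 * b ^ 2 * m ^ 2 * (m * (2 * m + 8 * m ^ 2) * δ)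
          + b * ((2 * b * m ^ 3 * (2 * m + 8 * m ^ 2)
            + (2 * b * m ^ 2 + 2) * (2 * m ^ 2 + 8 * m ^ 3)) * δ) := by
        gcongr
        · exact eLpNorm_mul_Apot_sub_le hSR hm hφ hψ hδ hRδ (by fun_prop)
            (invNorm_lconvolution_enorm_fderiv_sq_le_sq hφ)
            ((eLpNorm_enorm _).trans_le ((eLpNorm_fderiv_le_H2 φ).trans hφ))
        · exact eLpNorm_mul_Apot_sub_le hSR hm hφ hψ hδ hRδ (by fun_prop)
            (invNorm_lconvolution_enorm_sq_le_sq hφ) (eLpNorm_enorm_schwartz_le hφ)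
        · exact eLpNorm_mul_convKv_field_sub_le hSR hb hm hβ hφ hψ hδ hRδ
    _ = couplingConst b m * δ := by
        unfold couplingConst
        ring

lemma measurable_remainder (β S R : ℝ) (φ ψ : 𝓢(E2, ℂ)) :
    Measurable (remainder β S R φ ψ) := by
  have hφ : Measurable φ := φ.continuous.measurable
  have hdφ : Measurable fun x => fderiv ℝ φ x (Apot S φ x - Apot R ψ x) :=
    isBoundedBilinearMap_apply.continuous.measurable.comp
      ((SchwartzMap.fderivCLM ℝ E2 ℂ φ).continuous.measurable.prodMk (by fun_prop))
  unfold remainder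
  fun_prop

lemma lap_sub (φ ψ : 𝓢(E2, ℂ)) (x : E2) : lap ⇑(φ - ψ) x = lap φ x - lap ψ x := by
  simp only [lap_eq_lineDerivOp, ← Finset.sum_sub_distrib,
    ← LineDeriv.lineDerivOpCLM_apply (R := ℝ), map_sub, sub_apply]

lemma fderiv_schwartz_sub (φ ψ : 𝓢(E2, ℂ)) (x : E2) :
    fderiv ℝ ⇑(φ - ψ) x = fderiv ℝ φ x - fderiv ℝ ψ x :=
  fderiv_sub φ.differentiableAt ψ.differentiableAt

lemma cssRHS_eq (β R : ℝ) (u : E2 → ℂ) (x : E2) :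
    cssRHS β R u x
      = -(lap u x) - 2 * β * Complex.I * fderiv ℝ u x (Apot R u x)
        + (↑(β ^ 2 * ‖Apot R u x‖ ^ 2) : ℂ) * u x
        - (β : ℂ) * (↑(convKv R (field β R u) x) : ℂ) * u x :=
  rfl

lemma cssRHS_sub_cssRHS (β S R : ℝ) (φ ψ : 𝓢(E2, ℂ)) (x : E2) :
    cssRHS β S φ x - cssRHS β R ψ x
      = -lap ⇑(φ - ψ) x - (2 * β) • (Complex.I * fderiv ℝ ⇑(φ - ψ) x (Apot R ψ x))
        + (β ^ 2 * ‖Apot R ψ x‖ ^ 2 - β * convKv R (field β R ψ) x) • (φ - ψ) x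
        + remainder β S R φ ψ x := by
  simp only [cssRHS_eq, remainder, lap_sub, fderiv_schwartz_sub, sub_apply, map_sub,
    Complex.real_smul]
  push_cast
  ring

lemma inner_I_mul_I_mul (a b : ℂ) : ⟪Complex.I * a, Complex.I * b⟫ = ⟪a, b⟫ := by
  simp [Complex.inner]

lemma inner_I_mul_cssRHS_sub (β S R : ℝ) (φ ψ : 𝓢(E2, ℂ)) (x : E2) :
    2 * ⟪Complex.I * (φ - ψ) x, cssRHS β S φ x - cssRHS β R ψ x⟫
      = -2 * ⟪Complex.I * (φ - ψ) x, lap ⇑(φ - ψ) x⟫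
        - 2 * β * fderiv ℝ (fun y => ‖(φ - ψ) y‖ ^ 2) x (Apot R ψ x)
        + 2 * ⟪Complex.I * (φ - ψ) x, remainder β S R φ ψ x⟫ := by
  rw [cssRHS_sub_cssRHS, inner_add_right, inner_add_right, inner_sub_right, inner_neg_right,
    real_inner_smul_right, real_inner_smul_right, inner_I_mul_I_mul, inner_I_mul_self,
    fderiv_norm_sq_apply]
  ring

end Remainder

section SquareIntegrable

variable {X F : Type*} [MeasurableSpace X] {μ : Measure X} [NormedAddCommGroup F]

lemma integral_norm_sq {f : X → F} (hf : AEStronglyMeasurable f μ) :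
    ∫ x, ‖f x‖ ^ 2 ∂μ = (eLpNorm f 2 μ).toReal ^ 2 := by
  rw [← toReal_pow, eLpNorm_two_sq,
    integral_eq_lintegral_of_nonneg_ae (.of_forall fun x => by positivity) (by fun_prop)]
  simp_rw [ofReal_pow (norm_nonneg _), ofReal_norm]

variable [InnerProductSpace ℝ F]

lemma abs_two_mul_inner_le (a b : F) : |2 * ⟪a, b⟫| ≤ ‖a‖ ^ 2 + ‖b‖ ^ 2 := by
  rw [abs_mul, abs_two]
  nlinarith [abs_real_inner_le_norm a b, two_mul_le_add_sq ‖a‖ ‖b‖]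

lemma enorm_two_mul_inner_le (a b : F) : ‖2 * ⟪a, b⟫‖ₑ ≤ ‖a‖ₑ ^ 2 + ‖b‖ₑ ^ 2 := by
  rw [← ofReal_norm, ← ofReal_norm, ← ofReal_norm, ← ofReal_pow (norm_nonneg _),
    ← ofReal_pow (norm_nonneg _), ← ofReal_add (by positivity) (by positivity)]
  exact ofReal_le_ofReal (abs_two_mul_inner_le a b)

lemma integrable_two_mul_inner {f g : X → F} (hf : MemLp f 2 μ) (hg : MemLp g 2 μ) :
    Integrable (fun x => 2 * ⟪f x, g x⟫) μ :=
  ((hf.integrable_norm_pow two_ne_zero).add (hg.integrable_norm_pow two_ne_zero)).mono'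
    ((hf.1.inner hg.1).const_mul 2) (.of_forall fun _ => abs_two_mul_inner_le _ _)

end SquareIntegrable

section EnergyEstimate

variable {β S R : ℝ} {b m : ℝ≥0∞} {φ ψ : 𝓢(E2, ℂ)}

lemma eLpNorm_remainder_le_add (hSR : S ≤ R) (hb : b ≠ ⊤) (hm : m ≠ ⊤) (hβ : ‖β‖ₑ ≤ b)
    (hφ : H2 φ ≤ m) (hψ : H2 ψ ≤ m) :
    eLpNorm (remainder β S R φ ψ) 2 volume
      ≤ couplingConst b m * (eLpNorm ⇑(φ - ψ) 2 volume + .ofReal R) :=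
  eLpNorm_remainder_le hSR hb hm hβ hφ hψ le_self_add le_add_self

lemma memLp_remainder (hSR : S ≤ R) (hb : b ≠ ⊤) (hm : m ≠ ⊤) (hβ : ‖β‖ₑ ≤ b)
    (hφ : H2 φ ≤ m) (hψ : H2 ψ ≤ m) : MemLp (remainder β S R φ ψ) 2 := by
  refine ⟨(measurable_remainder β S R φ ψ).aestronglyMeasurable,
    (eLpNorm_remainder_le_add hSR hb hm hβ hφ hψ).trans_lt ?_⟩
  have hw : eLpNorm ⇑(φ - ψ) 2 volume < ⊤ := (φ - ψ).eLpNorm_lt_top 2 volume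
  exact mul_lt_top (couplingConst_ne_top hb hm).lt_top (add_lt_top.2 ⟨hw, ofReal_lt_top⟩)

lemma integral_norm_remainder_sq_le (hSR : S ≤ R) (hb : b ≠ ⊤) (hm : m ≠ ⊤) (hβ : ‖β‖ₑ ≤ b)
    (hφ : H2 φ ≤ m) (hψ : H2 ψ ≤ m) :
    ∫ x, ‖remainder β S R φ ψ x‖ ^ 2
      ≤ 2 * (couplingConst b m).toReal ^ 2 * (R ^ 2 + ∫ x, ‖(φ - ψ) x‖ ^ 2) := by
  have hw : eLpNorm ⇑(φ - ψ) 2 volume ≠ ⊤ := ((φ - ψ).eLpNorm_lt_top 2 volume).ne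
  have hbound := mul_ne_top (couplingConst_ne_top hb hm) (add_ne_top.2 ⟨hw, ofReal_ne_top (r := R)⟩)
  have hrem := toReal_mono hbound (eLpNorm_remainder_le_add hSR hb hm hβ hφ hψ)
  rw [toReal_mul, toReal_add hw ofReal_ne_top, toReal_ofReal'] at hrem
  rw [integral_norm_sq (memLp_remainder hSR hb hm hβ hφ hψ).1,
    integral_norm_sq ((φ - ψ).memLp 2 volume).1]
  set c := (couplingConst b m).toReal
  set n := (eLpNorm ⇑(φ - ψ) 2 volume).toReal
  have hR : max R 0 ^ 2 ≤ R ^ 2 :=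
    (pow_le_pow_left₀ (le_max_right _ _) (max_le (le_abs_self R) (abs_nonneg R)) 2).trans_eq
      (sq_abs R)
  calc (eLpNorm (remainder β S R φ ψ) 2 volume).toReal ^ 2
      ≤ (c * (n + max R 0)) ^ 2 := by gcongr
    _ = c ^ 2 * (n + max R 0) ^ 2 := mul_pow ..
    _ ≤ c ^ 2 * (2 * (n ^ 2 + R ^ 2)) := by
        gcongr
        exact add_sq_le.trans (by gcongr)
    _ = 2 * c ^ 2 * (R ^ 2 + n ^ 2) := by ring

lemma invNorm_lconvolution_enorm_norm_sq_le_sq (hψ : H2 ψ ≤ m) (x : E2) :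
    (invNorm ⋆ₗ fun y => ‖‖ψ y‖ ^ 2‖ₑ) x ≤ m ^ 2 := by
  simpa only [enorm_norm_sq] using invNorm_lconvolution_enorm_sq_le_sq hψ x

/-- The Laplacian and the transport term drop out since they are skew-adjoint on `L²`, the latter
because the vector potential is divergence free. -/
lemma integral_inner_I_mul_cssRHS_sub (hSR : S ≤ R) (hb : b ≠ ⊤) (hm : m ≠ ⊤) (hβ : ‖β‖ₑ ≤ b)
    (hφ : H2 φ ≤ m) (hψ : H2 ψ ≤ m) :
    ∫ x, 2 * ⟪Complex.I * (φ - ψ) x, cssRHS β S φ x - cssRHS β R ψ x⟫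
      = ∫ x, 2 * ⟪Complex.I * (φ - ψ) x, remainder β S R φ ψ x⟫ := by
  have hrem : Integrable fun x => 2 * ⟪Complex.I * (φ - ψ) x, remainder β S R φ ψ x⟫ :=
    integrable_two_mul_inner (((φ - ψ).memLp 2).const_mul _) (memLp_remainder hSR hb hm hβ hφ hψ)
  have hsq : ContDiff ℝ 1 fun y => ‖(φ - ψ) y‖ ^ 2 := ((φ - ψ).smooth 1).norm_sq ℝ
  have hdens : Continuous fun y => ‖ψ y‖ ^ 2 := by fun_prop
  have hlap := (integrable_inner_I_mul_lap (φ - ψ)).const_mul (-2)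
  have htransport : Integrable fun x =>
      2 * β * fderiv ℝ (fun y => ‖(φ - ψ) y‖ ^ 2) x (Apot R ψ x) :=
    (integrable_fderiv_apply_convKs hsq (integrable_fderiv_norm_sq _) hdens
      (invNorm_lconvolution_enorm_norm_sq_le_sq hψ) (pow_ne_top hm) R).const_mul _
  have htransport_zero : ∫ x, fderiv ℝ (fun y => ‖(φ - ψ) y‖ ^ 2) x (Apot R ψ x) = 0 :=
    integral_fderiv_apply_convKs_eq_zero hsq (integrable_fderiv_norm_sq _) hdens
      (invNorm_lconvolution_enorm_norm_sq_le_sq hψ) (pow_ne_top hm) R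
  simp_rw [inner_I_mul_cssRHS_sub]
  rw [integral_add (by exact hlap.sub htransport) hrem, integral_sub hlap htransport,
    integral_const_mul, integral_const_mul, integral_inner_I_mul_lap_eq_zero, htransport_zero]
  ring

/-- The rate of growth of `‖φ - ψ‖₂²`, for `|β| ≤ b` and `H²` norms at most `m`. -/
def growthConst (b m : ℝ≥0∞) : ℝ := 1 + 2 * (couplingConst b m).toReal ^ 2

lemma one_le_growthConst (b m : ℝ≥0∞) : 1 ≤ growthConst b m :=
  le_add_of_nonneg_right (by positivity)

lemma integral_inner_I_mul_cssRHS_sub_le (hSR : S ≤ R) (hb : b ≠ ⊤) (hm : m ≠ ⊤) (hβ : ‖β‖ₑ ≤ b)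
    (hφ : H2 φ ≤ m) (hψ : H2 ψ ≤ m) :
    ∫ x, 2 * ⟪Complex.I * (φ - ψ) x, cssRHS β S φ x - cssRHS β R ψ x⟫
      ≤ growthConst b m * (∫ x, ‖(φ - ψ) x‖ ^ 2) + growthConst b m * R ^ 2 := by
  have hw := (φ - ψ).memLp 2
  have hrem := memLp_remainder hSR hb hm hβ hφ hψ
  have hnorm (x : E2) : ‖Complex.I * (φ - ψ) x‖ ^ 2 = ‖(φ - ψ) x‖ ^ 2 := by
    rw [norm_mul, Complex.norm_I, one_mul]
  calc ∫ x, 2 * ⟪Complex.I * (φ - ψ) x, cssRHS β S φ x - cssRHS β R ψ x⟫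
      = ∫ x, 2 * ⟪Complex.I * (φ - ψ) x, remainder β S R φ ψ x⟫ :=
        integral_inner_I_mul_cssRHS_sub hSR hb hm hβ hφ hψ
    _ ≤ ∫ x, (‖(φ - ψ) x‖ ^ 2 + ‖remainder β S R φ ψ x‖ ^ 2) :=
        integral_mono (integrable_two_mul_inner (hw.const_mul _) hrem)
          ((hw.integrable_norm_pow two_ne_zero).add (hrem.integrable_norm_pow two_ne_zero))
          fun x => ((le_abs_self _).trans (abs_two_mul_inner_le _ _)).trans_eq (by rw [hnorm])
    _ = (∫ x, ‖(φ - ψ) x‖ ^ 2) + ∫ x, ‖remainder β S R φ ψ x‖ ^ 2 :=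
        integral_add (hw.integrable_norm_pow two_ne_zero) (hrem.integrable_norm_pow two_ne_zero)
    _ ≤ growthConst b m * (∫ x, ‖(φ - ψ) x‖ ^ 2) + growthConst b m * R ^ 2 := by
        unfold growthConst
        linarith [integral_norm_remainder_sq_le hSR hb hm hβ hφ hψ, sq_nonneg R]

end EnergyEstimate

section UniformBound

variable {β : ℝ} {b m : ℝ≥0∞} {u : 𝓢(E2, ℂ)}

lemma eLpNorm_const_mul_enorm_le {X F : Type*} [MeasurableSpace X] {μ : Measure X}
    [ENorm F] {f : X → F} (hf : Measurable fun x => ‖f x‖ₑ)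
    (hfm : eLpNorm f 2 μ ≤ m) (c : ℝ≥0∞) : eLpNorm (fun x => c * ‖f x‖ₑ) 2 μ ≤ c * m :=
  (eLpNorm_two_le_of_enorm_le_mul hf fun _ => le_rfl).trans
    (mul_le_mul_right ((eLpNorm_enorm f).trans_le hfm) c)

lemma enorm_e2 (j : Fin 2) : ‖e2 j‖ₑ = 1 := by
  rw [← ofReal_norm, e2, PiLp.norm_single, norm_one, ofReal_one]

lemma enorm_lap_le (u : 𝓢(E2, ℂ)) (x : E2) : ‖lap u x‖ₑ ≤ 2 * ‖fderiv ℝ (fderiv ℝ u) x‖ₑ := by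
  have hderiv (j : Fin 2) : fderiv ℝ (fun y => fderiv ℝ u y (e2 j)) x (e2 j)
      = fderiv ℝ (fderiv ℝ u) x (e2 j) (e2 j) := by
    have hdiff : DifferentiableAt ℝ (fderiv ℝ u) x :=
      (SchwartzMap.fderivCLM ℝ E2 ℂ u).differentiableAt
    rw [fderiv_clm_apply hdiff (by fun_prop)]
    simp
  calc ‖lap u x‖ₑ = ‖∑ j, fderiv ℝ (fderiv ℝ u) x (e2 j) (e2 j)‖ₑ := by simp_rw [lap, hderiv]
    _ ≤ ∑ j, ‖fderiv ℝ (fderiv ℝ u) x (e2 j) (e2 j)‖ₑ := enorm_sum_le _ _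
    _ ≤ ∑ j : Fin 2, ‖fderiv ℝ (fderiv ℝ u) x‖ₑ * ‖e2 j‖ₑ * ‖e2 j‖ₑ := by
        gcongr
        exact (ContinuousLinearMap.le_opENorm _ _).trans
          (by gcongr; exact ContinuousLinearMap.le_opENorm _ _)
    _ = 2 * ‖fderiv ℝ (fderiv ℝ u) x‖ₑ := by
        simp [enorm_e2]

lemma enorm_cssRHS_le (hβ : ‖β‖ₑ ≤ b) (hu : H2 u ≤ m) (R : ℝ) (x : E2) :
    ‖cssRHS β R u x‖ₑ
      ≤ 2 * ‖fderiv ℝ (fderiv ℝ u) x‖ₑ + 2 * b * m ^ 2 * ‖fderiv ℝ u x‖ₑ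
        + (b ^ 2 * m ^ 4 + b * ((2 * b * m ^ 2 + 2) * m ^ 2)) * ‖u x‖ₑ := by
  have hA : ‖Apot R u x‖ₑ ≤ m ^ 2 := (enorm_Apot_le R u x).trans (by gcongr)
  rw [cssRHS_eq, add_mul, ← add_assoc]
  refine enorm_sub_le.trans (add_le_add ((enorm_add_le _ _).trans
    (add_le_add (enorm_sub_le.trans (add_le_add ?_ ?_)) ?_)) ?_)
  · rw [enorm_neg]
    exact enorm_lap_le u x
  · rw [enorm_two_mul_coe_mul_I_mul, mul_assoc (2 * b), mul_comm (m ^ 2)]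
    gcongr
    exact (ContinuousLinearMap.le_opENorm _ _).trans (by gcongr)
  · rw [enorm_mul, enorm_coe_real, enorm_mul, enorm_pow, enorm_pow, enorm_norm]
    calc ‖β‖ₑ ^ 2 * ‖Apot R u x‖ₑ ^ 2 * ‖u x‖ₑ
        ≤ b ^ 2 * (m ^ 2) ^ 2 * ‖u x‖ₑ := by gcongr
      _ = b ^ 2 * m ^ 4 * ‖u x‖ₑ := by ring
  · rw [enorm_mul, enorm_mul, enorm_coe_real, enorm_coe_real]
    gcongr
    exact enorm_convKv_field_le hβ hu R x

/-- A bound for the `L²` norm of `∂ₜu`, for `|β| ≤ b` and `H²` norm at most `m`. -/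
def velocityConst (b m : ℝ≥0∞) : ℝ≥0∞ :=
  2 * m + 2 * b * m ^ 2 * m + (b ^ 2 * m ^ 4 + b * ((2 * b * m ^ 2 + 2) * m ^ 2)) * m

lemma velocityConst_ne_top (hb : b ≠ ⊤) (hm : m ≠ ⊤) : velocityConst b m ≠ ⊤ := by
  unfold velocityConst
  finiteness

lemma eLpNorm_cssRHS_le (hβ : ‖β‖ₑ ≤ b) (hu : H2 u ≤ m) (R : ℝ) :
    eLpNorm (cssRHS β R u) 2 volume ≤ velocityConst b m := by
  have hd2 : Measurable fun x => ‖fderiv ℝ (fderiv ℝ u) x‖ₑ :=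
    (SchwartzMap.fderivCLM ℝ E2 _ (SchwartzMap.fderivCLM ℝ E2 ℂ u)).continuous.enorm.measurable
  set p : E2 → ℝ≥0∞ := fun x => 2 * ‖fderiv ℝ (fderiv ℝ u) x‖ₑ
  set q : E2 → ℝ≥0∞ := fun x => 2 * b * m ^ 2 * ‖fderiv ℝ u x‖ₑ
  set r : E2 → ℝ≥0∞ := fun x => (b ^ 2 * m ^ 4 + b * ((2 * b * m ^ 2 + 2) * m ^ 2)) * ‖u x‖ₑ
  have hp : Measurable p := hd2.const_mul 2
  have hq : Measurable q := (measurable_enorm_fderiv_schwartz u).const_mul _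
  have hr : Measurable r := (measurable_enorm_schwartz u).const_mul _
  have hp2 : eLpNorm p 2 volume ≤ 2 * m :=
    eLpNorm_const_mul_enorm_le hd2 ((eLpNorm_fderiv_fderiv_le_H2 u).trans hu) 2
  have hq2 : eLpNorm q 2 volume ≤ 2 * b * m ^ 2 * m :=
    eLpNorm_const_mul_enorm_le (measurable_enorm_fderiv_schwartz u)
      ((eLpNorm_fderiv_le_H2 u).trans hu) _
  have hr2 : eLpNorm r 2 volume ≤ (b ^ 2 * m ^ 4 + b * ((2 * b * m ^ 2 + 2) * m ^ 2)) * m :=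
    eLpNorm_const_mul_enorm_le (measurable_enorm_schwartz u) ((eLpNorm_le_H2 u).trans hu) _
  calc eLpNorm (cssRHS β R u) 2 volume
      ≤ 1 * eLpNorm (fun x => p x + q x + r x) 2 volume :=
        eLpNorm_two_le_of_enorm_le_mul (by fun_prop) fun x =>
          (enorm_cssRHS_le hβ hu R x).trans_eq (one_mul _).symm
    _ ≤ eLpNorm p 2 volume + eLpNorm q 2 volume + eLpNorm r 2 volume := by
        grw [one_mul, eLpNorm_two_add_le (by fun_prop) hr, eLpNorm_two_add_le hp hq]
    _ ≤ velocityConst b m := add_le_add (add_le_add hp2 hq2) hr2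

end UniformBound

section Gronwall

variable {f g h : ℝ → ℝ} {a b r C t : ℝ}

lemma deriv_le_of_sub_le_integral (hab : a < b) (hh : Continuous h)
    (hfh : ∀ s ∈ Icc a b, ∀ t ∈ Icc a b, s ≤ t → f t - f s ≤ ∫ τ in s..t, h τ)
    (ht : t ∈ Icc a b) (hd : DifferentiableAt ℝ f t) : deriv f t ≤ h t := by
  have hanti : AntitoneOn (fun s => f s - ∫ τ in a..s, h τ) (Icc a b) := fun s hs t ht hst => by
    have hsplit := intervalIntegral.integral_add_adjacent_intervals (μ := volume)
      (hh.intervalIntegrable a s) (hh.intervalIntegrable s t)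
    linarith [hfh s hs t ht hst]
  have hderiv : HasDerivAt (fun s => f s - ∫ τ in a..s, h τ) (deriv f t - h t) t :=
    hd.hasDerivAt.sub (hh.integral_hasStrictDerivAt a t).hasDerivAt
  have hnonpos := hanti.derivWithin_nonpos (x := t)
  rw [hderiv.hasDerivWithinAt.derivWithin (uniqueDiffOn_Icc hab t ht)] at hnonpos
  linarith

lemma le_gronwallBound_of_le_integral (hC : 0 ≤ C) (hf : Continuous f)
    (hle : ∀ t ∈ Icc a b, f t ≤ f a + ∫ τ in a..t, (C * f τ + r)) (ht : t ∈ Icc a b) :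
    f t ≤ gronwallBound (f a) C r (t - a) := by
  have hderiv (t : ℝ) :
      HasDerivAt (fun s => f a + ∫ τ in a..s, (C * f τ + r)) (C * f t + r) t :=
    ((Continuous.integral_hasStrictDerivAt (by fun_prop) a t).hasDerivAt).const_add _
  refine (hle t ht).trans (le_gronwallBound_of_liminf_deriv_right_le
    (fun s _ => (hderiv s).continuousAt.continuousWithinAt)
    (fun s _ _ hlt => (hderiv s).hasDerivWithinAt.liminf_right_slope_le hlt)
    (by simp) (fun s hs => ?_) t ht)
  gcongr
  exact hle s (Ico_subset_Icc_self hs)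

lemma continuousOn_of_sub_eq_integral (hab : a ≤ b) (hg : IntervalIntegrable g volume a b)
    (hfg : ∀ t ∈ Icc a b, f t - f a = ∫ τ in a..t, g τ) : ContinuousOn f (Icc a b) := by
  have hprim := intervalIntegral.continuousOn_primitive_interval' hg left_mem_uIcc
  rw [uIcc_of_le hab] at hprim
  exact (hprim.const_add (f a)).congr fun t ht => by linarith [hfg t ht]

lemma sub_le_integral_of_sub_eq_integral (hh : Continuous h) (hg : IntervalIntegrable g volume a b)
    (hfg : ∀ t ∈ Icc a b, f t - f a = ∫ τ in a..t, g τ) (hgh : ∀ t ∈ Icc a b, g t ≤ h t) :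
    ∀ s ∈ Icc a b, ∀ t ∈ Icc a b, s ≤ t → f t - f s ≤ ∫ τ in s..t, h τ := by
  intro s hs t ht hst
  have hsub {p q : ℝ} (hp : p ∈ Icc a b) (hq : q ∈ Icc a b) : IntervalIntegrable g volume p q :=
    hg.mono_set (uIcc_subset_uIcc (Icc_subset_uIcc hp) (Icc_subset_uIcc hq))
  have ha : a ∈ Icc a b := left_mem_Icc.2 (hs.1.trans hs.2)
  have hsplit := intervalIntegral.integral_add_adjacent_intervals (hsub ha hs) (hsub hs ht)
  calc f t - f s = ∫ τ in s..t, g τ := by linarith [hfg s hs, hfg t ht]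
    _ ≤ ∫ τ in s..t, h τ :=
      intervalIntegral.integral_mono_on hst (hsub hs ht) (hh.intervalIntegrable s t)
        fun τ hτ => hgh τ ⟨hs.1.trans hτ.1, hτ.2.trans ht.2⟩

lemma deriv_le_and_le_gronwallBound (hab : a < b) (hC : 0 ≤ C) (hr : 0 ≤ r)
    (hf : ∀ t ∈ Icc a b, 0 ≤ f t) (hg : IntervalIntegrable g volume a b)
    (hfg : ∀ t ∈ Icc a b, f t - f a = ∫ τ in a..t, g τ)
    (hgf : ∀ t ∈ Icc a b, g t ≤ C * f t + r) (ht : t ∈ Icc a b) :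
    deriv f t ≤ C * f t + r ∧ f t ≤ gronwallBound (f a) C r (t - a) := by
  let F := IccExtend hab.le ((Icc a b).domRestrict f)
  have hF : Continuous F := (continuousOn_of_sub_eq_integral hab.le hg hfg).domRestrict.Icc_extend'
  have hFf {s : ℝ} (hs : s ∈ Icc a b) : F s = f s := IccExtend_of_mem hab.le _ hs
  have hincr := sub_le_integral_of_sub_eq_integral (h := fun s => C * F s + r) (by fun_prop)
    hg hfg fun s hs => (hgf s hs).trans_eq (by rw [hFf hs])
  have ha := left_mem_Icc.2 hab.le
  constructor
  · by_cases hd : DifferentiableAt ℝ f t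
    · exact (deriv_le_of_sub_le_integral hab (by fun_prop) hincr ht hd).trans_eq (by rw [hFf ht])
    · rw [deriv_zero_of_not_differentiableAt hd]
      exact add_nonneg (mul_nonneg hC (hf t ht)) hr
  · rw [← hFf ht, ← hFf ha]
    refine le_gronwallBound_of_le_integral hC hF (fun s hs => ?_) ht
    rw [hFf hs, hFf ha]
    linarith [hincr a ha s hs hs.1]

end Gronwall

section EnergyIdentity

variable {X F : Type*} [TopologicalSpace X] [SecondCountableTopology X] [MeasurableSpace X]
  [BorelSpace X] {μ : Measure X} [SFinite μ] [NormedAddCommGroup F] [InnerProductSpace ℝ F]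
  {w dw : ℝ → X → F} {a b : ℝ} {B : ℝ≥0∞}

lemma integrable_uncurry_two_mul_inner (hw : Continuous (Function.uncurry w))
    (hdw : Continuous (Function.uncurry dw)) (hB : B ≠ ⊤)
    (hwB : ∀ t ∈ Icc a b, eLpNorm (w t) 2 μ ≤ B) (hdwB : ∀ t ∈ Icc a b, eLpNorm (dw t) 2 μ ≤ B) :
    Integrable (Function.uncurry fun t x => 2 * ⟪w t x, dw t x⟫)
      ((volume.restrict (Ioc a b)).prod μ) := by
  have hmeas : Measurable (Function.uncurry fun t x => 2 * ⟪w t x, dw t x⟫) :=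
    (continuous_const.mul (hw.inner hdw)).measurable
  have hslice (t : ℝ) (ht : t ∈ Icc a b) : ∫⁻ x, ‖2 * ⟪w t x, dw t x⟫‖ₑ ∂μ ≤ B ^ 2 + B ^ 2 := by
    have hwt : Continuous (w t) := hw.uncurry_left t
    calc ∫⁻ x, ‖2 * ⟪w t x, dw t x⟫‖ₑ ∂μ
        ≤ ∫⁻ x, (‖w t x‖ₑ ^ 2 + ‖dw t x‖ₑ ^ 2) ∂μ :=
          lintegral_mono fun x => enorm_two_mul_inner_le _ _
      _ = eLpNorm (w t) 2 μ ^ 2 + eLpNorm (dw t) 2 μ ^ 2 := by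
          rw [lintegral_add_left (hwt.enorm.measurable.pow_const 2), eLpNorm_two_sq,
            eLpNorm_two_sq]
      _ ≤ B ^ 2 + B ^ 2 := by
          gcongr
          exacts [hwB t ht, hdwB t ht]
  refine ⟨hmeas.aestronglyMeasurable, ?_⟩
  rw [hasFiniteIntegral_iff_enorm, lintegral_prod _ hmeas.enorm.aemeasurable]
  refine (setLIntegral_mono measurable_const fun t ht => hslice t (Ioc_subset_Icc_self ht)).trans_lt
    ?_
  rw [setLIntegral_const, Real.volume_Ioc]
  finiteness

lemma intervalIntegrable_integral_two_mul_inner (hw : Continuous (Function.uncurry w))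
    (hdw : Continuous (Function.uncurry dw)) (hab : a ≤ b) (hB : B ≠ ⊤)
    (hwB : ∀ t ∈ Icc a b, eLpNorm (w t) 2 μ ≤ B) (hdwB : ∀ t ∈ Icc a b, eLpNorm (dw t) 2 μ ≤ B) :
    IntervalIntegrable (fun t => ∫ x, 2 * ⟪w t x, dw t x⟫ ∂μ) volume a b := by
  rw [intervalIntegrable_iff_integrableOn_Ioc_of_le hab]
  exact (integrable_uncurry_two_mul_inner hw hdw hB hwB hdwB).integral_prod_left

lemma integral_norm_sq_sub_eq_integral (hw : Continuous (Function.uncurry w))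
    (hdw : Continuous (Function.uncurry dw)) (hd : ∀ t x, HasDerivAt (fun s => w s x) (dw t x) t)
    (hab : a ≤ b) (hB : B ≠ ⊤) (hwB : ∀ t ∈ Icc a b, eLpNorm (w t) 2 μ ≤ B)
    (hdwB : ∀ t ∈ Icc a b, eLpNorm (dw t) 2 μ ≤ B) :
    (∫ x, ‖w b x‖ ^ 2 ∂μ) - ∫ x, ‖w a x‖ ^ 2 ∂μ
      = ∫ t in a..b, ∫ x, 2 * ⟪w t x, dw t x⟫ ∂μ := by
  have hsq (t : ℝ) (ht : t ∈ Icc a b) : Integrable (fun x => ‖w t x‖ ^ 2) μ :=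
    MemLp.integrable_norm_pow
      ⟨(hw.uncurry_left t).aestronglyMeasurable, (hwB t ht).trans_lt hB.lt_top⟩ two_ne_zero
  have hftc (x : X) : ∫ t in a..b, 2 * ⟪w t x, dw t x⟫ = ‖w b x‖ ^ 2 - ‖w a x‖ ^ 2 :=
    intervalIntegral.integral_eq_sub_of_hasDerivAt (fun t _ => (hd t x).norm_sq)
      ((continuous_const.mul ((hw.uncurry_right x).inner
        (hdw.uncurry_right x))).intervalIntegrable a b)
  rw [intervalIntegral.integral_of_le hab,
    integral_integral_swap (integrable_uncurry_two_mul_inner hw hdw hB hwB hdwB),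
    ← integral_sub (hsq b (right_mem_Icc.2 hab)) (hsq a (left_mem_Icc.2 hab))]
  simp_rw [← intervalIntegral.integral_of_le hab, hftc]

end EnergyIdentity

section TimeDerivative

variable {E F : Type*} [NormedAddCommGroup E] [NormedSpace ℝ E] [NormedAddCommGroup F]
  [NormedSpace ℝ F] {u du : ℝ → E → F}

lemma continuous_uncurry_of_hasDerivAt (hu : ContDiff ℝ 1 (Function.uncurry u))
    (hdu : ∀ t x, HasDerivAt (fun s => u s x) (du t x) t) : Continuous (Function.uncurry du) := by
  have heq : Function.uncurry du = fun p => fderiv ℝ (Function.uncurry u) p (1, 0) := by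
    funext ⟨t, x⟩
    have hline : HasDerivAt (fun s : ℝ => (s, x)) ((1 : ℝ), (0 : E)) t :=
      (hasDerivAt_id t).prodMk (hasDerivAt_const t x)
    have hchain := HasFDerivAt.comp_hasDerivAt t
      (hu.differentiable one_ne_zero (t, x)).hasFDerivAt hline
    exact (hdu t x).unique hchain
  rw [heq]
  exact (hu.continuous_fderiv one_ne_zero).clm_apply continuous_const

end TimeDerivative

section Velocity

variable {β S R : ℝ} {b m : ℝ≥0∞} {φ ψ : 𝓢(E2, ℂ)} {dφ dψ : E2 → ℂ}

lemma eLpNorm_le_velocityConst (hβ : ‖β‖ₑ ≤ b) (hφ : H2 φ ≤ m)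
    (hφeq : ∀ x, Complex.I * dφ x = cssRHS β R φ x) : eLpNorm dφ 2 volume ≤ velocityConst b m :=
  (eLpNorm_congr_enorm_ae (.of_forall fun x => by rw [← hφeq, enorm_I_mul])).trans_le
    (eLpNorm_cssRHS_le hβ hφ R)

lemma integral_two_mul_inner_velocity_sub_le (hSR : S ≤ R) (hb : b ≠ ⊤) (hm : m ≠ ⊤)
    (hβ : ‖β‖ₑ ≤ b) (hφ : H2 φ ≤ m) (hψ : H2 ψ ≤ m)
    (hφeq : ∀ x, Complex.I * dφ x = cssRHS β S φ x)
    (hψeq : ∀ x, Complex.I * dψ x = cssRHS β R ψ x) :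
    ∫ x, 2 * ⟪φ x - ψ x, dφ x - dψ x⟫
      ≤ growthConst b m * (∫ x, ‖φ x - ψ x‖ ^ 2) + growthConst b m * R ^ 2 := by
  have hrotate (x : E2) : ⟪φ x - ψ x, dφ x - dψ x⟫
      = ⟪Complex.I * (φ - ψ) x, cssRHS β S φ x - cssRHS β R ψ x⟫ := by
    rw [← hφeq, ← hψeq, ← mul_sub, inner_I_mul_I_mul, sub_apply]
  simp_rw [hrotate]
  exact integral_inner_I_mul_cssRHS_sub_le hSR hb hm hβ hφ hψ

lemma eLpNorm_sub_le_of_H2_le (hφ : H2 φ ≤ m) (hψ : H2 ψ ≤ m) :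
    eLpNorm (fun x => φ x - ψ x) 2 volume ≤ m + m :=
  (eLpNorm_sub_le φ.continuous.aestronglyMeasurable ψ.continuous.aestronglyMeasurable
    one_le_two).trans (add_le_add ((eLpNorm_le_H2 _).trans hφ) ((eLpNorm_le_H2 _).trans hψ))

lemma eLpNorm_velocity_sub_le (hβ : ‖β‖ₑ ≤ b) (hφ : H2 φ ≤ m) (hψ : H2 ψ ≤ m)
    (hφeq : ∀ x, Complex.I * dφ x = cssRHS β S φ x) (hψeq : ∀ x, Complex.I * dψ x = cssRHS β R ψ x)
    (hdφ : Continuous dφ) (hdψ : Continuous dψ) :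
    eLpNorm (fun x => dφ x - dψ x) 2 volume ≤ velocityConst b m + velocityConst b m :=
  (eLpNorm_sub_le hdφ.aestronglyMeasurable hdψ.aestronglyMeasurable one_le_two).trans
    (add_le_add (eLpNorm_le_velocityConst hβ hφ hφeq) (eLpNorm_le_velocityConst hβ hψ hψeq))

lemma gronwallBound_le {δ C r t : ℝ} (hC : 1 ≤ C) (hr : 0 ≤ r) :
    gronwallBound δ C (C * r) t ≤ (δ + C * r) * Real.exp (C * t) := by
  rw [gronwallBound_of_K_ne_0 (by positivity), mul_div_cancel_left₀ r (by positivity)]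
  nlinarith [mul_nonneg (mul_nonneg (sub_nonneg.2 hC) hr) (Real.exp_pos (C * t)).le]

end Velocity

end ChernSimonsSchrodinger

open ChernSimonsSchrodinger in
/-- Stability of the flow with respect to the initial data and to the regularization radius, with a
rate that is uniform for `β` in any bounded set. -/
theorem statement15_general (M b : ℝ) :
    ∃ C : ℝ, 0 < C ∧ ∀ T : ℝ, 0 < T → ∀ β : ℝ, |β| ≤ b → ∀ S R : ℝ, S ≤ R →
      ∀ (φ ψ : ℝ → SchwartzMap E2 ℂ) (dφ dψ : ℝ → E2 → ℂ),
        (ContDiff ℝ 1 fun p : ℝ × E2 => φ p.1 p.2) →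
        (ContDiff ℝ 1 fun p : ℝ × E2 => ψ p.1 p.2) →
        (∀ t x, HasDerivAt (fun s => φ s x) (dφ t x) t) →
        (∀ t x, HasDerivAt (fun s => ψ s x) (dψ t x) t) →
        (∀ t ∈ Set.Icc (0 : ℝ) T, ∀ x, Complex.I * dφ t x = cssRHS β S (⇑(φ t)) x) →
        (∀ t ∈ Set.Icc (0 : ℝ) T, ∀ x, Complex.I * dψ t x = cssRHS β R (⇑(ψ t)) x) →
        (∀ t ∈ Set.Icc (0 : ℝ) T, H2 (⇑(φ t)) + H2 (⇑(ψ t)) ≤ ENNReal.ofReal M) →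
        ∀ t ∈ Set.Icc (0 : ℝ) T,
          (deriv (fun s => ∫ x, ‖φ s x - ψ s x‖ ^ 2) t
              ≤ C * R ^ 2 + C * ∫ x, ‖φ t x - ψ t x‖ ^ 2) ∧
          ((∫ x, ‖φ t x - ψ t x‖ ^ 2)
              ≤ ((∫ x, ‖φ 0 x - ψ 0 x‖ ^ 2) + C * R ^ 2) * Real.exp (C * t)) := by
  set m := ENNReal.ofReal M
  set k := ENNReal.ofReal b
  have hC := one_le_growthConst k m
  refine ⟨growthConst k m, by positivity, fun T hT β hβ S R hSR φ ψ dφ dψ hφ hψ hdφ hdψ hφeq hψeq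
    hM t ht => ?_⟩
  replace hβ : ‖β‖ₑ ≤ k := by
    rw [Real.enorm_eq_ofReal_abs]
    exact ofReal_le_ofReal hβ
  have hφm (s) (hs : s ∈ Set.Icc 0 T) : H2 (φ s) ≤ m := le_self_add.trans (hM s hs)
  have hψm (s) (hs : s ∈ Set.Icc 0 T) : H2 (ψ s) ≤ m := le_add_self.trans (hM s hs)
  have hdφc := continuous_uncurry_of_hasDerivAt hφ hdφ
  have hdψc := continuous_uncurry_of_hasDerivAt hψ hdψ
  have hwc : Continuous fun p : ℝ × E2 => φ p.1 p.2 - ψ p.1 p.2 := hφ.continuous.sub hψ.continuous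
  have hdwc : Continuous fun p : ℝ × E2 => dφ p.1 p.2 - dψ p.1 p.2 := hdφc.sub hdψc
  set B := (m + m) + (velocityConst k m + velocityConst k m)
  have hB : B ≠ ⊤ := by
    have := velocityConst_ne_top (b := k) (m := m) ofReal_ne_top ofReal_ne_top
    finiteness
  have hwB (s) (hs : s ∈ Set.Icc 0 T) : eLpNorm (fun x => φ s x - ψ s x) 2 volume ≤ B :=
    (eLpNorm_sub_le_of_H2_le (hφm s hs) (hψm s hs)).trans le_self_add
  have hdwB (s) (hs : s ∈ Set.Icc 0 T) : eLpNorm (fun x => dφ s x - dψ s x) 2 volume ≤ B :=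
    (eLpNorm_velocity_sub_le hβ (hφm s hs) (hψm s hs) (hφeq s hs) (hψeq s hs)
      (hdφc.uncurry_left s) (hdψc.uncurry_left s)).trans le_add_self
  have hder := fun t x => (hdφ t x).sub (hdψ t x)
  obtain ⟨hderiv, hgronwall⟩ := deriv_le_and_le_gronwallBound hT (by positivity) (by positivity)
    (fun s _ => integral_nonneg fun x => by positivity)
    (intervalIntegrable_integral_two_mul_inner hwc hdwc hT.le hB hwB hdwB)
    (fun s hs => integral_norm_sq_sub_eq_integral hwc hdwc hder hs.1 hB
      (fun τ hτ => hwB τ ⟨hτ.1, hτ.2.trans hs.2⟩) (fun τ hτ => hdwB τ ⟨hτ.1, hτ.2.trans hs.2⟩))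
    (fun s hs => integral_two_mul_inner_velocity_sub_le hSR ofReal_ne_top ofReal_ne_top hβ
      (hφm s hs) (hψm s hs) (hφeq s hs) (hψeq s hs)) ht
  rw [sub_zero] at hgronwall
  exact ⟨hderiv.trans_eq (add_comm _ _), hgronwall.trans (gronwallBound_le hC (sq_nonneg R))⟩

/-- Lemma 3.3 (convergence of the pilot equation): for every `M > 0` there are
`c', C > 0` depending only on `M` such that for every `T > 0`, every `|β| ≤ c'` and
`0 < R < 1`, if `φ` solves `CSS(0)`, `ψ` solves `CSS(R)` (smooth, Schwartz in space),
`φ(0) = ψ(0)` and `‖φ(t)‖_{H²} + ‖ψ(t)‖_{H²} ≤ M` on `[0,T]`, then on `[0,T]`: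
`(d/dt)‖φ(t) − ψ(t)‖₂² ≤ CR² + C‖φ(t) − ψ(t)‖₂²` and
`‖φ(t) − ψ(t)‖₂² ≤ CR² e^{Ct}`. -/
theorem statement15 (M : ℝ) (hM : 0 < M) :
    ∃ c' C : ℝ, 0 < c' ∧ 0 < C ∧
      ∀ T : ℝ, 0 < T → ∀ β : ℝ, |β| ≤ c' → ∀ R : ℝ, 0 < R → R < 1 →
      ∀ (φ ψ : ℝ → SchwartzMap E2 ℂ) (dφ dψ : ℝ → E2 → ℂ),
        (ContDiff ℝ (⊤ : ℕ∞) fun p : ℝ × E2 => φ p.1 p.2) →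
        (ContDiff ℝ (⊤ : ℕ∞) fun p : ℝ × E2 => ψ p.1 p.2) →
        (∀ t x, HasDerivAt (fun s => φ s x) (dφ t x) t) →
        (∀ t x, HasDerivAt (fun s => ψ s x) (dψ t x) t) →
        (∀ t ∈ Set.Icc (0 : ℝ) T, ∀ x, Complex.I * dφ t x = cssRHS β 0 (⇑(φ t)) x) →
        (∀ t ∈ Set.Icc (0 : ℝ) T, ∀ x, Complex.I * dψ t x = cssRHS β R (⇑(ψ t)) x) →
        φ 0 = ψ 0 →
        (∀ t ∈ Set.Icc (0 : ℝ) T, H2 (⇑(φ t)) + H2 (⇑(ψ t)) ≤ ENNReal.ofReal M) →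
        ∀ t ∈ Set.Icc (0 : ℝ) T,
          (deriv (fun s => ∫ x, ‖φ s x - ψ s x‖ ^ 2) t
              ≤ C * R ^ 2 + C * ∫ x, ‖φ t x - ψ t x‖ ^ 2) ∧
          ((∫ x, ‖φ t x - ψ t x‖ ^ 2) ≤ C * R ^ 2 * Real.exp (C * t)) := by
  obtain ⟨C, hC, hstab⟩ := statement15_general M 1
  refine ⟨1, C, one_pos, hC, fun T hT β hβ R hR _ φ ψ dφ dψ hφ hψ hdφ hdψ hφeq hψeq h0 hH2
    t ht => ?_⟩
  simpa [h0] using hstab T hT β hβ 0 R hR.le φ ψ dφ dψ (hφ.of_le (by simp)) (hψ.of_le (by simp))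
    hdφ hdψ hφeq hψeq hH2 t ht
end
end

section
/- Pointwise convergence of the average-field energy functional (Proposition A.3): fix β ∈ ℝ. There exists a constant C > 0 (depending only on β) such that for every R ∈ (0, 1] and every u ∈ H¹(ℝ², ℂ) with ‖u‖₂ = 1, | E_R[u] − E₀[u] | ≤ C (1 + E₀[u]^{3/2}) R, where for R ≥ 0 the average-field energy is E_R[u] := ∫_{ℝ²} ‖ −i∇u(x) + β (K_R ∗ |u|²)(x) u(x) ‖² dx. -/
noncomputable section
open MeasureTheory ENNReal
open scoped RealInnerProductSpace

/-!
Write `D_R = -i∇u + β A_R u` with `A_R = K_R ∗ |u|²`. By the reverse triangle inequality in `L²`,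
`|E_R[u] - E₀[u]| ≤ δ (2 √E₀[u] + δ)` with `δ = ‖D_R - D_0‖₂ = |β| ‖(A_R - A_0) u‖₂`.
The kernel `K_R - K_0` lives in the ball of radius `R` and is dominated there by `|x|⁻¹`, a function
of mass `2πR`, so `δ² ≲ R² ∫ |u|⁶`. The diamagnetic inequality `|∇|u|| ≤ |D_0|` turns the
two-dimensional Gagliardo–Nirenberg inequality into `∫ |u|⁶ ≲ ‖u‖₂² E₀[u]²`, hence
`δ ≲ R ‖u‖₂ E₀[u]`. One of the two factors `δ` in the quadratic term is instead bounded by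
`δ ≲ ‖u‖₂² √E₀[u]`, which follows from splitting `|x|⁻¹` at an optimal radius.
-/

section LineEstimates

variable {F : Type*} [NormedAddCommGroup F] [NormedSpace ℝ F] [CompleteSpace F]

lemma enorm_sub_le_lintegral_enorm_deriv {f : ℝ → F} (hf : Differentiable ℝ f) (a b : ℝ) :
    ‖f b - f a‖ₑ ≤ ∫⁻ s, ‖deriv f s‖ₑ := by
  by_cases htop : ∫⁻ s, ‖deriv f s‖ₑ = ⊤
  · exact htop ▸ le_top
  have hderiv : Integrable (deriv f) :=
    ⟨(stronglyMeasurable_deriv f).aestronglyMeasurable, lt_top_iff_ne_top.2 htop⟩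
  rw [← intervalIntegral.integral_eq_sub_of_hasDerivAt (fun x _ => (hf x).hasDerivAt)
      hderiv.intervalIntegrable, ← ofReal_norm,
    intervalIntegral.norm_integral_eq_norm_integral_uIoc, ofReal_norm]
  exact (enorm_integral_le_lintegral_enorm _).trans (setLIntegral_le_lintegral _ _)

lemma enorm_le_lintegral_enorm_deriv {f : ℝ → F} (hf : Differentiable ℝ f)
    (hint : ∫⁻ s, ‖f s‖ₑ ≠ ⊤) (t : ℝ) : ‖f t‖ₑ ≤ ∫⁻ s, ‖deriv f s‖ₑ := by
  have hlower : ∀ s, ‖f t‖ₑ - ∫⁻ s, ‖deriv f s‖ₑ ≤ ‖f s‖ₑ := fun s => by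
    rw [tsub_le_iff_right]
    calc ‖f t‖ₑ = ‖f s + (f t - f s)‖ₑ := by rw [add_sub_cancel]
      _ ≤ ‖f s‖ₑ + ‖f t - f s‖ₑ := enorm_add_le _ _
      _ ≤ ‖f s‖ₑ + ∫⁻ s, ‖deriv f s‖ₑ := by
        gcongr; exact enorm_sub_le_lintegral_enorm_deriv hf s t
  -- A positive constant is not integrable on the whole line.
  by_contra! hlt
  refine ne_top_of_le_ne_top hint (lintegral_mono hlower) ?_
  rw [lintegral_const, Real.volume_univ, ENNReal.mul_top (tsub_pos_iff_lt.2 hlt).ne']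

end LineEstimates

section PlanarSobolev

lemma lintegral_prod_sq_le {α β : Type*} [MeasurableSpace α] [MeasurableSpace β]
    {μ : Measure α} {ν : Measure β} [SFinite ν] {f : α × β → ℝ≥0∞}
    {g : α → ℝ≥0∞} {h : β → ℝ≥0∞} (hf : Measurable f) (hg : Measurable g) (hh : Measurable h)
    (hfg : ∀ᵐ x ∂μ, ∀ y, f (x, y) ≤ g x) (hfh : ∀ᵐ y ∂ν, ∀ x, f (x, y) ≤ h y) :
    ∫⁻ p, f p ^ 2 ∂(μ.prod ν) ≤ (∫⁻ x, g x ∂μ) * ∫⁻ y, h y ∂ν :=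
  calc ∫⁻ p, f p ^ 2 ∂(μ.prod ν) = ∫⁻ x, ∫⁻ y, f (x, y) ^ 2 ∂ν ∂μ :=
        lintegral_prod _ (by fun_prop)
    _ ≤ ∫⁻ x, ∫⁻ y, g x * h y ∂ν ∂μ := by
        refine lintegral_mono_ae (hfg.mono fun x hx => lintegral_mono_ae (hfh.mono fun y hy => ?_))
        rw [sq]
        exact mul_le_mul' (hx y) (hy x)
    _ = (∫⁻ x, g x ∂μ) * ∫⁻ y, h y ∂ν := by
        simp_rw [lintegral_const_mul _ hh, lintegral_mul_const _ hg]

variable {F : Type*} [NormedAddCommGroup F] [NormedSpace ℝ F] [CompleteSpace F]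

lemma lintegral_enorm_sq_le_mul_lintegral_enorm_fderiv {f : ℝ × ℝ → F} (hf : Differentiable ℝ f)
    (hint : ∫⁻ p, ‖f p‖ₑ ≠ ⊤) :
    ∫⁻ p, ‖f p‖ₑ ^ 2 ≤
      (∫⁻ p, ‖fderiv ℝ f p (0, 1)‖ₑ) * ∫⁻ p, ‖fderiv ℝ f p (1, 0)‖ₑ := by
  borelize F
  have hfm : Measurable fun p => ‖f p‖ₑ := hf.continuous.enorm.measurable
  have hdm (v : ℝ × ℝ) : Measurable fun p => ‖fderiv ℝ f p v‖ₑ :=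
    (measurable_fderiv_apply_const ℝ f v).enorm
  have hderiv_right (x y : ℝ) :
      HasDerivAt (fun t => f (x, t)) (fderiv ℝ f (x, y) (0, 1)) y :=
    (hf (x, y)).hasFDerivAt.comp_hasDerivAt y ((hasDerivAt_const y x).prodMk (hasDerivAt_id y))
  have hderiv_left (x y : ℝ) :
      HasDerivAt (fun t => f (t, y)) (fderiv ℝ f (x, y) (1, 0)) x :=
    (hf (x, y)).hasFDerivAt.comp_hasDerivAt x ((hasDerivAt_id x).prodMk (hasDerivAt_const x y))
  rw [Measure.volume_eq_prod] at hint ⊢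
  rw [lintegral_prod _ (hdm _).aemeasurable, lintegral_prod_symm _ (hdm _).aemeasurable]
  refine lintegral_prod_sq_le hfm (hdm _).lintegral_prod_right' (hdm _).lintegral_prod_left' ?_ ?_
  · rw [lintegral_prod _ hfm.aemeasurable] at hint
    filter_upwards [ae_lt_top hfm.lintegral_prod_right' hint] with x hx y
    simpa only [(hderiv_right x _).deriv] using
      enorm_le_lintegral_enorm_deriv (fun t => (hderiv_right x t).differentiableAt) hx.ne y
  · rw [lintegral_prod_symm _ hfm.aemeasurable] at hint
    filter_upwards [ae_lt_top hfm.lintegral_prod_left' hint] with y hy x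
    simpa only [(hderiv_left _ y).deriv] using
      enorm_le_lintegral_enorm_deriv (fun t => (hderiv_left t y).differentiableAt) hy.ne x

/-- The identification of `ℝ × ℝ`, on which Fubini's theorem applies, with the plane. -/
def prodEquivPlane : (ℝ × ℝ) ≃L[ℝ] E2 :=
  (ContinuousLinearEquiv.finTwoArrow ℝ ℝ).symm.trans (EuclideanSpace.equiv (Fin 2) ℝ).symm

lemma measurePreserving_prodEquivPlane : MeasurePreserving prodEquivPlane :=
  (PiLp.volume_preserving_toLp (Fin 2)).comp (volume_preserving_finTwoArrow ℝ).symm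

lemma prodEquivPlane_one_zero : prodEquivPlane (1, 0) = e2 0 := by
  ext i; fin_cases i <;> simp [prodEquivPlane, e2]

lemma prodEquivPlane_zero_one : prodEquivPlane (0, 1) = e2 1 := by
  ext i; fin_cases i <;> simp [prodEquivPlane, e2]

lemma lintegral_enorm_sq_le_sq_lintegral_of_fderiv_le {f : E2 → F} (hf : Differentiable ℝ f)
    (hint : ∫⁻ x, ‖f x‖ₑ ≠ ⊤) {g : E2 → ℝ≥0∞} (hfg : ∀ j x, ‖fderiv ℝ f x (e2 j)‖ₑ ≤ g x) :
    ∫⁻ x, ‖f x‖ₑ ^ 2 ≤ (∫⁻ x, g x) ^ 2 := by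
  have hcomp (φ : E2 → ℝ≥0∞) : ∫⁻ p, φ (prodEquivPlane p) = ∫⁻ x, φ x :=
    measurePreserving_prodEquivPlane.lintegral_comp_emb
      prodEquivPlane.toHomeomorph.measurableEmbedding φ
  have hfderiv (p v : ℝ × ℝ) : fderiv ℝ (f ∘ prodEquivPlane) p v =
      fderiv ℝ f (prodEquivPlane p) (prodEquivPlane v) := by
    rw [prodEquivPlane.comp_right_fderiv]; rfl
  have hle := lintegral_enorm_sq_le_mul_lintegral_enorm_fderiv
    (hf.comp prodEquivPlane.differentiable) (by rwa [← hcomp] at hint)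
  simp only [hfderiv, prodEquivPlane_one_zero, prodEquivPlane_zero_one] at hle
  rw [← hcomp, sq, ← hcomp g]
  exact hle.trans (mul_le_mul' (lintegral_mono fun _ => hfg 1 _) (lintegral_mono fun _ => hfg 0 _))

end PlanarSobolev

section CovariantGradient

/-- The covariant gradient `(-i∇ + A)u`, as a vector in `ℂ²`, of `u` in the magnetic
potential `A`. -/
def covGrad (A : E2 → E2) (u : E2 → ℂ) (x : E2) : EuclideanSpace ℂ (Fin 2) :=
  WithLp.toLp 2 fun j => -Complex.I * fderiv ℝ u x (e2 j) + (A x j : ℂ) * u x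

variable {A : E2 → E2} {u : E2 → ℂ}

lemma measurable_covGrad (hA : Measurable A) (hu : Measurable u) : Measurable (covGrad A u) := by
  have hpotential (j : Fin 2) : Measurable fun x => (A x j : ℂ) * u x := by fun_prop
  exact (PiLp.continuous_toLp 2 _).measurable.comp (measurable_pi_lambda _ fun j =>
    ((measurable_fderiv_apply_const ℝ u (e2 j)).const_mul _).add (hpotential j))

lemma enorm_toLp_ofReal_mul (a : E2) (z : ℂ) :
    ‖(WithLp.toLp 2 fun j => (a j : ℂ) * z : EuclideanSpace ℂ (Fin 2))‖ₑ = ‖a‖ₑ * ‖z‖ₑ := by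
  have hnorm : ‖(WithLp.toLp 2 fun j => (a j : ℂ) * z : EuclideanSpace ℂ (Fin 2))‖ =
      ‖a‖ * ‖z‖ := by
    rw [EuclideanSpace.norm_eq, EuclideanSpace.norm_eq, ← Real.sqrt_sq (norm_nonneg z),
      ← Real.sqrt_mul (by positivity), Finset.sum_mul]
    simp only [norm_mul, mul_pow, Complex.norm_real]
  rw [← ofReal_norm, hnorm, ENNReal.ofReal_mul (norm_nonneg _), ofReal_norm, ofReal_norm]

lemma enorm_covGrad_sub_covGrad (A B : E2 → E2) (u : E2 → ℂ) (x : E2) :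
    ‖covGrad A u x - covGrad B u x‖ₑ = ‖A x - B x‖ₑ * ‖u x‖ₑ := by
  rw [← enorm_toLp_ofReal_mul]
  congr 1
  ext j
  simp only [covGrad, neg_mul, PiLp.sub_apply, add_sub_add_left_eq_sub, Complex.ofReal_sub]
  ring

lemma norm_covGrad_zero_le (u : E2 → ℂ) (x : E2) : ‖covGrad 0 u x‖ ≤ 2 * ‖fderiv ℝ u x‖ := by
  have hpartial (j : Fin 2) : ‖fderiv ℝ u x (e2 j)‖ ≤ ‖fderiv ℝ u x‖ := by
    simpa [e2] using (fderiv ℝ u x).le_opNorm (e2 j)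
  rw [EuclideanSpace.norm_eq]
  refine Real.sqrt_le_iff.2 ⟨by positivity, ?_⟩
  calc ∑ j, ‖covGrad 0 u x j‖ ^ 2 ≤ ∑ _j : Fin 2, ‖fderiv ℝ u x‖ ^ 2 := by
        gcongr with j
        simpa [covGrad] using hpartial j
    _ ≤ (2 * ‖fderiv ℝ u x‖) ^ 2 := by
        rw [Fin.sum_const, nsmul_eq_mul, mul_pow]
        gcongr
        norm_num

lemma hasFDerivAt_norm_pow_add_two {E G : Type*} [NormedAddCommGroup E] [NormedSpace ℝ E]
    [NormedAddCommGroup G] [InnerProductSpace ℝ G] {f : E → G} {f' : E →L[ℝ] G} {x : E}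
    (hf : HasFDerivAt f f' x) (n : ℕ) :
    HasFDerivAt (fun y => ‖f y‖ ^ (n + 2))
      (((n + 2) * ‖f x‖ ^ n) • (innerSL ℝ (f x)).comp f') x := by
  have h := (hasFDerivAt_norm_rpow (f x) (p := n + 2) (by linarith [n.cast_nonneg (α := ℝ)])).comp
    x hf
  rw [add_sub_cancel_right, Real.rpow_natCast, ContinuousLinearMap.smul_comp] at h
  exact_mod_cast h

-- `i A_j u` is pointwise orthogonal to `u`, so `A` does not enter the derivative of `|u|`.
lemma inner_fderiv_eq_inner_covGrad (A : E2 → E2) (u : E2 → ℂ) (x : E2) (j : Fin 2) :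
    ⟪u x, fderiv ℝ u x (e2 j)⟫ = ⟪u x, Complex.I * covGrad A u x j⟫ := by
  simp only [covGrad, Complex.inner, Complex.mul_re, Complex.mul_im, Complex.add_re, Complex.add_im,
    Complex.neg_re, Complex.neg_im, Complex.conj_re, Complex.conj_im, Complex.I_re, Complex.I_im,
    Complex.ofReal_re, Complex.ofReal_im]
  ring

lemma enorm_fderiv_norm_pow_le (A : E2 → E2) {x : E2} (hu : DifferentiableAt ℝ u x) (n : ℕ)
    (j : Fin 2) :
    ‖fderiv ℝ (fun y => ‖u y‖ ^ (n + 2)) x (e2 j)‖ₑ ≤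
      (n + 2) * (‖u x‖ₑ ^ (n + 1) * ‖covGrad A u x‖ₑ) := by
  have hinner : ‖⟪u x, fderiv ℝ u x (e2 j)⟫‖ ≤ ‖u x‖ * ‖covGrad A u x‖ := by
    rw [inner_fderiv_eq_inner_covGrad A]
    refine (norm_inner_le_norm _ _).trans ?_
    rw [norm_mul, Complex.norm_I, one_mul]
    gcongr
    exact PiLp.norm_apply_le _ j
  have hnorm : ‖fderiv ℝ (fun y => ‖u y‖ ^ (n + 2)) x (e2 j)‖ ≤
      (n + 2) * (‖u x‖ ^ (n + 1) * ‖covGrad A u x‖) := by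
    rw [(hasFDerivAt_norm_pow_add_two hu.hasFDerivAt n).fderiv]
    calc ‖((n + 2) * ‖u x‖ ^ n) * ⟪u x, fderiv ℝ u x (e2 j)⟫‖
        = (n + 2) * ‖u x‖ ^ n * ‖⟪u x, fderiv ℝ u x (e2 j)⟫‖ := by
          rw [norm_mul, Real.norm_of_nonneg (by positivity)]
      _ ≤ (n + 2) * ‖u x‖ ^ n * (‖u x‖ * ‖covGrad A u x‖) := by gcongr
      _ = (n + 2) * (‖u x‖ ^ (n + 1) * ‖covGrad A u x‖) := by ring
  simp only [← ofReal_norm]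
  refine (ENNReal.ofReal_le_ofReal hnorm).trans_eq ?_
  rw [ENNReal.ofReal_mul (by positivity), ENNReal.ofReal_mul (by positivity),
    ENNReal.ofReal_pow (norm_nonneg _), ENNReal.ofReal_add (by positivity) (by positivity),
    ENNReal.ofReal_natCast, ENNReal.ofReal_ofNat]

end CovariantGradient

section GagliardoNirenberg

lemma sq_lintegral_mul_le {α : Type*} [MeasurableSpace α] {μ : Measure α} {f g : α → ℝ≥0∞}
    (hf : AEMeasurable f μ) (hg : AEMeasurable g μ) :
    (∫⁻ a, f a * g a ∂μ) ^ 2 ≤ (∫⁻ a, f a ^ 2 ∂μ) * ∫⁻ a, g a ^ 2 ∂μ := by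
  refine (pow_le_pow_left' (ENNReal.lintegral_mul_le_Lp_mul_Lq μ Real.HolderConjugate.two_two
    hf hg) 2).trans_eq ?_
  simp only [mul_pow, ← ENNReal.rpow_natCast, ← ENNReal.rpow_mul]
  norm_num

variable {A : E2 → E2} {u : E2 → ℂ}

lemma lintegral_enorm_pow_le_mul_lintegral_covGrad (hA : Measurable A) (hu : Differentiable ℝ u)
    (n : ℕ) (hint : ∫⁻ x, ‖u x‖ₑ ^ (n + 2) ≠ ⊤) :
    ∫⁻ x, ‖u x‖ₑ ^ (2 * (n + 2)) ≤
      (n + 2) ^ 2 * ((∫⁻ x, ‖u x‖ₑ ^ (2 * (n + 1))) * ∫⁻ x, ‖covGrad A u x‖ₑ ^ 2) := by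
  have hum : Measurable u := hu.continuous.measurable
  have hDm : Measurable (covGrad A u) := measurable_covGrad hA hum
  have hsobolev := lintegral_enorm_sq_le_sq_lintegral_of_fderiv_le
    (f := fun x => ‖u x‖ ^ (n + 2))
    (fun x => (hasFDerivAt_norm_pow_add_two (hu x).hasFDerivAt n).differentiableAt)
    (by simpa only [enorm_pow, enorm_norm] using hint)
    (fun j x => enorm_fderiv_norm_pow_le A (hu x) n j)
  simp only [enorm_pow, enorm_norm, ← pow_mul'] at hsobolev
  refine hsobolev.trans ?_
  rw [lintegral_const_mul _ (by fun_prop), mul_pow]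
  gcongr
  simpa only [← pow_mul'] using
    sq_lintegral_mul_le (μ := volume) (f := fun x => ‖u x‖ₑ ^ (n + 1))
      (g := fun x => ‖covGrad A u x‖ₑ) (by fun_prop) (by fun_prop)

lemma lintegral_enorm_pow_four_le (hA : Measurable A) (hu : Differentiable ℝ u)
    (hint : ∫⁻ x, ‖u x‖ₑ ^ 2 ≠ ⊤) :
    ∫⁻ x, ‖u x‖ₑ ^ 4 ≤ 4 * ((∫⁻ x, ‖u x‖ₑ ^ 2) * ∫⁻ x, ‖covGrad A u x‖ₑ ^ 2) := by
  have h := lintegral_enorm_pow_le_mul_lintegral_covGrad hA hu 0 hint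
  norm_num at h
  exact h

lemma lintegral_enorm_pow_six_le (hA : Measurable A) (hu : Differentiable ℝ u)
    (hint : ∫⁻ x, ‖u x‖ₑ ^ 2 ≠ ⊤) (hcov : ∫⁻ x, ‖covGrad A u x‖ₑ ^ 2 ≠ ⊤) :
    ∫⁻ x, ‖u x‖ₑ ^ 6 ≤ 36 * ((∫⁻ x, ‖u x‖ₑ ^ 2) * (∫⁻ x, ‖covGrad A u x‖ₑ ^ 2) ^ 2) := by
  have hum : Measurable u := hu.continuous.measurable
  have hfour := lintegral_enorm_pow_four_le hA hu hint
  have hfour_ne_top : ∫⁻ x, ‖u x‖ₑ ^ 4 ≠ ⊤ :=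
    ne_top_of_le_ne_top (by finiteness) hfour
  have hcube_le (a : ℝ≥0∞) : a ^ 3 ≤ a ^ 2 + a ^ 4 := by
    rcases le_total a 1 with ha | ha
    · exact (pow_le_pow_right_of_le_one' ha (by norm_num)).trans le_self_add
    · exact (pow_le_pow_right₀ ha (by norm_num)).trans le_add_self
  have hcube : ∫⁻ x, ‖u x‖ₑ ^ 3 ≠ ⊤ := by
    refine ne_top_of_le_ne_top ?_ (lintegral_mono fun x => hcube_le ‖u x‖ₑ)
    rw [lintegral_add_left (by fun_prop)]
    finiteness
  have hsix := lintegral_enorm_pow_le_mul_lintegral_covGrad hA hu 1 hcube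
  norm_num at hsix
  refine hsix.trans ?_
  calc 9 * ((∫⁻ x, ‖u x‖ₑ ^ 4) * ∫⁻ x, ‖covGrad A u x‖ₑ ^ 2)
      ≤ 9 * (4 * ((∫⁻ x, ‖u x‖ₑ ^ 2) * ∫⁻ x, ‖covGrad A u x‖ₑ ^ 2) *
          ∫⁻ x, ‖covGrad A u x‖ₑ ^ 2) := by gcongr
    _ = 36 * ((∫⁻ x, ‖u x‖ₑ ^ 2) * (∫⁻ x, ‖covGrad A u x‖ₑ ^ 2) ^ 2) := by ring

end GagliardoNirenberg

section Convolution

variable {G : Type*} [AddGroup G] [MeasurableSpace G] [MeasurableAdd₂ G] [MeasurableNeg G]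
  {μ : Measure G}

lemma sq_lconvolution_le {k ρ : G → ℝ≥0∞} (hk : Measurable k) (hρ : Measurable ρ) (x : G) :
    (k ⋆ₗ[μ] ρ) x ^ 2 ≤ (∫⁻ y, k y ∂μ) * (k ⋆ₗ[μ] fun y => ρ y ^ 2) x := by
  have hsqrt (a : ℝ≥0∞) : a ^ (1 / 2 : ℝ) * a ^ (1 / 2 : ℝ) = a := by
    rw [← ENNReal.rpow_add_of_nonneg _ _ (by norm_num) (by norm_num)]
    norm_num
  have h := sq_lintegral_mul_le (μ := μ) (f := fun y => k y ^ (1 / 2 : ℝ))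
    (g := fun y => k y ^ (1 / 2 : ℝ) * ρ (-y + x)) (by fun_prop) (by fun_prop)
  simpa only [← mul_assoc, sq, hsqrt, mul_mul_mul_comm _ _ (_ ^ (1 / 2 : ℝ)),
    lconvolution_def] using h

variable [SFinite μ] [μ.IsAddLeftInvariant]

lemma lintegral_lconvolution {f g : G → ℝ≥0∞} (hf : Measurable f) (hg : Measurable g) :
    ∫⁻ x, (f ⋆ₗ[μ] g) x ∂μ = (∫⁻ x, f x ∂μ) * ∫⁻ x, g x ∂μ := by
  simp only [lconvolution_def]
  rw [lintegral_lintegral_swap (by fun_prop)]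
  calc ∫⁻ y, ∫⁻ x, f y * g (-y + x) ∂μ ∂μ = ∫⁻ y, f y * ∫⁻ x, g x ∂μ ∂μ := by
        refine lintegral_congr fun y => ?_
        rw [lintegral_const_mul _ (by fun_prop), lintegral_add_left_eq_self g (-y)]
    _ = (∫⁻ x, f x ∂μ) * ∫⁻ x, g x ∂μ := lintegral_mul_const _ hf

lemma lintegral_sq_lconvolution_mul_le {k ρ : G → ℝ≥0∞} (hk : Measurable k) (hρ : Measurable ρ) :
    ∫⁻ x, (k ⋆ₗ[μ] ρ) x ^ 2 * ρ x ∂μ ≤ 2 * ((∫⁻ x, k x ∂μ) ^ 2 * ∫⁻ x, ρ x ^ 3 ∂μ) := by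
  have hyoung (a b : ℝ≥0∞) : a ^ 2 * b ≤ a ^ 3 + b ^ 3 := by
    rcases le_total a b with h | h
    · calc a ^ 2 * b ≤ b ^ 2 * b := by gcongr
        _ = b ^ 3 := by ring
        _ ≤ a ^ 3 + b ^ 3 := le_add_self
    · calc a ^ 2 * b ≤ a ^ 2 * a := by gcongr
        _ = a ^ 3 := by ring
        _ ≤ a ^ 3 + b ^ 3 := le_self_add
  have hpointwise (x : G) : (k ⋆ₗ[μ] fun y => ρ y ^ 2) x * ρ x ≤
      (k ⋆ₗ[μ] fun y => ρ y ^ 3) x + (∫⁻ y, k y ∂μ) * ρ x ^ 3 := by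
    simp only [lconvolution_def]
    rw [← lintegral_mul_const _ (by fun_prop), ← lintegral_mul_const _ hk,
      ← lintegral_add_left (by fun_prop)]
    refine lintegral_mono fun y => ?_
    rw [mul_assoc, ← mul_add]
    exact mul_le_mul_right (hyoung _ _) _
  calc ∫⁻ x, (k ⋆ₗ[μ] ρ) x ^ 2 * ρ x ∂μ
      ≤ ∫⁻ x, (∫⁻ y, k y ∂μ) *
          ((k ⋆ₗ[μ] fun y => ρ y ^ 3) x + (∫⁻ y, k y ∂μ) * ρ x ^ 3) ∂μ := by
        refine lintegral_mono fun x => ?_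
        refine (mul_le_mul_left (sq_lconvolution_le hk hρ x) _).trans ?_
        rw [mul_assoc]
        exact mul_le_mul_right (hpointwise x) _
    _ = 2 * ((∫⁻ x, k x ∂μ) ^ 2 * ∫⁻ x, ρ x ^ 3 ∂μ) := by
        rw [lintegral_const_mul _ (by fun_prop), lintegral_add_left (by fun_prop),
          lintegral_lconvolution hk (by fun_prop), lintegral_const_mul _ (by fun_prop)]
        ring

end Convolution

section RieszPotential

/-- The kernel `1 / ‖x‖` of the Riesz potential on the plane, cut off to the ball of radius `r`. -/
def truncInvNorm (r : ℝ) : E2 → ℝ≥0∞ :=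
  (Metric.ball 0 r).indicator fun x => ‖x‖ₑ⁻¹

lemma measurable_truncInvNorm (r : ℝ) : Measurable (truncInvNorm r) :=
  measurable_enorm.inv.indicator Metric.isOpen_ball.measurableSet

lemma truncInvNorm_le (r : ℝ) (x : E2) : truncInvNorm r x ≤ ‖x‖ₑ⁻¹ :=
  Set.indicator_le_self _ _ x

lemma inv_enorm_le_truncInvNorm_add (r : ℝ) (x : E2) :
    ‖x‖ₑ⁻¹ ≤ truncInvNorm r x + (ENNReal.ofReal r)⁻¹ := by
  by_cases hx : x ∈ Metric.ball 0 r
  · rw [truncInvNorm, Set.indicator_of_mem hx]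
    exact le_self_add
  · rw [mem_ball_zero_iff, not_lt] at hx
    rw [← ofReal_norm]
    exact (ENNReal.inv_le_inv' (ENNReal.ofReal_le_ofReal hx)).trans le_add_self

lemma lintegral_truncInvNorm {r : ℝ} (hr : 0 ≤ r) :
    ∫⁻ x, truncInvNorm r x = ENNReal.ofReal (2 * Real.pi * r) := by
  have hradial : Set.EqOn (fun t : ℝ => t ^ (Module.finrank ℝ E2 - 1) •
      (Set.Iio r).indicator (fun t => t⁻¹) t) ((Set.Iio r).indicator 1) (Set.Ioi 0) := by
    intro t ht
    have ht0 : t ≠ 0 := ne_of_gt ht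
    by_cases h : t < r <;> simp [h, ht0]
  have hint : Integrable fun x : E2 => (Set.Iio r).indicator (fun t : ℝ => t⁻¹) ‖x‖ := by
    rw [integrable_fun_norm_addHaar volume (f := (Set.Iio r).indicator fun t : ℝ => t⁻¹),
      integrableOn_congr_fun hradial measurableSet_Ioi,
      integrableOn_indicator_iff measurableSet_Iio, Set.inter_comm, Set.Ioi_inter_Iio]
    exact integrableOn_const (by simp)
  have htrunc : truncInvNorm r =ᵐ[volume]
      fun x => ENNReal.ofReal ((Set.Iio r).indicator (fun t : ℝ => t⁻¹) ‖x‖) := by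
    filter_upwards [compl_mem_ae_iff.2 (measure_singleton (0 : E2))] with x hx
    by_cases h : ‖x‖ < r
    · simp [truncInvNorm, h, ENNReal.ofReal_inv_of_pos (norm_pos_iff.2 hx)]
    · simp [truncInvNorm, h]
  rw [lintegral_congr_ae htrunc, ← ofReal_integral_eq_lintegral_ofReal hint
      (.of_forall fun x => Set.indicator_apply_nonneg fun _ => by positivity),
    integral_fun_norm_addHaar, setIntegral_congr_fun measurableSet_Ioi hradial,
    setIntegral_indicator measurableSet_Iio, Set.Ioi_inter_Iio]
  simp [hr, Measure.real, mul_assoc, ENNReal.ofReal_mul Real.pi_nonneg]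

variable {ρ : E2 → ℝ≥0∞}

lemma lintegral_sq_truncInvNorm_lconvolution_le (hρ : Measurable ρ) {r : ℝ} (hr : 0 ≤ r) :
    ∫⁻ x, (truncInvNorm r ⋆ₗ ρ) x ^ 2 * ρ x ≤
      2 * (ENNReal.ofReal (2 * Real.pi * r) ^ 2 * ∫⁻ x, ρ x ^ 3) := by
  rw [← lintegral_truncInvNorm hr]
  exact lintegral_sq_lconvolution_mul_le (measurable_truncInvNorm r) hρ

lemma inv_enorm_lconvolution_le (hρ : Measurable ρ) (r : ℝ) (x : E2) :
    ((fun y : E2 => ‖y‖ₑ⁻¹) ⋆ₗ ρ) x ≤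
      (truncInvNorm r ⋆ₗ ρ) x + (ENNReal.ofReal r)⁻¹ * ∫⁻ y, ρ y := by
  have htrunc := measurable_truncInvNorm r
  rw [lconvolution_comm, lconvolution_comm (f := truncInvNorm r)]
  simp only [lconvolution_def]
  rw [← lintegral_const_mul _ hρ, ← lintegral_add_left (by fun_prop)]
  refine lintegral_mono fun y => ?_
  rw [mul_comm _ (ρ y), ← mul_add]
  exact mul_le_mul_right (inv_enorm_le_truncInvNorm_add r _) _

lemma lintegral_sq_inv_enorm_lconvolution_le_add (hρ : Measurable ρ) {r : ℝ} (hr : 0 ≤ r) :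
    ∫⁻ x, ((fun y : E2 => ‖y‖ₑ⁻¹) ⋆ₗ ρ) x ^ 2 * ρ x ≤
      4 * (ENNReal.ofReal (2 * Real.pi * r) ^ 2 * ∫⁻ x, ρ x ^ 3) +
        2 * ((ENNReal.ofReal r)⁻¹ ^ 2 * (∫⁻ x, ρ x) ^ 3) := by
  have htrunc := measurable_truncInvNorm r
  have hadd_sq (a b : ℝ≥0∞) : (a + b) ^ 2 ≤ 2 * a ^ 2 + 2 * b ^ 2 := by
    simpa [mul_add, one_add_one_eq_two, show (2 : ℝ) - 1 = 1 by norm_num] using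
      ENNReal.rpow_add_le_mul_rpow_add_rpow a b (p := 2) (by norm_num)
  set m := ∫⁻ x, ρ x
  calc ∫⁻ x, ((fun y : E2 => ‖y‖ₑ⁻¹) ⋆ₗ ρ) x ^ 2 * ρ x
      ≤ ∫⁻ x, (2 * ((truncInvNorm r ⋆ₗ ρ) x ^ 2 * ρ x) +
          2 * ((ENNReal.ofReal r)⁻¹ * m) ^ 2 * ρ x) := by
        refine lintegral_mono fun x => ?_
        rw [← mul_assoc, ← add_mul]
        gcongr
        exact (pow_le_pow_left' (inv_enorm_lconvolution_le hρ r x) 2).trans (hadd_sq _ _)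
    _ = 2 * (∫⁻ x, (truncInvNorm r ⋆ₗ ρ) x ^ 2 * ρ x) +
          2 * ((ENNReal.ofReal r)⁻¹ ^ 2 * m ^ 3) := by
        rw [lintegral_add_left (by fun_prop), lintegral_const_mul _ (by fun_prop),
          lintegral_const_mul _ hρ]
        ring
    _ ≤ 2 * (2 * (ENNReal.ofReal (2 * Real.pi * r) ^ 2 * ∫⁻ x, ρ x ^ 3)) +
          2 * ((ENNReal.ofReal r)⁻¹ ^ 2 * m ^ 3) := by
        gcongr
        exact lintegral_sq_truncInvNorm_lconvolution_le hρ hr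
    _ = _ := by ring

lemma sq_le_four_mul_of_forall_le_mul_add_mul_inv {a b q : ℝ≥0∞} (ha : a ≠ ⊤) (hb : b ≠ ⊤)
    (h : ∀ t : ℝ, 0 < t → q ≤ a * ENNReal.ofReal t + b * (ENNReal.ofReal t)⁻¹) :
    q ^ 2 ≤ 4 * (a * b) := by
  have hq : q ≠ ⊤ := by
    refine ne_top_of_le_ne_top ?_ (h 1 one_pos)
    rw [ENNReal.ofReal_one, inv_one]
    finiteness
  lift a to NNReal using ha
  lift b to NNReal using hb
  lift q to NNReal using hq
  have hreal (t : ℝ) (ht : 0 < t) : (q : ℝ) ≤ a * t + b * t⁻¹ := by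
    lift t to NNReal using ht.le
    have h' := h t ht
    rw [ENNReal.ofReal_coe_nnreal, ← ENNReal.coe_inv (by exact_mod_cast ht.ne')] at h'
    exact_mod_cast h'
  have hquadratic (t : ℝ) : 0 ≤ (a : ℝ) * (t * t) + -q * t + b := by
    rcases le_or_gt t 0 with ht | ht
    · nlinarith [q.coe_nonneg, b.coe_nonneg, mul_nonneg a.coe_nonneg (mul_self_nonneg t)]
    · have hmul := mul_le_mul_of_nonneg_right (hreal t ht) ht.le
      rw [add_mul, inv_mul_cancel_right₀ ht.ne'] at hmul
      linarith
  have hdiscrim := discrim_le_zero hquadratic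
  rw [discrim, neg_sq, sub_nonpos, mul_assoc] at hdiscrim
  exact_mod_cast hdiscrim

lemma sq_lintegral_sq_inv_enorm_lconvolution_le (hρ : Measurable ρ) (hm : ∫⁻ x, ρ x ≠ ⊤)
    (hcube : ∫⁻ x, ρ x ^ 3 ≠ ⊤) :
    (∫⁻ x, ((fun y : E2 => ‖y‖ₑ⁻¹) ⋆ₗ ρ) x ^ 2 * ρ x) ^ 2 ≤
      32 * (ENNReal.ofReal (2 * Real.pi) ^ 2 * (∫⁻ x, ρ x) ^ 3 * ∫⁻ x, ρ x ^ 3) := by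
  refine (sq_le_four_mul_of_forall_le_mul_add_mul_inv
    (a := 4 * (ENNReal.ofReal (2 * Real.pi) ^ 2 * ∫⁻ x, ρ x ^ 3)) (b := 2 * (∫⁻ x, ρ x) ^ 3)
    (by finiteness) (by finiteness) fun t ht => ?_).trans_eq (by ring)
  have hsqrt : ENNReal.ofReal √t ^ 2 = ENNReal.ofReal t := by
    rw [← ENNReal.ofReal_pow (Real.sqrt_nonneg t), Real.sq_sqrt ht.le]
  refine (lintegral_sq_inv_enorm_lconvolution_le_add hρ (Real.sqrt_nonneg t)).trans_eq ?_
  rw [ENNReal.ofReal_mul Real.two_pi_pos.le, mul_pow, ← ENNReal.inv_pow, hsqrt]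
  ring

end RieszPotential

section AharonovBohmKernel

lemma norm_perp (x : E2) : ‖perp x‖ = ‖x‖ := by
  simp [EuclideanSpace.norm_eq, perp, add_comm]

lemma continuous_perp : Continuous perp := by
  unfold perp
  refine (PiLp.continuous_toLp 2 _).comp (continuous_pi fun i => ?_)
  fin_cases i
  · exact (by fun_prop : Continuous fun x : E2 => -x 1)
  · exact (by fun_prop : Continuous fun x : E2 => x 0)

lemma measurable_K (R : ℝ) : Measurable (K R) := by
  have hperp := continuous_perp.measurable
  unfold K
  fun_prop

lemma enorm_smul_perp_le {c : ℝ} {x : E2} (hc : |c| ≤ (‖x‖ ^ 2)⁻¹) : ‖c • perp x‖ₑ ≤ ‖x‖ₑ⁻¹ := by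
  rcases eq_or_ne x 0 with rfl | hx
  · simp
  have hx' : 0 < ‖x‖ := norm_pos_iff.2 hx
  rw [← ofReal_norm, ← ofReal_norm, ← ENNReal.ofReal_inv_of_pos hx']
  refine ENNReal.ofReal_le_ofReal ?_
  calc ‖c • perp x‖ = |c| * ‖x‖ := by rw [norm_smul, norm_perp, Real.norm_eq_abs]
    _ ≤ (‖x‖ ^ 2)⁻¹ * ‖x‖ := by gcongr
    _ = ‖x‖⁻¹ := by field_simp

lemma inv_max_sq_le {r s : ℝ} (hs : 0 < s) : (max r s ^ 2)⁻¹ ≤ (s ^ 2)⁻¹ := by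
  gcongr
  exact le_max_right r s

lemma enorm_K_le (R : ℝ) (x : E2) : ‖K R x‖ₑ ≤ ‖x‖ₑ⁻¹ := by
  rcases eq_or_ne x 0 with rfl | hx
  · simp
  refine enorm_smul_perp_le ?_
  rw [abs_of_nonneg (by positivity)]
  exact inv_max_sq_le (norm_pos_iff.2 hx)

lemma enorm_K_sub_K_zero_le (R : ℝ) (x : E2) : ‖K R x - K 0 x‖ₑ ≤ truncInvNorm R x := by
  by_cases hball : x ∈ Metric.ball 0 R
  · rw [truncInvNorm, Set.indicator_of_mem hball, K, K, ← sub_smul, max_eq_right (norm_nonneg x)]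
    rcases eq_or_ne x 0 with rfl | hx
    · simp
    refine enorm_smul_perp_le ?_
    rw [abs_sub_comm, abs_of_nonneg (sub_nonneg.2 (inv_max_sq_le (norm_pos_iff.2 hx)))]
    exact sub_le_self _ (by positivity)
  · rw [mem_ball_zero_iff, not_lt] at hball
    simp [K, max_eq_right hball]

end AharonovBohmKernel

section MagneticPotential

lemma measurable_convKs (R : ℝ) {ρ : E2 → ℝ} (hρ : Measurable ρ) : Measurable (convKs R ρ) := by
  have hK := measurable_K R
  have hintegrand : Measurable fun p : E2 × E2 => ρ p.2 • K R (p.1 - p.2) := by fun_prop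
  exact hintegrand.stronglyMeasurable.integral_prod_right.measurable

lemma lintegral_smul_le_lconvolution {k : E2 → ℝ≥0∞} {F : E2 → E2} (hF : ∀ x, ‖F x‖ₑ ≤ k x)
    (ρ : E2 → ℝ) (x : E2) :
    ∫⁻ y, ‖ρ y • F (x - y)‖ₑ ≤ (k ⋆ₗ fun y => ‖ρ y‖ₑ) x := by
  rw [lconvolution_comm, lconvolution_def]
  refine lintegral_mono fun y => ?_
  rw [enorm_smul, neg_add_eq_sub]
  gcongr
  exact hF _

lemma enorm_convKs_le (R : ℝ) (ρ : E2 → ℝ) (x : E2) :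
    ‖convKs R ρ x‖ₑ ≤ ((fun y : E2 => ‖y‖ₑ⁻¹) ⋆ₗ fun y => ‖ρ y‖ₑ) x :=
  (enorm_integral_le_lintegral_enorm _).trans (lintegral_smul_le_lconvolution (enorm_K_le R) ρ x)

lemma enorm_convKs_sub_convKs_zero_le (R : ℝ) {ρ : E2 → ℝ} (hρ : Measurable ρ) {x : E2}
    (hx : ((fun y : E2 => ‖y‖ₑ⁻¹) ⋆ₗ fun y => ‖ρ y‖ₑ) x < ⊤) :
    ‖convKs R ρ x - convKs 0 ρ x‖ₑ ≤ (truncInvNorm R ⋆ₗ fun y => ‖ρ y‖ₑ) x := by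
  have hint (S : ℝ) : Integrable fun y => ρ y • K S (x - y) := by
    have hK := measurable_K S
    exact ⟨by fun_prop, (lintegral_smul_le_lconvolution (enorm_K_le S) ρ x).trans_lt hx⟩
  rw [convKs, convKs, ← integral_sub (hint R) (hint 0)]
  simp only [← smul_sub]
  exact (enorm_integral_le_lintegral_enorm _).trans
    (lintegral_smul_le_lconvolution (F := fun z => K R z - K 0 z) (enorm_K_sub_K_zero_le R) ρ x)

end MagneticPotential

section SquareIntegrable

variable {α F : Type*} [MeasurableSpace α] [NormedAddCommGroup F] {μ : Measure α} {f g : α → F}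

lemma sq_eLpNorm_two (f : α → F) (μ : Measure α) : eLpNorm f 2 μ ^ 2 = ∫⁻ x, ‖f x‖ₑ ^ 2 ∂μ := by
  simpa using eLpNorm_nnreal_pow_eq_lintegral (f := f) (μ := μ) (p := 2) two_ne_zero

lemma memLp_two_iff_lintegral_ne_top (hf : AEStronglyMeasurable f μ) :
    MemLp f 2 μ ↔ ∫⁻ x, ‖f x‖ₑ ^ 2 ∂μ ≠ ⊤ := by
  rw [← sq_eLpNorm_two, ENNReal.pow_ne_top_iff, MemLp, lt_top_iff_ne_top]
  simp [hf]

lemma lintegral_enorm_sq_eq_ofReal_sq_lpNorm (hf : MemLp f 2 μ) :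
    ∫⁻ x, ‖f x‖ₑ ^ 2 ∂μ = ENNReal.ofReal (lpNorm f 2 μ ^ 2) := by
  rw [← sq_eLpNorm_two, ENNReal.ofReal_pow lpNorm_nonneg, ofReal_lpNorm hf]

lemma integral_norm_sq_eq_sq_lpNorm (hf : AEStronglyMeasurable f μ) :
    ∫ x, ‖f x‖ ^ 2 ∂μ = lpNorm f 2 μ ^ 2 := by
  rw [← toReal_eLpNorm hf, ← ENNReal.toReal_pow, sq_eLpNorm_two,
    integral_eq_lintegral_of_nonneg_ae (.of_forall fun x => by positivity) (by fun_prop)]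
  simp only [ENNReal.ofReal_pow (norm_nonneg _), ofReal_norm]

lemma lpNorm_two_le_of_lintegral_enorm_sq_le (hf : MemLp f 2 μ) {c : ℝ} (hc : 0 ≤ c)
    (h : ∫⁻ x, ‖f x‖ₑ ^ 2 ∂μ ≤ ENNReal.ofReal (c ^ 2)) : lpNorm f 2 μ ≤ c := by
  rw [lintegral_enorm_sq_eq_ofReal_sq_lpNorm hf,
    ENNReal.ofReal_le_ofReal_iff (sq_nonneg c)] at h
  exact le_of_sq_le_sq h hc

lemma abs_sq_lpNorm_sub_sq_lpNorm_le {p : ℝ≥0∞} (hp : 1 ≤ p) (hf : MemLp f p μ)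
    (hg : MemLp g p μ) :
    |lpNorm f p μ ^ 2 - lpNorm g p μ ^ 2| ≤
      lpNorm (f - g) p μ * (2 * lpNorm g p μ + lpNorm (f - g) p μ) := by
  have hfg : lpNorm f p μ ≤ lpNorm g p μ + lpNorm (f - g) p μ :=
    lpNorm_le_lpNorm_add_lpNorm_sub' hg hp
  have hgf : lpNorm g p μ ≤ lpNorm f p μ + lpNorm (f - g) p μ :=
    lpNorm_le_lpNorm_add_lpNorm_sub hf hp
  have hf0 : 0 ≤ lpNorm f p μ := lpNorm_nonneg
  have hg0 : 0 ≤ lpNorm g p μ := lpNorm_nonneg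
  rw [sq_sub_sq, abs_mul, abs_of_nonneg (add_nonneg hf0 hg0), mul_comm]
  exact mul_le_mul (abs_sub_le_iff.2 ⟨by linarith, by linarith⟩) (by linarith)
    (add_nonneg hf0 hg0) lpNorm_nonneg

end SquareIntegrable

section Energy

variable {u : E2 → ℂ}

lemma measurable_Apot (R : ℝ) (hu : Measurable u) : Measurable (Apot R u) :=
  measurable_convKs R (by fun_prop)

lemma memLp_two_of_H1_lt_top (hu : AEStronglyMeasurable u) (hH : H1 u < ⊤) :
    MemLp u 2 ∧ MemLp (fderiv ℝ u) 2 := by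
  have hsum := (ENNReal.rpow_lt_top_iff_of_pos (by norm_num)).1 hH
  rw [ENNReal.add_lt_top, ENNReal.pow_lt_top_iff, ENNReal.pow_lt_top_iff] at hsum
  exact ⟨⟨hu, by simpa using hsum.1⟩, ⟨(measurable_fderiv ℝ u).aestronglyMeasurable,
    by simpa using hsum.2⟩⟩

lemma lintegral_sq_truncInvNorm_lconvolution_density_le {A : E2 → E2} (hA : Measurable A)
    (hu : Differentiable ℝ u) (hmass : ∫⁻ x, ‖u x‖ₑ ^ 2 ≠ ⊤)
    (hcov : ∫⁻ x, ‖covGrad A u x‖ₑ ^ 2 ≠ ⊤) {r : ℝ} (hr : 0 ≤ r) :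
    ∫⁻ x, (truncInvNorm r ⋆ₗ fun y => ‖u y‖ₑ ^ 2) x ^ 2 * ‖u x‖ₑ ^ 2 ≤
      72 * (ENNReal.ofReal (2 * Real.pi * r) ^ 2 *
        ((∫⁻ x, ‖u x‖ₑ ^ 2) * (∫⁻ x, ‖covGrad A u x‖ₑ ^ 2) ^ 2)) := by
  have hum : Measurable u := hu.continuous.measurable
  refine (lintegral_sq_truncInvNorm_lconvolution_le (by fun_prop) hr).trans ?_
  simp only [← pow_mul]
  calc 2 * (ENNReal.ofReal (2 * Real.pi * r) ^ 2 * ∫⁻ x, ‖u x‖ₑ ^ 6)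
      ≤ 2 * (ENNReal.ofReal (2 * Real.pi * r) ^ 2 *
          (36 * ((∫⁻ x, ‖u x‖ₑ ^ 2) * (∫⁻ x, ‖covGrad A u x‖ₑ ^ 2) ^ 2))) := by
        gcongr
        exact lintegral_enorm_pow_six_le hA hu hmass hcov
    _ = _ := by ring

lemma lintegral_sq_inv_enorm_lconvolution_density_le {A : E2 → E2} (hA : Measurable A)
    (hu : Differentiable ℝ u) (hmass : ∫⁻ x, ‖u x‖ₑ ^ 2 ≠ ⊤)
    (hcov : ∫⁻ x, ‖covGrad A u x‖ₑ ^ 2 ≠ ⊤) :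
    ∫⁻ x, ((fun y : E2 => ‖y‖ₑ⁻¹) ⋆ₗ fun y => ‖u y‖ₑ ^ 2) x ^ 2 * ‖u x‖ₑ ^ 2 ≤
      34 * (ENNReal.ofReal (2 * Real.pi) *
        ((∫⁻ x, ‖u x‖ₑ ^ 2) ^ 2 * ∫⁻ x, ‖covGrad A u x‖ₑ ^ 2)) := by
  have hum : Measurable u := hu.continuous.measurable
  have hsix := lintegral_enorm_pow_six_le hA hu hmass hcov
  have hsix_ne_top : ∫⁻ x, ‖u x‖ₑ ^ 6 ≠ ⊤ := ne_top_of_le_ne_top (by finiteness) hsix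
  have hriesz := sq_lintegral_sq_inv_enorm_lconvolution_le (ρ := fun x => ‖u x‖ₑ ^ 2)
    (by fun_prop) hmass (by simpa only [← pow_mul] using hsix_ne_top)
  simp only [← pow_mul] at hriesz
  rw [← ENNReal.pow_le_pow_left_iff two_ne_zero]
  set m := ∫⁻ x, ‖u x‖ₑ ^ 2
  set N := ∫⁻ x, ‖covGrad A u x‖ₑ ^ 2
  set c := ENNReal.ofReal (2 * Real.pi)
  refine hriesz.trans ?_
  calc 32 * (c ^ 2 * m ^ 3 * ∫⁻ x, ‖u x‖ₑ ^ 6) ≤ 32 * (c ^ 2 * m ^ 3 * (36 * (m * N ^ 2))) := by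
        gcongr
    _ = 1152 * (c * (m ^ 2 * N)) ^ 2 := by ring
    _ ≤ 34 ^ 2 * (c * (m ^ 2 * N)) ^ 2 := by gcongr; norm_num
    _ = (34 * (c * (m ^ 2 * N))) ^ 2 := by ring

lemma ae_inv_enorm_lconvolution_lt_top {ρ : E2 → ℝ≥0∞} (hρ : Measurable ρ)
    (hm : ∫⁻ x, ρ x ≠ ⊤) : ∀ᵐ x, ((fun y : E2 => ‖y‖ₑ⁻¹) ⋆ₗ ρ) x < ⊤ := by
  have htrunc := measurable_truncInvNorm 1
  have hint : ∫⁻ x, (truncInvNorm 1 ⋆ₗ ρ) x ≠ ⊤ := by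
    rw [lintegral_lconvolution htrunc hρ, lintegral_truncInvNorm zero_le_one]
    finiteness
  filter_upwards [ae_lt_top (by fun_prop) hint] with x hx
  refine (inv_enorm_lconvolution_le hρ 1 x).trans_lt ?_
  rw [ENNReal.ofReal_one, inv_one, one_mul]
  exact ENNReal.add_lt_top.2 ⟨hx, hm.lt_top⟩

lemma energy_eq_sq_lpNorm (β R : ℝ) (hu : Measurable u) :
    energy β R u = lpNorm (covGrad (β • Apot R u) u) 2 volume ^ 2 := by
  have hcov := measurable_covGrad ((measurable_Apot R hu).const_smul β) hu
  rw [← integral_norm_sq_eq_sq_lpNorm hcov.aestronglyMeasurable]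
  simp [energy, covGrad, EuclideanSpace.norm_sq_eq]

lemma memLp_covGrad_zero (hu : Measurable u) (hderiv : MemLp (fderiv ℝ u) 2) :
    MemLp (covGrad 0 u) 2 :=
  hderiv.of_le_mul (measurable_covGrad measurable_const hu).aestronglyMeasurable
    (.of_forall (norm_covGrad_zero_le u))

lemma enorm_norm_sq_eq_enorm_sq (u : E2 → ℂ) : (fun x => ‖‖u x‖ ^ 2‖ₑ) = fun x => ‖u x‖ₑ ^ 2 := by
  simp only [enorm_pow, enorm_norm]

lemma enorm_Apot_le (R : ℝ) (u : E2 → ℂ) (x : E2) :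
    ‖Apot R u x‖ₑ ≤ ((fun y : E2 => ‖y‖ₑ⁻¹) ⋆ₗ fun y => ‖u y‖ₑ ^ 2) x := by
  rw [← enorm_norm_sq_eq_enorm_sq]
  exact enorm_convKs_le R _ x

lemma ae_enorm_Apot_sub_Apot_zero_le (R : ℝ) (hu : Measurable u)
    (hmass : ∫⁻ x, ‖u x‖ₑ ^ 2 ≠ ⊤) :
    ∀ᵐ x, ‖Apot R u x - Apot 0 u x‖ₑ ≤ (truncInvNorm R ⋆ₗ fun y => ‖u y‖ₑ ^ 2) x := by
  filter_upwards [ae_inv_enorm_lconvolution_lt_top (by fun_prop) hmass] with x hx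
  rw [← enorm_norm_sq_eq_enorm_sq] at hx ⊢
  exact enorm_convKs_sub_convKs_zero_le R (by fun_prop) hx

lemma lintegral_enorm_sq_covGrad_sub_le {A B : E2 → E2} {k : E2 → ℝ≥0∞} (β : ℝ)
    (hu : Measurable u) (hk : Measurable k) (hAB : ∀ᵐ x, ‖A x - B x‖ₑ ≤ k x) :
    ∫⁻ x, ‖(covGrad (β • A) u - covGrad (β • B) u) x‖ₑ ^ 2 ≤
      ENNReal.ofReal (β ^ 2) * ∫⁻ x, k x ^ 2 * ‖u x‖ₑ ^ 2 := by
  have hβ : ‖β‖ₑ ^ 2 = ENNReal.ofReal (β ^ 2) := by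
    rw [← enorm_pow, Real.enorm_of_nonneg (sq_nonneg β)]
  rw [← hβ, ← lintegral_const_mul _ (by fun_prop)]
  refine lintegral_mono_ae (hAB.mono fun x hx => ?_)
  rw [Pi.sub_apply, enorm_covGrad_sub_covGrad, Pi.smul_apply, Pi.smul_apply, ← smul_sub,
    enorm_smul, ← mul_pow, ← mul_pow, ← mul_assoc]
  gcongr

lemma memLp_covGrad_Apot (β R : ℝ) (hu : Differentiable ℝ u) (hH : H1 u < ⊤) :
    MemLp (covGrad (β • Apot R u) u) 2 := by
  have hum : Measurable u := hu.continuous.measurable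
  obtain ⟨hmass, hderiv⟩ := memLp_two_of_H1_lt_top hum.aestronglyMeasurable hH
  have hzero := memLp_covGrad_zero hum hderiv
  rw [memLp_two_iff_lintegral_ne_top hmass.1] at hmass
  have hzero_ne_top := (memLp_two_iff_lintegral_ne_top hzero.1).1 hzero
  have hriesz := lintegral_sq_inv_enorm_lconvolution_density_le (A := 0) measurable_const hu hmass
    hzero_ne_top
  have hcov := measurable_covGrad ((measurable_Apot R hum).const_smul β) hum
  have hdiff : ∫⁻ x, ‖(covGrad (β • Apot R u) u - covGrad (β • 0) u) x‖ₑ ^ 2 ≠ ⊤ := by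
    refine ne_top_of_le_ne_top ?_ (lintegral_enorm_sq_covGrad_sub_le β hum (by fun_prop)
      (.of_forall fun x => (sub_zero (Apot R u x)).symm ▸ enorm_Apot_le R u x))
    exact ENNReal.mul_ne_top ENNReal.ofReal_ne_top (ne_top_of_le_ne_top (by finiteness) hriesz)
  rw [smul_zero, ← memLp_two_iff_lintegral_ne_top (hcov.aestronglyMeasurable.sub hzero.1)] at hdiff
  simpa only [sub_add_cancel] using hdiff.add hzero

lemma lpNorm_covGrad_sub_le {A B : E2 → E2} {k : E2 → ℝ≥0∞} {c : ℝ} (β : ℝ)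
    (hu : Measurable u) (hA : MemLp (covGrad (β • A) u) 2) (hB : MemLp (covGrad (β • B) u) 2)
    (hk : Measurable k) (hAB : ∀ᵐ x, ‖A x - B x‖ₑ ≤ k x) (hc : 0 ≤ c)
    (hkc : ∫⁻ x, k x ^ 2 * ‖u x‖ₑ ^ 2 ≤ ENNReal.ofReal (c ^ 2)) :
    lpNorm (covGrad (β • A) u - covGrad (β • B) u) 2 volume ≤ |β| * c := by
  refine lpNorm_two_le_of_lintegral_enorm_sq_le (hA.sub hB) (by positivity)
    ((lintegral_enorm_sq_covGrad_sub_le β hu hk hAB).trans ?_)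
  rw [mul_pow, sq_abs, ENNReal.ofReal_mul (sq_nonneg β)]
  gcongr

lemma energy_nonneg (β R : ℝ) (u : E2 → ℂ) : 0 ≤ energy β R u :=
  integral_nonneg fun _ => Finset.sum_nonneg fun _ _ => sq_nonneg _

lemma lpNorm_covGrad_Apot_sub_le (β : ℝ) {R : ℝ} (hR : 0 ≤ R) (hu : Differentiable ℝ u)
    (hH : H1 u < ⊤) :
    lpNorm (covGrad (β • Apot R u) u - covGrad (β • Apot 0 u) u) 2 volume ≤
      |β| * (18 * Real.pi * R * lpNorm u 2 volume * energy β 0 u) := by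
  have hum : Measurable u := hu.continuous.measurable
  have hmass := (memLp_two_of_H1_lt_top hum.aestronglyMeasurable hH).1
  have hD := memLp_covGrad_Apot β 0 hu hH
  have hmass_ne_top := (memLp_two_iff_lintegral_ne_top hmass.1).1 hmass
  have htrunc := measurable_truncInvNorm R
  have hM : 0 ≤ lpNorm u 2 volume := lpNorm_nonneg
  have hE := energy_nonneg β 0 u
  refine lpNorm_covGrad_sub_le β hum (memLp_covGrad_Apot β R hu hH) hD (by fun_prop)
    (ae_enorm_Apot_sub_Apot_zero_le R hum hmass_ne_top) (by positivity) ?_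
  refine (lintegral_sq_truncInvNorm_lconvolution_density_le
    ((measurable_Apot 0 hum).const_smul β) hu hmass_ne_top
    ((memLp_two_iff_lintegral_ne_top hD.1).1 hD) hR).trans ?_
  rw [lintegral_enorm_sq_eq_ofReal_sq_lpNorm hmass, lintegral_enorm_sq_eq_ofReal_sq_lpNorm hD,
    ← energy_eq_sq_lpNorm β 0 hum, ← ENNReal.ofReal_ofNat 72, ← ENNReal.ofReal_pow (by positivity),
    ← ENNReal.ofReal_pow hE, ← ENNReal.ofReal_mul (by positivity),
    ← ENNReal.ofReal_mul (by positivity), ← ENNReal.ofReal_mul (by positivity)]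
  refine ENNReal.ofReal_le_ofReal ?_
  have h := sq_nonneg (Real.pi * R * lpNorm u 2 volume * energy β 0 u)
  linear_combination 36 * h

lemma lpNorm_covGrad_Apot_sub_le_sqrt (β R : ℝ) (hu : Differentiable ℝ u) (hH : H1 u < ⊤) :
    lpNorm (covGrad (β • Apot R u) u - covGrad (β • Apot 0 u) u) 2 volume ≤
      |β| * (15 * lpNorm u 2 volume ^ 2 * √(energy β 0 u)) := by
  have hum : Measurable u := hu.continuous.measurable
  have hmass := (memLp_two_of_H1_lt_top hum.aestronglyMeasurable hH).1
  have hD := memLp_covGrad_Apot β 0 hu hH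
  have hmass_ne_top := (memLp_two_iff_lintegral_ne_top hmass.1).1 hmass
  have hE := energy_nonneg β 0 u
  have hdiff : ∀ᵐ x, ‖Apot R u x - Apot 0 u x‖ₑ ≤
      ((fun y : E2 => ‖y‖ₑ⁻¹) ⋆ₗ fun y => ‖u y‖ₑ ^ 2) x :=
    (ae_enorm_Apot_sub_Apot_zero_le R hum hmass_ne_top).mono fun x hx => hx.trans <|
      lintegral_mono fun y => mul_le_mul_left (truncInvNorm_le R y) _
  refine lpNorm_covGrad_sub_le β hum (memLp_covGrad_Apot β R hu hH) hD (by fun_prop) hdiff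
    (by positivity) ?_
  refine (lintegral_sq_inv_enorm_lconvolution_density_le
    ((measurable_Apot 0 hum).const_smul β) hu hmass_ne_top
    ((memLp_two_iff_lintegral_ne_top hD.1).1 hD)).trans ?_
  rw [lintegral_enorm_sq_eq_ofReal_sq_lpNorm hmass, lintegral_enorm_sq_eq_ofReal_sq_lpNorm hD,
    ← energy_eq_sq_lpNorm β 0 hum, ← ENNReal.ofReal_ofNat 34, ← ENNReal.ofReal_pow (by positivity),
    ← ENNReal.ofReal_mul (by positivity), ← ENNReal.ofReal_mul (by positivity),
    ← ENNReal.ofReal_mul (by positivity), mul_pow, Real.sq_sqrt hE]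
  refine ENNReal.ofReal_le_ofReal ?_
  have hpi : 34 * (2 * Real.pi) ≤ 15 ^ 2 := by linarith [Real.pi_lt_d2]
  calc 34 * (2 * Real.pi * ((lpNorm u 2 volume ^ 2) ^ 2 * energy β 0 u))
      = 34 * (2 * Real.pi) * ((lpNorm u 2 volume ^ 2) ^ 2 * energy β 0 u) := by ring
    _ ≤ 15 ^ 2 * ((lpNorm u 2 volume ^ 2) ^ 2 * energy β 0 u) := by gcongr
    _ = (15 * lpNorm u 2 volume ^ 2) ^ 2 * energy β 0 u := by ring

end Energy

theorem statement17_general (β : ℝ) {R : ℝ} (hR : 0 ≤ R) {u : E2 → ℂ} (hu : Differentiable ℝ u)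
    (hH : H1 u < ⊤) :
    |energy β R u - energy β 0 u| ≤
      18 * Real.pi * |β| * lpNorm u 2 volume * (2 + 15 * |β| * lpNorm u 2 volume ^ 2) *
        energy β 0 u ^ (3 / 2 : ℝ) * R := by
  have hM : 0 ≤ lpNorm u 2 volume := lpNorm_nonneg
  have hE := energy_nonneg β 0 u
  have hsqrt : energy β 0 u ^ (3 / 2 : ℝ) = energy β 0 u * √(energy β 0 u) := by
    rw [Real.sqrt_eq_rpow, ← Real.rpow_one_add' hE (by norm_num)]
    norm_num
  have hlinear := lpNorm_covGrad_Apot_sub_le β hR hu hH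
  have hbounded := lpNorm_covGrad_Apot_sub_le_sqrt β R hu hH
  have habs := abs_sq_lpNorm_sub_sq_lpNorm_le one_le_two (memLp_covGrad_Apot β R hu hH)
    (memLp_covGrad_Apot β 0 hu hH)
  have hroot : lpNorm (covGrad (β • Apot 0 u) u) 2 volume = √(energy β 0 u) := by
    rw [energy_eq_sq_lpNorm β 0 hu.continuous.measurable, Real.sqrt_sq lpNorm_nonneg]
  rw [← energy_eq_sq_lpNorm β R hu.continuous.measurable,
    ← energy_eq_sq_lpNorm β 0 hu.continuous.measurable, hroot] at habs
  refine habs.trans ?_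
  calc _ ≤ |β| * (18 * Real.pi * R * lpNorm u 2 volume * energy β 0 u) *
        (2 * √(energy β 0 u) + |β| * (15 * lpNorm u 2 volume ^ 2 * √(energy β 0 u))) := by
        gcongr
        exact add_nonneg (by positivity) lpNorm_nonneg
    _ = _ := by rw [hsqrt]; ring

/-- Proposition A.3 (pointwise convergence of the average-field energy functional):
for fixed `β` there is `C > 0` such that for all `0 < R ≤ 1` and all normalized
`u ∈ H¹(ℝ², ℂ)`, `|E_R[u] − E₀[u]| ≤ C (1 + E₀[u]^{3/2}) R`, with
`E_R[u] = ∫ ‖−i∇u + β(K_R ∗ |u|²)u‖²`. -/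
theorem statement17 (β : ℝ) :
    ∃ C : ℝ, 0 < C ∧ ∀ R : ℝ, 0 < R → R ≤ 1 →
      ∀ u : E2 → ℂ, Differentiable ℝ u → H1 u < ⊤ → eLpNorm u 2 volume = 1 →
        |energy β R u - energy β 0 u| ≤ C * (1 + energy β 0 u ^ (3 / 2 : ℝ)) * R := by
  refine ⟨18 * Real.pi * |β| * (2 + 15 * |β|) + 1, by positivity, fun R hR _ u hu hH hnorm => ?_⟩
  have hmass : lpNorm u 2 volume = 1 := by
    rw [← toReal_eLpNorm hu.continuous.aestronglyMeasurable, hnorm, ENNReal.toReal_one]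
  have hE : 0 ≤ energy β 0 u ^ (3 / 2 : ℝ) := Real.rpow_nonneg (energy_nonneg β 0 u) _
  refine (statement17_general β hR.le hu hH).trans ?_
  rw [hmass, mul_one, one_pow, mul_one]
  gcongr <;> linarith
end
end
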